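/- arXiv:0704.0347 — 2 statements merged into one kernel-verified Lean document; each statement's English description precedes it below -/
import Mathlib

section
/- Let n ≥ 2 and 1 < m < n. There exists a constant C > 0 such that for all ζ ∈ ℂ∖ℝ and all Schwartz functions f, g on ℝⁿ, |( (ζ − p(D_x))^{-1} f , g )_{L²(ℝⁿ)}| ≤ C ‖⟨x⟩^{m/2} f‖_{L²(ℝⁿ)} ‖⟨x⟩^{m/2} g‖_{L²(ℝⁿ)}; in particular the supremum over ζ ∈ ℂ∖ℝ of the left-hand side is finite and bounded by the right-hand side. -/
open MeasureTheory Real Complex RealInnerProductSpace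

noncomputable section

/-- Fourier transform with convention `(2π)^(-n/2) ∫ e^(-ix·ξ) f(x) dx`. -/
def FT (n : ℕ) (f : EuclideanSpace ℝ (Fin n) → ℂ) (ξ : EuclideanSpace ℝ (Fin n)) : ℂ :=
  ((2 * π) ^ (-(n : ℝ) / 2) : ℝ) •
    ∫ x : EuclideanSpace ℝ (Fin n), Complex.exp (-Complex.I * ((⟪x, ξ⟫ : ℝ) : ℂ)) * f x

/-- Inverse Fourier transform. -/
def IFT (n : ℕ) (F : EuclideanSpace ℝ (Fin n) → ℂ) (x : EuclideanSpace ℝ (Fin n)) : ℂ :=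
  ((2 * π) ^ (-(n : ℝ) / 2) : ℝ) •
    ∫ ξ : EuclideanSpace ℝ (Fin n), Complex.exp (Complex.I * ((⟪x, ξ⟫ : ℝ) : ℂ)) * F ξ

/-- Fourier multiplier with symbol `q`: `q(D_x) f = IFT (q · FT f)`. -/
def mult (n : ℕ) (q : EuclideanSpace ℝ (Fin n) → ℂ) (f : EuclideanSpace ℝ (Fin n) → ℂ) :
    EuclideanSpace ℝ (Fin n) → ℂ :=
  IFT n fun ξ => q ξ * FT n f ξ

/-
Dilations reduce the estimate to `‖ζ‖ = 1`, so only the level set `{a ^ m = 1}` is singular.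

Away from it the symbol is `O(‖ξ‖ ^ (-m))`, and since `m < n` Pitt's inequality
`∫ ‖ξ‖ ^ (-m) |𝓕 f| ² ≤ C ∫ ‖x‖ ^ m |f| ²`, interpolated between Plancherel and the trivial
`L¹ → L^∞` bound, suffices.

Near it, polar coordinates adapted to `a` turn the form into a superposition over directions of
`∫ u (t) conj (v (t)) / (ζ - t) dt`, where `u` and `v` are cut-off restrictions of `𝓕 f` and `𝓕 g`
to rays. As `(ζ - t)⁻¹` is the Fourier transform of a bounded function, uniformly in `ζ`, this is
at most `C ‖𝓕 u‖_{L¹} ‖𝓕 v‖_{L¹}`. Because `m > 1`, one can choose `1 < p < min m 2`: the `L¹` norm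
is controlled by the `L²` norm with weight `1 + |y| ^ p`, and averaging over directions and real
interpolation between one derivative and none bound the latter by `∫ ‖x‖ ^ m |f| ²`.
-/

section WeightedIntegrals

open Set
open scoped ENNReal

variable {α β : Type*} [MeasurableSpace α] [MeasurableSpace β] {μ : Measure α}

theorem sq_lintegral_mul_le {u v : α → ℝ≥0∞} (hu : AEMeasurable u μ) (hv : AEMeasurable v μ) :
    (∫⁻ x, u x * v x ∂μ) ^ 2 ≤ (∫⁻ x, u x ^ 2 ∂μ) * ∫⁻ x, v x ^ 2 ∂μ :=
  calc
    _ ≤ _ := pow_le_pow_left' (ENNReal.lintegral_mul_le_Lp_mul_Lq μ .two_two hu hv) 2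
    _ = _ := by
      rw [mul_pow, ← ENNReal.rpow_natCast, ← ENNReal.rpow_natCast, ← ENNReal.rpow_mul,
        ← ENNReal.rpow_mul]
      simp

theorem sq_lintegral_le_lintegral_inv_mul {w u : α → ℝ≥0∞} (hw : AEMeasurable w μ)
    (hu : AEMeasurable u μ) (hw0 : ∀ᵐ x ∂μ, w x ≠ 0) (hwtop : ∀ᵐ x ∂μ, w x ≠ ⊤) :
    (∫⁻ x, u x ∂μ) ^ 2 ≤ (∫⁻ x, (w x)⁻¹ ∂μ) * ∫⁻ x, w x * u x ^ 2 ∂μ := by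
  have hsq : ∀ a : ℝ≥0∞, (a ^ (1 / 2 : ℝ)) ^ 2 = a := fun a => by
    rw [← ENNReal.rpow_natCast, ← ENNReal.rpow_mul]; norm_num
  have hsplit : ∫⁻ x, u x ∂μ = ∫⁻ x, (w x)⁻¹ ^ (1 / 2 : ℝ) * (w x ^ (1 / 2 : ℝ) * u x) ∂μ := by
    refine lintegral_congr_ae ?_
    filter_upwards [hw0, hwtop] with x h0 htop
    rw [← mul_assoc, ← ENNReal.mul_rpow_of_nonneg _ _ (by norm_num),
      ENNReal.inv_mul_cancel h0 htop, ENNReal.one_rpow, one_mul]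
  rw [hsplit]
  refine (sq_lintegral_mul_le (by fun_prop) (by fun_prop)).trans_eq ?_
  simp only [mul_pow, hsq]

theorem lintegral_lintegral_indicator_swap {ν : Measure β} [SFinite ν] [SFinite μ]
    {k : β → ℝ≥0∞} {h : α → ℝ≥0∞} (hk : Measurable k) (hh : Measurable h) {S : Set (β × α)}
    (hS : MeasurableSet S) :
    ∫⁻ t, k t * ∫⁻ x in {x | (t, x) ∈ S}, h x ∂μ ∂ν =
      ∫⁻ x, (∫⁻ t in {t | (t, x) ∈ S}, k t ∂ν) * h x ∂μ := by
  set K : β → α → ℝ≥0∞ := fun t x => S.indicator (fun p => k p.1 * h p.2) (t, x)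
  have hleft : ∀ t, k t * ∫⁻ x in {x | (t, x) ∈ S}, h x ∂μ = ∫⁻ x, K t x ∂μ := fun t => by
    rw [← lintegral_const_mul _ hh,
      ← lintegral_indicator (s := {x | (t, x) ∈ S}) (measurable_prodMk_left hS)]
    rfl
  have hright : ∀ x, (∫⁻ t in {t | (t, x) ∈ S}, k t ∂ν) * h x = ∫⁻ t, K t x ∂ν := fun x => by
    rw [← lintegral_mul_const _ hk,
      ← lintegral_indicator (s := {t | (t, x) ∈ S}) (measurable_prodMk_right hS)]
    rfl
  simp_rw [hleft, hright]
  exact lintegral_lintegral_swap (Measurable.indicator (by fun_prop) hS).aemeasurable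

theorem lintegral_Ioi_rpow_neg {s c : ℝ} (hs : 0 < s) (hc : 0 < c) :
    ∫⁻ t in Ioi c, ENNReal.ofReal (t ^ (-s - 1)) = ENNReal.ofReal (c ^ (-s) / s) := by
  rw [← ofReal_integral_eq_lintegral_ofReal
    (integrableOn_Ioi_rpow_of_lt (by linarith) hc), integral_Ioi_rpow_of_lt (by linarith) hc]
  · rw [show -s - 1 + 1 = -s by ring, neg_div_neg_eq]
  · filter_upwards [ae_restrict_mem measurableSet_Ioi] with t ht
    exact rpow_nonneg (hc.trans ht).le _

theorem lintegral_rpow_mul_eq_lintegral_setLIntegral {y : α → ℝ} (hy : Measurable y)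
    (hy0 : ∀ x, 0 ≤ y x) {H : α → ℝ≥0∞} (hH : Measurable H) {s : ℝ} (hs : 0 < s) :
    ∫⁻ x, ENNReal.ofReal (y x ^ s) * H x ∂μ =
      ENNReal.ofReal s *
        ∫⁻ t in Ioi (0 : ℝ), ENNReal.ofReal (t ^ (s - 1)) * ∫⁻ x in {x | t ≤ y x}, H x ∂μ := by
  have hcake := lintegral_rpow_eq_lintegral_meas_le_mul (μ := μ.withDensity H)
    (ae_of_all _ hy0) hy.aemeasurable hs
  rw [lintegral_withDensity_eq_lintegral_mul _ hH (by fun_prop)] at hcake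
  simp only [Pi.mul_apply, mul_comm (H _)] at hcake
  rw [hcake]
  congr! 3 with t
  rw [withDensity_apply _ (measurableSet_le (by fun_prop) hy), mul_comm]

theorem lintegral_rpow_mul_setLIntegral_rpow_mul [SFinite μ] {z : α → ℝ} (hz : Measurable z)
    (hz0 : ∀ x, 0 ≤ z x) {h : α → ℝ≥0∞} (hh : Measurable h) {s b κ : ℝ} (hs : 0 < s)
    (hsb : s < b) (hκ : 0 < κ) :
    ∫⁻ t in Ioi (0 : ℝ), ENNReal.ofReal (t ^ (s - b - 1)) *
        ∫⁻ x in {x | z x ≤ κ * t}, ENNReal.ofReal (z x ^ b) * h x ∂μ =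
      ENNReal.ofReal (κ ^ (b - s) / (b - s)) * ∫⁻ x, ENNReal.ofReal (z x ^ s) * h x ∂μ := by
  have hS : MeasurableSet {p : ℝ × α | z p.2 ≤ κ * p.1} :=
    measurableSet_le (by fun_prop) (by fun_prop)
  have hswap := lintegral_lintegral_indicator_swap (μ := μ) (ν := volume.restrict (Ioi (0 : ℝ)))
    (k := fun t => ENNReal.ofReal (t ^ (s - b - 1)))
    (h := fun x => ENNReal.ofReal (z x ^ b) * h x) (by fun_prop) (by fun_prop) hS
  simp only [mem_ofPred_eq] at hswap
  rw [hswap, ← lintegral_const_mul' _ _ ENNReal.ofReal_ne_top]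
  refine lintegral_congr fun x => ?_
  rcases (hz0 x).eq_or_lt with hx | hx
  · simp [← hx, zero_rpow hs.ne', zero_rpow (hs.trans hsb).ne']
  have hset : {t : ℝ | z x ≤ κ * t} ∩ Ioi 0 = Ici (z x / κ) := by
    ext t
    simp only [mem_inter_iff, mem_ofPred_eq, mem_Ioi, mem_Ici, div_le_iff₀' hκ]
    exact ⟨And.left, fun ht => ⟨ht, (mul_pos_iff_of_pos_left hκ).1 (hx.trans_le ht)⟩⟩
  have hbs : 0 < b - s := sub_pos.2 hsb
  rw [Measure.restrict_restrict (measurableSet_le (by fun_prop) (by fun_prop)), hset,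
    setLIntegral_congr Ioi_ae_eq_Ici.symm, show s - b - 1 = -(b - s) - 1 by ring,
    lintegral_Ioi_rpow_neg hbs (by positivity), ← mul_assoc, ← mul_assoc,
    ← ENNReal.ofReal_mul (by positivity), ← ENNReal.ofReal_mul (by positivity)]
  congr 2
  rw [div_rpow hx.le hκ.le, rpow_neg hx.le, rpow_neg hκ.le, rpow_sub hx]
  field_simp

theorem lintegral_rpow_mul_le_of_forall_level [SFinite μ] {ν : Measure β} {y : β → ℝ}
    (hy : Measurable y) (hy0 : ∀ x, 0 ≤ y x) {z : α → ℝ} (hz : Measurable z)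
    (hz0 : ∀ x, 0 ≤ z x) {H : β → ℝ≥0∞} (hH : Measurable H) {h : α → ℝ≥0∞} (hh : Measurable h)
    {s b κ : ℝ} (hs : 0 < s) (hsb : s < b) (hκ : 0 < κ) {A B : ℝ≥0∞} (hA : A ≠ ⊤) (hB : B ≠ ⊤)
    (hlevel : ∀ t, 0 < t → ∫⁻ x in {x | t ≤ y x}, H x ∂ν ≤
      A * ∫⁻ x in {x | t ≤ z x}, h x ∂μ + B * (ENNReal.ofReal (t ^ (-b)) *
        ∫⁻ x in {x | z x ≤ κ * t}, ENNReal.ofReal (z x ^ b) * h x ∂μ)) :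
    ∫⁻ x, ENNReal.ofReal (y x ^ s) * H x ∂ν ≤
      (A + B * ENNReal.ofReal (s * (κ ^ (b - s) / (b - s)))) *
        ∫⁻ x, ENNReal.ofReal (z x ^ s) * h x ∂μ := by
  set I := ∫⁻ x, ENNReal.ofReal (z x ^ s) * h x ∂μ
  set high : ℝ → ℝ≥0∞ := fun t =>
    ENNReal.ofReal (t ^ (s - 1)) * ∫⁻ x in {x | t ≤ z x}, h x ∂μ
  set low : ℝ → ℝ≥0∞ := fun t => ENNReal.ofReal (t ^ (s - b - 1)) *
    ∫⁻ x in {x | z x ≤ κ * t}, ENNReal.ofReal (z x ^ b) * h x ∂μ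
  have hhigh : ENNReal.ofReal s * ∫⁻ t in Ioi 0, high t = I :=
    (lintegral_rpow_mul_eq_lintegral_setLIntegral hz hz0 hh hs).symm
  have hlow : ∫⁻ t in Ioi 0, low t = ENNReal.ofReal (κ ^ (b - s) / (b - s)) * I :=
    lintegral_rpow_mul_setLIntegral_rpow_mul hz hz0 hh hs hsb hκ
  have hhigh_meas : Measurable high := by
    have : Antitone fun t => ∫⁻ x in {x | t ≤ z x}, h x ∂μ := fun t t' htt' =>
      lintegral_mono_set fun x hx => htt'.trans hx
    exact Measurable.mul (by fun_prop) this.measurable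
  have hpointwise : ∀ t ∈ Ioi (0 : ℝ), ENNReal.ofReal (t ^ (s - 1)) *
      ∫⁻ x in {x | t ≤ y x}, H x ∂ν ≤ A * high t + B * low t := fun t (ht : 0 < t) => by
    refine (mul_le_mul_right (hlevel t ht) _).trans_eq ?_
    simp only [high, low]
    rw [show s - b - 1 = (s - 1) + -b by ring, rpow_add ht, ENNReal.ofReal_mul (by positivity)]
    ring
  calc ∫⁻ x, ENNReal.ofReal (y x ^ s) * H x ∂ν
      = ENNReal.ofReal s * ∫⁻ t in Ioi (0 : ℝ), ENNReal.ofReal (t ^ (s - 1)) *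
          ∫⁻ x in {x | t ≤ y x}, H x ∂ν := lintegral_rpow_mul_eq_lintegral_setLIntegral hy hy0 hH hs
    _ ≤ ENNReal.ofReal s * ∫⁻ t in Ioi (0 : ℝ), (A * high t + B * low t) := by
        gcongr ENNReal.ofReal s * ?_
        exact setLIntegral_mono' measurableSet_Ioi hpointwise
    _ = A * (ENNReal.ofReal s * ∫⁻ t in Ioi 0, high t) +
          B * (ENNReal.ofReal s * ∫⁻ t in Ioi 0, low t) := by
        rw [lintegral_add_left (by fun_prop), lintegral_const_mul' _ _ hA,
          lintegral_const_mul' _ _ hB]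
        ring
    _ = _ := by
        rw [hhigh, hlow, ENNReal.ofReal_mul hs.le]
        ring

end WeightedIntegrals

section Polar

open Set
open scoped ENNReal

variable {V : Type*} [NormedAddCommGroup V] [NormedSpace ℝ V] [FiniteDimensional ℝ V]
  [MeasureSpace V] [BorelSpace V] [(volume : Measure V).IsAddHaarMeasure] [Nontrivial V]

local notation "σ" => Measure.toSphere (volume : Measure V)
local notation "dim" => Module.finrank ℝ V

theorem lintegral_polar {H : V → ℝ≥0∞} (hH : Measurable H) :
    ∫⁻ ξ, H ξ =
      ∫⁻ ω, (∫⁻ r in Ioi (0 : ℝ), ENNReal.ofReal (r ^ (dim - 1)) * H (r • (ω : V))) ∂σ := by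
  have hm : Measurable fun p : Metric.sphere (0 : V) 1 × Ioi (0 : ℝ) => H ((p.2 : ℝ) • (p.1 : V)) :=
    hH.comp (Continuous.measurable (by fun_prop))
  calc ∫⁻ ξ, H ξ = ∫⁻ x : ({(0)}ᶜ : Set V), H x ∂((volume : Measure V).comap (↑)) := by
        rw [lintegral_subtype_comap (measurableSet_singleton _).compl, restrict_compl_singleton]
    _ = ∫⁻ p, H ((p.2 : ℝ) • (p.1 : V)) ∂(Measure.prod σ (.volumeIoiPow (dim - 1))) := by
        rw [← (volume : Measure V).measurePreserving_homeomorphUnitSphereProd.lintegral_comp hm]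
        refine lintegral_congr fun x => ?_
        have hx : (x : V) ≠ 0 := x.2
        simp [smul_smul, hx]
    _ = ∫⁻ ω, ∫⁻ r : Ioi (0 : ℝ), H ((r : ℝ) • (ω : V)) ∂(.volumeIoiPow (dim - 1)) ∂σ :=
        lintegral_prod _ hm.aemeasurable
    _ = _ := by
        refine lintegral_congr fun ω => ?_
        have hω : Measurable fun r : Ioi (0 : ℝ) => H ((r : ℝ) • (ω : V)) :=
          hH.comp (Continuous.measurable (by fun_prop))
        rw [Measure.volumeIoiPow, lintegral_withDensity_eq_lintegral_mul _ (by fun_prop) hω]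
        rw [← lintegral_subtype_comap measurableSet_Ioi
          (fun r : ℝ => ENNReal.ofReal (r ^ (dim - 1)) * H (r • (ω : V)))]
        rfl

theorem integral_polar {H : V → ℂ} (hH : Integrable H) :
    ∫ ξ, H ξ = ∫ ω, (∫ r in Ioi (0 : ℝ), (r ^ (dim - 1) : ℝ) • H (r • (ω : V))) ∂σ := by
  have hcomp : ∀ x : ({(0)}ᶜ : Set V), H ((((homeomorphUnitSphereProd V) x).2 : ℝ) •
      (((homeomorphUnitSphereProd V) x).1 : V)) = H x := by
    intro x
    have hx : (x : V) ≠ 0 := x.2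
    simp [smul_smul, hx]
  have hi : Integrable (fun p : Metric.sphere (0 : V) 1 × Ioi (0 : ℝ) => H ((p.2 : ℝ) • (p.1 : V)))
      (Measure.prod σ (.volumeIoiPow (dim - 1))) := by
    rw [← (volume : Measure V).measurePreserving_homeomorphUnitSphereProd.integrable_comp_emb
      (Homeomorph.measurableEmbedding _)]
    simp only [Function.comp_def, hcomp]
    rw [← Function.comp_def H,
      ← integrableOn_iff_comap_subtypeVal (measurableSet_singleton _).compl]
    exact hH.integrableOn
  calc ∫ ξ, H ξ = ∫ x : ({(0)}ᶜ : Set V), H x ∂((volume : Measure V).comap (↑)) := by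
        rw [integral_subtype_comap (measurableSet_singleton _).compl, restrict_compl_singleton]
    _ = ∫ p, H ((p.2 : ℝ) • (p.1 : V)) ∂(Measure.prod σ (.volumeIoiPow (dim - 1))) := by
        rw [← (volume : Measure V).measurePreserving_homeomorphUnitSphereProd.integral_comp
          (Homeomorph.measurableEmbedding _)]
        simp only [hcomp]
    _ = ∫ ω, ∫ r : Ioi (0 : ℝ), H ((r : ℝ) • (ω : V)) ∂(.volumeIoiPow (dim - 1)) ∂σ :=
        integral_prod _ hi
    _ = _ := by
        refine integral_congr_ae (ae_of_all _ fun ω => ?_)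
        simp only [Measure.volumeIoiPow, ENNReal.ofReal]
        rw [integral_withDensity_eq_integral_smul (by fun_prop),
          ← integral_subtype_comap measurableSet_Ioi
          (fun r : ℝ => (r ^ (dim - 1) : ℝ) • H (r • (ω : V)))]
        refine integral_congr_ae (ae_of_all _ fun r => ?_)
        have : (0 : ℝ) ≤ (r : ℝ) ^ (dim - 1) := pow_nonneg r.2.out.le _
        simp [NNReal.smul_def, this]

theorem lintegral_comp_norm {k : ℝ → ℝ≥0∞} (hk : Measurable k) :
    ∫⁻ x : V, k ‖x‖ =
      σ univ * ∫⁻ r in Ioi (0 : ℝ), ENNReal.ofReal (r ^ (dim - 1)) * k r := by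
  rw [lintegral_polar (by fun_prop), mul_comm, ← lintegral_const]
  refine lintegral_congr fun ω => setLIntegral_congr_fun measurableSet_Ioi fun r (hr : 0 < r) => ?_
  simp [norm_smul, abs_of_pos hr]

theorem lintegral_closedBall_norm_rpow_neg {b ρ : ℝ} (hb : b < dim) (hρ : 0 ≤ ρ) :
    ∫⁻ x in Metric.closedBall (0 : V) ρ, ENNReal.ofReal (‖x‖ ^ (-b)) =
      σ univ * ENNReal.ofReal (ρ ^ (dim - b) / (dim - b)) := by
  have hball : Metric.closedBall (0 : V) ρ = (‖·‖) ⁻¹' Iic ρ := by ext; simp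
  rw [← lintegral_indicator Metric.isClosed_closedBall.measurableSet, hball]
  refine (lintegral_comp_norm (k := (Iic ρ).indicator fun r => ENNReal.ofReal (r ^ (-b)))
    (Measurable.indicator (by fun_prop) measurableSet_Iic)).trans ?_
  have hint : IntervalIntegrable (fun r : ℝ => r ^ (dim - b - 1)) volume 0 ρ :=
    intervalIntegral.intervalIntegrable_rpow' (by linarith)
  have hradial : ∀ r ∈ Ioi (0 : ℝ), ENNReal.ofReal (r ^ (dim - 1)) *
      (Iic ρ).indicator (fun r => ENNReal.ofReal (r ^ (-b))) r =
        (Iic ρ).indicator (fun r => ENNReal.ofReal (r ^ (dim - b - 1))) r := by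
    intro r (hr : 0 < r)
    have hd : ((dim - 1 : ℕ) : ℝ) = dim - 1 := Nat.cast_pred Module.finrank_pos
    have hpow : r ^ (dim - b - 1) = r ^ (dim - 1) * r ^ (-b) := by
      rw [← rpow_natCast, ← rpow_add hr, hd]; ring_nf
    by_cases hrρ : r ≤ ρ
    · simp [hrρ, hpow, ENNReal.ofReal_mul, hr.le]
    · simp [hrρ]
  rw [setLIntegral_congr_fun measurableSet_Ioi hradial,
    setLIntegral_indicator measurableSet_Iic, inter_comm, Ioi_inter_Iic,
    ← ofReal_integral_eq_lintegral_ofReal hint.1, ← intervalIntegral.integral_of_le hρ,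
    integral_rpow (Or.inl (by linarith)), sub_add_cancel, zero_rpow (by linarith), sub_zero]
  filter_upwards [ae_restrict_mem measurableSet_Ioc] with r hr using rpow_nonneg hr.1.le _

end Polar

section SchwartzFourier

open SchwartzMap FourierTransform Set
open scoped ENNReal

variable {V : Type*} [NormedAddCommGroup V] [InnerProductSpace ℝ V] [FiniteDimensional ℝ V]
  [MeasurableSpace V] [BorelSpace V]

theorem enorm_fourier_le_lintegral_enorm (f : V → ℂ) (ξ : V) : ‖𝓕 f ξ‖ₑ ≤ ∫⁻ x, ‖f x‖ₑ := by
  rw [Real.fourier_eq]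
  refine (enorm_integral_le_lintegral_enorm _).trans_eq (lintegral_congr fun x => ?_)
  rw [← ofReal_norm, ← ofReal_norm, Circle.norm_smul]

theorem lintegral_enorm_sq_fourier (f : 𝓢(V, ℂ)) :
    ∫⁻ ξ, ‖𝓕 f ξ‖ₑ ^ 2 = ∫⁻ x, ‖f x‖ₑ ^ 2 := by
  have hofReal : ∀ g : 𝓢(V, ℂ), ∫⁻ ξ, ‖g ξ‖ₑ ^ 2 = ENNReal.ofReal (∫ x, ‖g x‖ ^ 2) := fun g => by
    have hg : Integrable fun x => ‖g x‖ ^ 2 := by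
      simpa using (g.memLp 2 (μ := volume)).integrable_norm_pow (by norm_num)
    rw [ofReal_integral_eq_lintegral_ofReal hg (ae_of_all _ fun x => by positivity)]
    simp only [ENNReal.ofReal_pow (norm_nonneg _), ofReal_norm]
  rw [hofReal, hofReal, integral_norm_sq_fourier]

theorem fourier_add_apply (f g : 𝓢(V, ℂ)) (ξ : V) : 𝓕 (f + g) ξ = 𝓕 f ξ + 𝓕 g ξ := by
  rw [FourierTransform.fourier_add, add_apply]

end SchwartzFourier

section RealInterpolation

open SchwartzMap FourierTransform Set
open scoped ENNReal

variable {V : Type*} [NormedAddCommGroup V] [InnerProductSpace ℝ V]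

/-- Schwartz functions can be cut along the levels of `z`: for every `t > 0` there is a
decomposition `f = f₁ + f₂` with `f₁` supported where `z ≤ κ t`, `f₂` supported where `t ≤ z`, and
both dominated by `f`. This is the property of a weight that real interpolation uses. -/
def SplitsSchwartz (z : V → ℝ) (κ : ℝ) : Prop :=
  ∀ (f : 𝓢(V, ℂ)) (t : ℝ), 0 < t → ∃ f₁ f₂ : 𝓢(V, ℂ), f₁ + f₂ = f ∧
    (∀ x, ‖f₁ x‖ₑ ≤ {x | z x ≤ κ * t}.indicator (fun x => ‖f x‖ₑ) x) ∧
    ∀ x, ‖f₂ x‖ₑ ≤ {x | t ≤ z x}.indicator (fun x => ‖f x‖ₑ) x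

theorem enorm_ofReal_mul_le {r : ℝ} (hr0 : 0 ≤ r) (hr1 : r ≤ 1) (z : ℂ) :
    ‖(r : ℂ) * z‖ₑ ≤ ‖z‖ₑ := by
  rw [enorm_le_iff_norm_le, norm_mul, Complex.norm_of_nonneg hr0]
  exact mul_le_of_le_one_left (norm_nonneg _) hr1

theorem splitsSchwartz_norm [FiniteDimensional ℝ V] : SplitsSchwartz (fun x : V => ‖x‖) 2 := by
  intro f t ht
  let φ : ContDiffBump (0 : V) := ⟨t, 2 * t, ht, by linarith⟩
  have hsmooth : ContDiff ℝ (⊤ : ℕ∞) fun x => (φ x : ℂ) * f x :=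
    (Complex.ofRealCLM.contDiff.comp φ.contDiff).mul (f.smooth _)
  have hsupport : HasCompactSupport fun x => (φ x : ℂ) * f x :=
    (φ.hasCompactSupport.comp_left (g := fun r : ℝ => (r : ℂ)) ofReal_zero).mul_right
  set f₁ : 𝓢(V, ℂ) := hsupport.toSchwartzMap hsmooth
  have hf₁ : ∀ x, f₁ x = (φ x : ℂ) * f x := fun x => rfl
  refine ⟨f₁, f - f₁, by abel, fun x => ?_, fun x => ?_⟩
  · by_cases hx : ‖x‖ ≤ 2 * t
    · rw [indicator_of_mem (by exact hx), hf₁]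
      exact enorm_ofReal_mul_le φ.nonneg φ.le_one _
    · rw [hf₁, φ.zero_of_le_dist (by simpa using (not_le.1 hx).le)]
      simp
  · have hf₂ : (f - f₁) x = ((1 - φ x : ℝ) : ℂ) * f x := by
      rw [sub_apply, hf₁]; push_cast; ring
    rw [hf₂]
    by_cases hx : t ≤ ‖x‖
    · rw [indicator_of_mem (by exact hx)]
      exact enorm_ofReal_mul_le (sub_nonneg.2 φ.le_one) (sub_le_self _ φ.nonneg) _
    · rw [φ.one_of_mem_closedBall (by simpa using (not_le.1 hx).le)]
      simp

theorem splitsSchwartz_sqrt_one_add_norm_sq [FiniteDimensional ℝ V] :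
    SplitsSchwartz (fun x : V => √(1 + ‖x‖ ^ 2)) 3 := by
  intro f t ht
  rcases lt_or_ge t 1 with ht1 | ht1
  · have huniv : {x : V | t ≤ √(1 + ‖x‖ ^ 2)} = univ :=
      eq_univ_of_forall fun x => ht1.le.trans (one_le_sqrt.2 (by simp))
    exact ⟨0, f, zero_add f, fun x => by simp, fun x => by rw [huniv, indicator_univ]⟩
  · obtain ⟨f₁, f₂, hsum, hf₁, hf₂⟩ := splitsSchwartz_norm f t ht
    refine ⟨f₁, f₂, hsum, fun x => (hf₁ x).trans ?_, fun x => (hf₂ x).trans ?_⟩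
    · refine indicator_le_indicator_of_subset (fun x (hx : ‖x‖ ≤ 2 * t) => ?_) (by simp) x
      exact sqrt_le_iff.2 ⟨by positivity, by nlinarith [norm_nonneg x]⟩
    · refine indicator_le_indicator_of_subset (fun x (hx : t ≤ ‖x‖) => ?_) (by simp) x
      exact le_sqrt_of_sq_le (by nlinarith)

theorem enorm_add_sq_le (x y : ℂ) : ‖x + y‖ₑ ^ 2 ≤ 2 * ‖x‖ₑ ^ 2 + 2 * ‖y‖ₑ ^ 2 := by
  simp only [enorm_eq_nnnorm]
  norm_cast
  refine (pow_le_pow_left' (nnnorm_add_le x y) 2).trans ?_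
  rw [← mul_add]
  simpa using add_sq_le (a := ‖x‖₊) (b := ‖y‖₊)

theorem lintegral_enorm_add_sq_le {X : Type*} [MeasurableSpace X] {μ : Measure X} {u v : X → ℂ}
    (hu : Measurable u) :
    ∫⁻ x, ‖u x + v x‖ₑ ^ 2 ∂μ ≤ 2 * ∫⁻ x, ‖u x‖ₑ ^ 2 ∂μ + 2 * ∫⁻ x, ‖v x‖ₑ ^ 2 ∂μ := by
  refine (lintegral_mono fun x => enorm_add_sq_le (u x) (v x)).trans_eq ?_
  rw [lintegral_add_left (by fun_prop), lintegral_const_mul' _ _ ENNReal.ofNat_ne_top,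
    lintegral_const_mul' _ _ ENNReal.ofNat_ne_top]

theorem lintegral_mul_enorm_sq_le_setLIntegral {X : Type*} [MeasurableSpace X] {μ : Measure X}
    {S : Set X} (hS : MeasurableSet S) {f g : X → ℂ}
    (hg : ∀ x, ‖g x‖ₑ ≤ S.indicator (fun x => ‖f x‖ₑ) x) (w : X → ℝ≥0∞) :
    ∫⁻ x, w x * ‖g x‖ₑ ^ 2 ∂μ ≤ ∫⁻ x in S, w x * ‖f x‖ₑ ^ 2 ∂μ := by
  rw [← lintegral_indicator hS]
  refine lintegral_mono fun x => ?_
  have hgx := hg x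
  by_cases hx : x ∈ S
  · rw [indicator_of_mem hx] at hgx ⊢
    gcongr
  · rw [indicator_of_notMem hx] at hgx ⊢
    simp [le_zero_iff.1 hgx]

variable [MeasurableSpace V] [BorelSpace V] {μ : Measure V} [SFinite μ]

-- The Lions–Peetre argument: at each level `t`, the first bound is applied to the part of `f` where
-- `z ≥ t` and the second one to the part where `z ≤ κ t`.
theorem lintegral_rpow_mul_enorm_sq_le_of_splitsSchwartz {X : Type*} [MeasurableSpace X]
    {ν : Measure X} {y : X → ℝ} (hy : Measurable y) (hy0 : ∀ x, 0 ≤ y x) {z : V → ℝ}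
    (hz : Measurable z) (hz0 : ∀ x, 0 ≤ z x) {κ : ℝ} (hκ : 0 < κ) (hsplit : SplitsSchwartz z κ)
    {w : V → ℝ≥0∞} (hw : Measurable w) {U : 𝓢(V, ℂ) → X → ℂ} (hU : ∀ f, Measurable (U f))
    (hUadd : ∀ f g, U (f + g) = U f + U g) {s b : ℝ} (hs : 0 < s) (hsb : s < b)
    {A B : ℝ≥0∞} (hA : A ≠ ⊤) (hB : B ≠ ⊤)
    (hUA : ∀ f, ∫⁻ x, ‖U f x‖ₑ ^ 2 ∂ν ≤ A * ∫⁻ x, w x * ‖f x‖ₑ ^ 2 ∂μ)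
    (hUB : ∀ (f : 𝓢(V, ℂ)) (t : ℝ), 0 < t → (∀ x, κ * t < z x → f x = 0) →
      ∫⁻ x in {x | t ≤ y x}, ‖U f x‖ₑ ^ 2 ∂ν ≤ B * (ENNReal.ofReal (t ^ (-b)) *
        ∫⁻ x, ENNReal.ofReal (z x ^ b) * w x * ‖f x‖ₑ ^ 2 ∂μ)) (f : 𝓢(V, ℂ)) :
    ∫⁻ x, ENNReal.ofReal (y x ^ s) * ‖U f x‖ₑ ^ 2 ∂ν ≤
      (2 * A + 2 * B * ENNReal.ofReal (s * (κ ^ (b - s) / (b - s)))) *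
        ∫⁻ x, ENNReal.ofReal (z x ^ s) * (w x * ‖f x‖ₑ ^ 2) ∂μ := by
  have hf : Measurable f := f.continuous.measurable
  refine lintegral_rpow_mul_le_of_forall_level hy hy0 hz hz0 ((hU f).enorm.pow_const 2)
    (by fun_prop) hs hsb hκ (by finiteness) (by finiteness) fun t ht => ?_
  obtain ⟨f₁, f₂, rfl, hf₁, hf₂⟩ := hsplit f t ht
  have hsupp : ∀ x, κ * t < z x → f₁ x = 0 := fun x hx => by
    simpa [not_le.2 hx] using hf₁ x
  have hnear : MeasurableSet {x | z x ≤ κ * t} := measurableSet_le hz measurable_const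
  have hfar : MeasurableSet {x | t ≤ z x} := measurableSet_le measurable_const hz
  have hnear_le := lintegral_mul_enorm_sq_le_setLIntegral (μ := μ) hnear hf₁
    fun x => ENNReal.ofReal (z x ^ b) * w x
  have hfar_le := lintegral_mul_enorm_sq_le_setLIntegral (μ := μ) hfar hf₂ w
  calc ∫⁻ x in {x | t ≤ y x}, ‖U (f₁ + f₂) x‖ₑ ^ 2 ∂ν
      ≤ 2 * ∫⁻ x in {x | t ≤ y x}, ‖U f₁ x‖ₑ ^ 2 ∂ν +
          2 * ∫⁻ x in {x | t ≤ y x}, ‖U f₂ x‖ₑ ^ 2 ∂ν := by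
        rw [hUadd]
        exact lintegral_enorm_add_sq_le (hU f₁)
    _ ≤ 2 * (B * (ENNReal.ofReal (t ^ (-b)) * ∫⁻ x in {x | z x ≤ κ * t},
            ENNReal.ofReal (z x ^ b) * w x * ‖(f₁ + f₂) x‖ₑ ^ 2 ∂μ)) +
          2 * (A * ∫⁻ x in {x | t ≤ z x}, w x * ‖(f₁ + f₂) x‖ₑ ^ 2 ∂μ) := by
        gcongr 2 * ?_ + 2 * ?_
        · exact (hUB f₁ t ht hsupp).trans (by gcongr)
        · exact (setLIntegral_le_lintegral _ _).trans ((hUA f₂).trans (by gcongr))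
    _ = _ := by
        simp only [mul_assoc]
        rw [add_comm]

end RealInterpolation

section Pitt

open SchwartzMap FourierTransform Set
open scoped ENNReal

variable {V : Type*} [NormedAddCommGroup V] [InnerProductSpace ℝ V] [FiniteDimensional ℝ V]
  [MeasurableSpace V] [BorelSpace V]

local notation "σ" => Measure.toSphere (volume : Measure V)
local notation "dim" => Module.finrank ℝ V

theorem sq_lintegral_enorm_le_of_support [Nontrivial V] {b ρ : ℝ} (hb : b < dim) (hρ : 0 ≤ ρ)
    {f : V → ℂ} (hf : Measurable f) (hsupp : ∀ x, ρ < ‖x‖ → f x = 0) :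
    (∫⁻ x, ‖f x‖ₑ) ^ 2 ≤ σ univ * ENNReal.ofReal (ρ ^ (dim - b) / (dim - b)) *
      ∫⁻ x, ENNReal.ofReal (‖x‖ ^ b) * ‖f x‖ₑ ^ 2 := by
  set S := Metric.closedBall (0 : V) ρ
  have hne : ∀ᵐ x ∂(volume.restrict S), x ≠ 0 := ae_restrict_of_ae (by simp [ae_iff])
  have hS : ∫⁻ x, ‖f x‖ₑ = ∫⁻ x in S, ‖f x‖ₑ := by
    refine (setLIntegral_eq_of_support_subset fun x hx => ?_).symm
    by_contra hxS
    exact hx (by simp [hsupp x (by simpa [S] using hxS)])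
  calc (∫⁻ x, ‖f x‖ₑ) ^ 2
      ≤ (∫⁻ x in S, (ENNReal.ofReal (‖x‖ ^ b))⁻¹) *
          ∫⁻ x in S, ENNReal.ofReal (‖x‖ ^ b) * ‖f x‖ₑ ^ 2 := by
        rw [hS]
        refine sq_lintegral_le_lintegral_inv_mul (by fun_prop) (by fun_prop) ?_ (by simp)
        filter_upwards [hne] with x hx
        simpa using rpow_pos_of_pos (norm_pos_iff.2 hx) b
    _ = (∫⁻ x in S, ENNReal.ofReal (‖x‖ ^ (-b))) *
          ∫⁻ x in S, ENNReal.ofReal (‖x‖ ^ b) * ‖f x‖ₑ ^ 2 := by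
        congr 1
        refine lintegral_congr_ae ?_
        filter_upwards [hne] with x hx
        rw [← ENNReal.ofReal_inv_of_pos (rpow_pos_of_pos (norm_pos_iff.2 hx) b),
          rpow_neg (norm_nonneg x)]
    _ ≤ _ := by
        rw [lintegral_closedBall_norm_rpow_neg hb hρ]
        exact mul_le_mul_right (setLIntegral_le_lintegral _ _) _

theorem setLIntegral_inv_norm_enorm_fourier_le [Nontrivial V] {b : ℝ} (hb : b < dim) {f : V → ℂ}
    (hf : Measurable f) {t : ℝ} (ht : 0 < t) (hsupp : ∀ x, 2 * t < ‖x‖ → f x = 0) :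
    ∫⁻ ξ in {ξ : V | t ≤ ‖ξ‖⁻¹}, ‖𝓕 f ξ‖ₑ ^ 2 ≤
      σ univ * ENNReal.ofReal (2 ^ (dim - b) / (dim - b)) * volume (Metric.ball (0 : V) 1) *
        (ENNReal.ofReal (t ^ (-b)) * ∫⁻ x, ENNReal.ofReal (‖x‖ ^ b) * ‖f x‖ₑ ^ 2) := by
  have hvolume : volume {ξ : V | t ≤ ‖ξ‖⁻¹} ≤
      ENNReal.ofReal (t⁻¹ ^ dim) * volume (Metric.ball (0 : V) 1) := by
    rw [← Measure.addHaar_closedBall volume (0 : V) (by positivity)]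
    refine measure_mono fun ξ (hξ : t ≤ ‖ξ‖⁻¹) => ?_
    simpa using (le_inv_comm₀ ht (inv_pos.1 (ht.trans_le hξ))).1 hξ
  have hscale : (2 * t) ^ (dim - b) / (dim - b) * t⁻¹ ^ dim =
      2 ^ (dim - b) / (dim - b) * t ^ (-b) := by
    rw [mul_rpow zero_le_two ht.le, sub_eq_add_neg, rpow_add ht, rpow_natCast, inv_pow]
    field_simp
  calc ∫⁻ ξ in {ξ : V | t ≤ ‖ξ‖⁻¹}, ‖𝓕 f ξ‖ₑ ^ 2
      ≤ ∫⁻ _ in {ξ : V | t ≤ ‖ξ‖⁻¹}, (∫⁻ x, ‖f x‖ₑ) ^ 2 := by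
        gcongr with ξ
        exact enorm_fourier_le_lintegral_enorm f ξ
    _ = (∫⁻ x, ‖f x‖ₑ) ^ 2 * volume {ξ : V | t ≤ ‖ξ‖⁻¹} := setLIntegral_const _ _
    _ ≤ σ univ * ENNReal.ofReal ((2 * t) ^ (dim - b) / (dim - b)) *
          (∫⁻ x, ENNReal.ofReal (‖x‖ ^ b) * ‖f x‖ₑ ^ 2) *
            (ENNReal.ofReal (t⁻¹ ^ dim) * volume (Metric.ball (0 : V) 1)) := by
        gcongr
        exact sq_lintegral_enorm_le_of_support hb (by positivity) hf hsupp
    _ = σ univ * ENNReal.ofReal ((2 * t) ^ (dim - b) / (dim - b) * t⁻¹ ^ dim) *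
          volume (Metric.ball (0 : V) 1) * ∫⁻ x, ENNReal.ofReal (‖x‖ ^ b) * ‖f x‖ₑ ^ 2 := by
        rw [ENNReal.ofReal_mul' (by positivity)]
        ring
    _ = _ := by
        rw [hscale, ENNReal.ofReal_mul' (by positivity)]
        ring

theorem pitt_inequality [Nontrivial V] {m : ℝ} (hm : 0 < m) (hmd : m < dim) :
    ∃ C : ℝ≥0∞, C ≠ ⊤ ∧ ∀ f : 𝓢(V, ℂ),
      ∫⁻ ξ, ENNReal.ofReal (‖ξ‖ ^ (-m)) * ‖𝓕 f ξ‖ₑ ^ 2 ≤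
        C * ∫⁻ x, ENNReal.ofReal (‖x‖ ^ m) * ‖f x‖ₑ ^ 2 := by
  obtain ⟨b, hmb, hbd⟩ := exists_between hmd
  set B := σ univ * ENNReal.ofReal (2 ^ (dim - b) / (dim - b)) * volume (Metric.ball (0 : V) 1)
  have hB : B ≠ ⊤ := by finiteness
  refine ⟨2 * 1 + 2 * B * ENNReal.ofReal (m * (2 ^ (b - m) / (b - m))), by finiteness, fun f => ?_⟩
  simp only [rpow_neg (norm_nonneg _), ← inv_rpow (norm_nonneg _)]
  simpa only [one_mul] using lintegral_rpow_mul_enorm_sq_le_of_splitsSchwartz (μ := volume)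
    (ν := volume) (y := fun ξ : V => ‖ξ‖⁻¹) (w := fun _ => 1) (U := fun (f : 𝓢(V, ℂ)) ξ => 𝓕 f ξ)
    (by fun_prop) (fun ξ => by positivity) (by fun_prop) (fun x => norm_nonneg x) two_pos
    splitsSchwartz_norm measurable_const (fun f => (𝓕 f).continuous.measurable)
    (fun f g => funext (fourier_add_apply f g)) hm hmb ENNReal.one_ne_top hB
    (fun f => by simp only [one_mul]; exact (lintegral_enorm_sq_fourier f).le)
    (fun f t ht hsupp => by
      simp only [mul_one]
      exact setLIntegral_inv_norm_enorm_fourier_le hbd f.continuous.measurable ht hsupp) f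

theorem setLIntegral_closedBall_le_rpow_mul [Nontrivial V] {m : ℝ} (hm : 0 ≤ m) (r : ℝ)
    (H : V → ℝ≥0∞) :
    ∫⁻ ξ in Metric.closedBall 0 r, H ξ ≤
      ENNReal.ofReal (r ^ m) * ∫⁻ ξ, ENNReal.ofReal (‖ξ‖ ^ (-m)) * H ξ := by
  have hne : ∀ᵐ ξ ∂(volume.restrict (Metric.closedBall (0 : V) r)), ξ ≠ 0 :=
    ae_restrict_of_ae (by simp [ae_iff])
  rw [← lintegral_const_mul' _ _ ENNReal.ofReal_ne_top]
  refine le_trans (lintegral_mono_ae ?_) (setLIntegral_le_lintegral (Metric.closedBall 0 r) _)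
  filter_upwards [hne, ae_restrict_mem Metric.isClosed_closedBall.measurableSet] with ξ hξ hξr
  have hξ' : 0 < ‖ξ‖ := norm_pos_iff.2 hξ
  rw [← mul_assoc, ← ENNReal.ofReal_mul' (by positivity), rpow_neg hξ'.le]
  refine le_mul_of_one_le_left (by positivity) (ENNReal.one_le_ofReal.2 ?_)
  rw [← div_eq_mul_inv, one_le_div (by positivity)]
  exact rpow_le_rpow hξ'.le (by simpa using hξr) hm

theorem exists_setLIntegral_enorm_sq_fourier_le [Nontrivial V] {m : ℝ} (hm : 0 < m) (hmd : m < dim)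
    (r : ℝ) :
    ∃ C : ℝ≥0∞, C ≠ ⊤ ∧ ∀ f : 𝓢(V, ℂ), ∫⁻ ξ in Metric.closedBall 0 r, ‖𝓕 f ξ‖ₑ ^ 2 ≤
      C * ∫⁻ x, ENNReal.ofReal (min 1 (‖x‖ ^ m)) * ‖f x‖ₑ ^ 2 := by
  obtain ⟨P, hP, hpitt⟩ := pitt_inequality (V := V) hm hmd
  refine ⟨2 * (ENNReal.ofReal (r ^ m) * (P * ENNReal.ofReal (2 ^ m))) + 2, by finiteness,
    fun f => ?_⟩
  set I := ∫⁻ x, ENNReal.ofReal (min 1 (‖x‖ ^ m)) * ‖f x‖ₑ ^ 2 with hI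
  obtain ⟨f₁, f₂, hsum, hf₁, hf₂⟩ := splitsSchwartz_norm f 1 one_pos
  have hnear : ∫⁻ x, ENNReal.ofReal (‖x‖ ^ m) * ‖f₁ x‖ₑ ^ 2 ≤ ENNReal.ofReal (2 ^ m) * I := by
    refine (lintegral_mul_enorm_sq_le_setLIntegral
      (measurableSet_le (by fun_prop) (by fun_prop)) hf₁ _).trans ?_
    rw [hI, ← lintegral_const_mul' _ _ ENNReal.ofReal_ne_top]
    refine (setLIntegral_mono' (measurableSet_le (by fun_prop) (by fun_prop))
      fun x (hx : ‖x‖ ≤ 2 * 1) => ?_).trans (setLIntegral_le_lintegral _ _)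
    rw [← mul_assoc, ← ENNReal.ofReal_mul (by positivity)]
    gcongr
    rw [mul_min_of_nonneg _ _ (by positivity), mul_one]
    have h2m : (1 : ℝ) ≤ 2 ^ m := one_le_rpow one_le_two hm.le
    refine le_min ?_ (le_mul_of_one_le_left (by positivity) h2m)
    exact rpow_le_rpow (norm_nonneg x) (by simpa using hx) hm.le
  have hfar : ∫⁻ x, ‖f₂ x‖ₑ ^ 2 ≤ I := by
    have := lintegral_mul_enorm_sq_le_setLIntegral (μ := volume)
      (measurableSet_le (by fun_prop) (by fun_prop)) hf₂ fun _ => 1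
    simp only [one_mul] at this
    refine this.trans ((setLIntegral_mono' (measurableSet_le (by fun_prop) (by fun_prop))
      fun x (hx : 1 ≤ ‖x‖) => ?_).trans (setLIntegral_le_lintegral _ _))
    rw [min_eq_left (one_le_rpow hx hm.le), ENNReal.ofReal_one, one_mul]
  calc ∫⁻ ξ in Metric.closedBall 0 r, ‖𝓕 f ξ‖ₑ ^ 2
      ≤ 2 * (∫⁻ ξ in Metric.closedBall 0 r, ‖𝓕 f₁ ξ‖ₑ ^ 2) +
          2 * ∫⁻ ξ in Metric.closedBall 0 r, ‖𝓕 f₂ ξ‖ₑ ^ 2 := by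
        simp only [← hsum, fourier_add_apply]
        exact lintegral_enorm_add_sq_le (𝓕 f₁).continuous.measurable
    _ ≤ 2 * (ENNReal.ofReal (r ^ m) * (P * (ENNReal.ofReal (2 ^ m) * I))) + 2 * I := by
        gcongr 2 * ?_ + 2 * ?_
        · refine (setLIntegral_closedBall_le_rpow_mul hm.le r _).trans ?_
          exact mul_le_mul_right ((hpitt f₁).trans (mul_le_mul_right hnear _)) _
        · refine (setLIntegral_le_lintegral _ _).trans ?_
          exact (lintegral_enorm_sq_fourier f₂).trans_le hfar
    _ = _ := by ring

end Pitt

section ResolventKernel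

open SchwartzMap FourierTransform Set
open scoped ENNReal ComplexConjugate

theorem inv_sub_ofReal_eq_fourier {ζ : ℂ} (hζ : 0 < ζ.im) (t : ℝ) :
    (ζ - t)⁻¹ =
      𝓕 ((Ioi (0 : ℝ)).indicator fun η : ℝ => -(2 * π * I) * cexp (2 * π * I * ζ * η)) t := by
  have hne : ζ - t ≠ 0 := fun h => hζ.ne' (by simpa using congrArg Complex.im h)
  have hre : (2 * π * I * (ζ - t)).re < 0 := by simpa using mul_pos two_pi_pos hζ
  have hphase : ∀ η : ℝ, cexp (↑(-2 * π * η * t) * I) • (Ioi (0 : ℝ)).indicator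
      (fun η : ℝ => -(2 * π * I) * cexp (2 * π * I * ζ * η)) η =
        (Ioi (0 : ℝ)).indicator
          (fun η : ℝ => -(2 * π * I) * cexp (2 * π * I * (ζ - t) * η)) η := fun η => by
    by_cases hη : 0 < η
    · simp only [indicator_of_mem (show η ∈ Ioi 0 from hη), smul_eq_mul]
      rw [mul_left_comm, ← Complex.exp_add]
      push_cast
      ring_nf
    · simp [hη]
  rw [Real.fourier_real_eq_integral_exp_smul]
  simp_rw [hphase]
  rw [integral_indicator measurableSet_Ioi, integral_const_mul,
    integral_exp_mul_complex_Ioi hre]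
  simp only [ofReal_zero, mul_zero, Complex.exp_zero]
  field_simp

theorem enorm_integral_mul_inv_sub_le {w : ℝ → ℂ} (hw : Integrable w) {ζ : ℂ} (hζ : 0 < ζ.im) :
    ‖∫ t : ℝ, w t * (ζ - t)⁻¹‖ₑ ≤ ENNReal.ofReal (2 * π) * ∫⁻ η, ‖𝓕 w η‖ₑ := by
  set k : ℝ → ℂ :=
    (Ioi (0 : ℝ)).indicator fun η : ℝ => -(2 * π * I) * cexp (2 * π * I * ζ * η)
  have hre : (2 * π * I * ζ).re < 0 := by simpa using mul_pos two_pi_pos hζ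
  have hk : Integrable k := (integrable_indicator_iff measurableSet_Ioi).2
    ((integrableOn_exp_mul_complex_Ioi hre 0).const_mul _)
  have hk_le : ∀ η, ‖k η‖ ≤ 2 * π := fun η => by
    by_cases hη : 0 < η
    · have hdecay : Real.exp (2 * π * I * ζ * η).re ≤ 1 := Real.exp_le_one_iff.2 (by
        simpa using by positivity)
      simpa [k, hη, Complex.norm_exp, abs_of_pos pi_pos] using
        mul_le_of_le_one_right two_pi_pos.le hdecay
    · simpa [k, hη] using two_pi_pos.le
  have hduality : ∫ t : ℝ, w t * (ζ - t)⁻¹ = ∫ η, 𝓕 w η * k η := by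
    simp_rw [inv_sub_ofReal_eq_fourier hζ]
    have := VectorFourier.integral_fourierIntegral_smul_eq_flip (L := innerₗ ℝ)
      continuous_fourierChar continuous_inner hw hk
    rw [flip_innerₗ] at this
    exact this.symm
  rw [hduality, ← lintegral_const_mul' _ _ ENNReal.ofReal_ne_top]
  refine (enorm_integral_le_lintegral_enorm _).trans (lintegral_mono fun η => ?_)
  rw [enorm_mul, mul_comm]
  gcongr
  rw [← ofReal_norm]
  exact ENNReal.ofReal_le_ofReal (hk_le η)

variable {V : Type*} [NormedAddCommGroup V] [InnerProductSpace ℝ V] [FiniteDimensional ℝ V]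
  [MeasurableSpace V] [BorelSpace V]

theorem integrable_conj (v : 𝓢(V, ℂ)) : Integrable fun x => conj (v x) :=
  conjLIE.integrable_comp_iff.2 v.integrable

theorem enorm_fourier_mul_conj_le (u v : 𝓢(V, ℂ)) (η : V) :
    ‖𝓕 (fun x => u x * conj (v x)) η‖ₑ ≤ ∫⁻ y, ‖𝓕 u (-y)‖ₑ * ‖𝓕 v (-y - η)‖ₑ := by
  set g : V → ℂ := fun x => 𝐞 (-⟪x, η⟫) • conj (v x)
  have hg : Integrable g :=
    (Real.fourierIntegral_convergent_iff η).2 (integrable_conj v)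
  have hgfourier : ∀ y, 𝓕 g y = conj (𝓕 v (-y - η)) := fun y => by
    simp only [fourier_coe, Real.fourier_eq, ← integral_conj, g, Circle.smul_def, smul_eq_mul,
      map_mul, ← Circle.coe_inv_eq_conj, ← AddChar.map_neg_eq_inv]
    refine integral_congr_ae (ae_of_all _ fun x => ?_)
    simp only
    rw [← mul_assoc, ← Circle.coe_mul, ← AddChar.map_add_eq_mul]
    congr 4
    simp only [inner_sub_right, inner_neg_right]
    ring
  have huinv : ∀ x, u x = 𝓕 (𝓕⁻ u) x := fun x => by rw [fourier_fourierInv_eq]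
  have hduality : 𝓕 (fun x => u x * conj (v x)) η = ∫ y, 𝓕⁻ u y * 𝓕 g y := by
    have := VectorFourier.integral_fourierIntegral_smul_eq_flip (L := innerₗ V)
      continuous_fourierChar continuous_inner (𝓕⁻ u).integrable (μ := volume) hg
    rw [flip_innerₗ] at this
    refine Eq.trans ?_ this
    rw [Real.fourier_eq]
    refine integral_congr_ae (ae_of_all _ fun x => ?_)
    simp only [g]
    rw [huinv x, smul_eq_mul, mul_smul_comm]
    rfl
  rw [hduality]
  refine (enorm_integral_le_lintegral_enorm _).trans_eq (lintegral_congr fun y => ?_)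
  rw [enorm_mul, hgfourier, RCLike.enorm_conj, fourierInv_coe,
    Real.fourierInv_eq_fourier_neg, fourier_coe u]

theorem lintegral_enorm_fourier_mul_conj_le (u v : 𝓢(V, ℂ)) :
    ∫⁻ η, ‖𝓕 (fun x => u x * conj (v x)) η‖ₑ ≤ (∫⁻ y, ‖𝓕 u y‖ₑ) * ∫⁻ y, ‖𝓕 v y‖ₑ := by
  have hu : Measurable fun y => 𝓕 u y := (𝓕 u).continuous.measurable
  have hv : Measurable fun y => 𝓕 v y := (𝓕 v).continuous.measurable
  calc ∫⁻ η, ‖𝓕 (fun x => u x * conj (v x)) η‖ₑ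
      ≤ ∫⁻ η, ∫⁻ y, ‖𝓕 u (-y)‖ₑ * ‖𝓕 v (-y - η)‖ₑ :=
        lintegral_mono (enorm_fourier_mul_conj_le u v)
    _ = ∫⁻ y, ∫⁻ η, ‖𝓕 u (-y)‖ₑ * ‖𝓕 v (-y - η)‖ₑ :=
        lintegral_lintegral_swap (Measurable.aemeasurable (by fun_prop))
    _ = ∫⁻ y, ‖𝓕 u (-y)‖ₑ * ∫⁻ η, ‖𝓕 v η‖ₑ := by
        refine lintegral_congr fun y => ?_
        rw [lintegral_const_mul _ (by fun_prop), lintegral_sub_left_eq_self (fun η => ‖𝓕 v η‖ₑ)]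
    _ = _ := by
        rw [lintegral_mul_const _ (by fun_prop), lintegral_neg_eq_self fun y => ‖𝓕 u y‖ₑ]

theorem enorm_integral_mul_conj_mul_inv_sub_le (u v : 𝓢(ℝ, ℂ)) {ζ : ℂ} (hζ : ζ.im ≠ 0) :
    ‖∫ t : ℝ, u t * conj (v t) * (ζ - t)⁻¹‖ₑ ≤
      ENNReal.ofReal (2 * π) * ((∫⁻ y, ‖𝓕 u y‖ₑ) * ∫⁻ y, ‖𝓕 v y‖ₑ) := by
  have hupper : ∀ (u v : 𝓢(ℝ, ℂ)) {ζ : ℂ}, 0 < ζ.im → ‖∫ t : ℝ, u t * conj (v t) * (ζ - t)⁻¹‖ₑ ≤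
      ENNReal.ofReal (2 * π) * ((∫⁻ y, ‖𝓕 u y‖ₑ) * ∫⁻ y, ‖𝓕 v y‖ₑ) := fun u v ζ hζ => by
    refine (enorm_integral_mul_inv_sub_le ?_ hζ).trans
      (mul_le_mul_right (lintegral_enorm_fourier_mul_conj_le u v) _)
    obtain ⟨C, -, hC⟩ := u.decay 0 0
    exact (integrable_conj v).bdd_mul u.continuous.aestronglyMeasurable
      (ae_of_all _ fun x => by simpa using hC x)
  rcases hζ.lt_or_gt with hlower | h
  · have hconj : ∫ t : ℝ, u t * conj (v t) * (ζ - t)⁻¹ =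
        conj (∫ t : ℝ, v t * conj (u t) * (conj ζ - t)⁻¹) := by
      rw [← integral_conj]
      refine integral_congr_ae (ae_of_all _ fun t => ?_)
      simp only [map_mul, map_inv₀, map_sub, conj_ofReal, conj_conj]
      ring
    rw [hconj, RCLike.enorm_conj, mul_comm (∫⁻ y, ‖𝓕 u y‖ₑ)]
    exact hupper v u (by simpa using hlower)
  · exact hupper u v h

theorem exists_sq_lintegral_le_lintegral_one_add_rpow_mul {p : ℝ} (hp : 1 < p) :
    ∃ B : ℝ≥0∞, B ≠ ⊤ ∧ ∀ h : ℝ → ℝ≥0∞, Measurable h →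
      (∫⁻ y, h y) ^ 2 ≤ B * ∫⁻ y, ENNReal.ofReal (1 + |y| ^ p) * h y ^ 2 := by
  have hpos : ∀ y : ℝ, 0 < 1 + |y| ^ p := fun y => by positivity
  refine ⟨∫⁻ y : ℝ, (ENNReal.ofReal (1 + |y| ^ p))⁻¹, ne_of_lt ?_, fun h hh =>
    sq_lintegral_le_lintegral_inv_mul (by fun_prop) (by fun_prop)
      (ae_of_all _ fun y => by simpa using hpos y) (by simp)⟩
  have hfin : ∫⁻ y : ℝ, ENNReal.ofReal ((1 + |y|) ^ (-p)) < ⊤ := by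
    simpa using finite_integral_one_add_norm (E := ℝ) (μ := volume) (r := p) (by simpa using hp)
  refine lt_of_le_of_lt ?_ (ENNReal.mul_lt_top (ENNReal.ofReal_lt_top (r := 2 ^ (p - 1))) hfin)
  rw [← lintegral_const_mul' _ _ ENNReal.ofReal_ne_top]
  refine lintegral_mono fun y => ?_
  have hconvex : (1 + |y|) ^ p ≤ 2 ^ (p - 1) * (1 + |y| ^ p) := by
    simpa using NNReal.coe_le_coe.2 (NNReal.rpow_add_le_mul_rpow_add_rpow 1 ‖y‖₊ hp.le)
  rw [← ENNReal.ofReal_inv_of_pos (hpos y), ← ENNReal.ofReal_mul (by positivity),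
    rpow_neg (by positivity), ← div_eq_mul_inv]
  refine ENNReal.ofReal_le_ofReal ?_
  rw [inv_eq_one_div, div_le_div_iff₀ (hpos y) (by positivity), one_mul]
  exact hconvex

theorem lintegral_sq_mul_enorm_fourier_le (u : 𝓢(ℝ, ℂ)) :
    ∫⁻ y, ENNReal.ofReal (y ^ 2) * ‖𝓕 u y‖ₑ ^ 2 ≤ ∫⁻ t, ‖deriv u t‖ₑ ^ 2 := by
  have hfourier : ∀ y, 𝓕 (derivCLM ℂ ℂ u) y = 2 * π * I * y * 𝓕 u y := fun y => by
    have := Real.fourier_deriv u.integrable u.differentiable (derivCLM ℂ ℂ u).integrable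
    exact (congrFun this y).trans (by simp [fourier_coe])
  have hplancherel : ∫⁻ y, ‖𝓕 (derivCLM ℂ ℂ u) y‖ₑ ^ 2 = ∫⁻ t, ‖deriv u t‖ₑ ^ 2 :=
    lintegral_enorm_sq_fourier _
  rw [← hplancherel]
  refine lintegral_mono fun y => ?_
  rw [hfourier, enorm_mul, mul_pow]
  gcongr
  rw [← ofReal_norm, ← ENNReal.ofReal_pow (norm_nonneg _)]
  refine ENNReal.ofReal_le_ofReal (sq_le_sq.2 ?_)
  simpa [abs_of_pos pi_pos] using
    le_mul_of_one_le_left (abs_nonneg y) (by linarith [pi_gt_three] : 1 ≤ 2 * π)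

end ResolventKernel

section AdaptedPolarCoordinates

open Set
open scoped ENNReal

theorem image_mul_rpow_inv_Ioi {m ρ : ℝ} (hm : m ≠ 0) (hρ : 0 < ρ) :
    (fun t : ℝ => ρ * t ^ m⁻¹) '' Ioi 0 = Ioi 0 := by
  refine Subset.antisymm ?_ fun r (hr : 0 < r) => ?_
  · rintro _ ⟨t, ht, rfl⟩
    exact mul_pos hρ (rpow_pos_of_pos ht _)
  · refine ⟨(r / ρ) ^ m, rpow_pos_of_pos (div_pos hr hρ) _, ?_⟩
    simp only [rpow_rpow_inv (div_pos hr hρ).le hm, mul_div_cancel₀ _ hρ.ne']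

theorem injOn_mul_rpow_inv_Ioi {m ρ : ℝ} (hm : m ≠ 0) (hρ : ρ ≠ 0) :
    InjOn (fun t : ℝ => ρ * t ^ m⁻¹) (Ioi 0) := fun s (hs : 0 < s) t (ht : 0 < t) h =>
  (rpow_left_inj hs.le ht.le (inv_ne_zero hm)).1 (mul_left_cancel₀ hρ h)

theorem hasDerivWithinAt_mul_rpow_inv {m ρ t : ℝ} (ht : t ∈ Ioi (0 : ℝ)) :
    HasDerivWithinAt (fun t : ℝ => ρ * t ^ m⁻¹) (ρ * (m⁻¹ * t ^ (m⁻¹ - 1))) (Ioi 0) t :=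
  ((Real.hasDerivAt_rpow_const (Or.inl (ne_of_gt ht))).const_mul ρ).hasDerivWithinAt

theorem abs_deriv_mul_rpow_inv_mul_pow {m ρ t : ℝ} (hm : 0 < m) (hρ : 0 < ρ) (ht : 0 < t) {d : ℕ}
    (hd : 0 < d) :
    |ρ * (m⁻¹ * t ^ (m⁻¹ - 1))| * (ρ * t ^ m⁻¹) ^ (d - 1) =
      ρ ^ d * (m⁻¹ * t ^ (d / m - 1)) := by
  obtain ⟨k, rfl⟩ : ∃ k, d = k + 1 := ⟨d - 1, by omega⟩
  have hpow : t ^ (m⁻¹ - 1) * (t ^ m⁻¹) ^ k = t ^ (((k + 1 : ℕ) : ℝ) / m - 1) := by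
    rw [← rpow_natCast, ← rpow_mul ht.le, ← rpow_add ht]
    congr 1
    push_cast
    field_simp
    ring
  rw [abs_of_pos (by positivity), ← hpow, Nat.add_sub_cancel, mul_pow, pow_succ]
  ring

variable {V : Type*} [NormedAddCommGroup V] [InnerProductSpace ℝ V] [FiniteDimensional ℝ V]
  [MeasurableSpace V] [BorelSpace V] [Nontrivial V]

local notation "σ" => Measure.toSphere (volume : Measure V)
local notation "dim" => Module.finrank ℝ V

theorem lintegral_polar_rpow {m : ℝ} (hm : 0 < m) {ρ : Metric.sphere (0 : V) 1 → ℝ}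
    (hρ : ∀ ω, 0 < ρ ω) {H : V → ℝ≥0∞} (hH : Measurable H) :
    ∫⁻ x, H x = ∫⁻ ω, (∫⁻ t in Ioi (0 : ℝ), ENNReal.ofReal (ρ ω ^ dim * (m⁻¹ * t ^ (dim / m - 1))) *
      H (t ^ m⁻¹ • ρ ω • (ω : V))) ∂σ := by
  rw [lintegral_polar hH]
  refine lintegral_congr fun ω => ?_
  conv_lhs => rw [← image_mul_rpow_inv_Ioi hm.ne' (hρ ω)]
  rw [lintegral_image_eq_lintegral_abs_deriv_mul measurableSet_Ioi
    (fun t ht => hasDerivWithinAt_mul_rpow_inv ht) (injOn_mul_rpow_inv_Ioi hm.ne' (hρ ω).ne')]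
  refine setLIntegral_congr_fun measurableSet_Ioi fun t ht => ?_
  rw [← mul_assoc, ← ENNReal.ofReal_mul (abs_nonneg _),
    abs_deriv_mul_rpow_inv_mul_pow hm (hρ ω) ht Module.finrank_pos, smul_smul, mul_comm (ρ ω)]

theorem integral_polar_rpow {m : ℝ} (hm : 0 < m) {ρ : Metric.sphere (0 : V) 1 → ℝ}
    (hρ : ∀ ω, 0 < ρ ω) {H : V → ℂ} (hH : Integrable H) :
    ∫ x, H x = ∫ ω, (∫ t in Ioi (0 : ℝ), (ρ ω ^ dim * (m⁻¹ * t ^ (dim / m - 1))) •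
      H (t ^ m⁻¹ • ρ ω • (ω : V))) ∂σ := by
  rw [integral_polar hH]
  refine integral_congr_ae (ae_of_all _ fun ω => ?_)
  simp only
  conv_lhs => rw [← image_mul_rpow_inv_Ioi hm.ne' (hρ ω)]
  rw [integral_image_eq_integral_abs_deriv_smul measurableSet_Ioi
    (fun t ht => hasDerivWithinAt_mul_rpow_inv ht) (injOn_mul_rpow_inv_Ioi hm.ne' (hρ ω).ne')]
  refine setIntegral_congr_fun measurableSet_Ioi fun t ht => ?_
  rw [smul_smul, abs_deriv_mul_rpow_inv_mul_pow hm (hρ ω) ht Module.finrank_pos,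
    smul_smul, mul_comm (ρ ω)]

theorem exists_lintegral_setLIntegral_Icc_le {m : ℝ} (hm : 0 < m)
    {ρ : Metric.sphere (0 : V) 1 → ℝ} {c c' : ℝ} (hc : 0 < c) (hcρ : ∀ ω, c ≤ ρ ω)
    (hρc : ∀ ω, ρ ω ≤ c') :
    ∃ C : ℝ≥0∞, C ≠ ⊤ ∧ ∀ H : V → ℝ≥0∞, Measurable H →
      ∫⁻ ω, (∫⁻ t in Icc (1 / 2 : ℝ) (3 / 2), H (t ^ m⁻¹ • ρ ω • (ω : V))) ∂σ ≤
        C * ∫⁻ x in Metric.closedBall 0 ((3 / 2) ^ m⁻¹ * c'), H x := by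
  set κ : ℝ := c ^ dim * (m⁻¹ * ((1 / 2) ^ (dim / m) * (3 / 2)⁻¹))
  have hκ : 0 < κ := by positivity
  refine ⟨ENNReal.ofReal κ⁻¹, ENNReal.ofReal_ne_top, fun H hH => ?_⟩
  have hB : MeasurableSet (Metric.closedBall (0 : V) ((3 / 2) ^ m⁻¹ * c')) :=
    measurableSet_closedBall
  have hρ0 : ∀ ω, 0 < ρ ω := fun ω => hc.trans_le (hcρ ω)
  rw [← lintegral_indicator hB, lintegral_polar_rpow hm hρ0 (hH.indicator hB),
    ← lintegral_const_mul' _ _ ENNReal.ofReal_ne_top]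
  gcongr with ω
  rw [← lintegral_const_mul' _ _ ENNReal.ofReal_ne_top]
  refine le_trans ?_ (lintegral_mono_set (s := Icc (1 / 2 : ℝ) (3 / 2))
    fun t ht => lt_of_lt_of_le (by norm_num) ht.1)
  refine setLIntegral_mono' measurableSet_Icc fun t ⟨ht, ht'⟩ => ?_
  have ht0 : 0 < t := lt_of_lt_of_le (by norm_num) ht
  have hmem : t ^ m⁻¹ • ρ ω • (ω : V) ∈ Metric.closedBall 0 ((3 / 2) ^ m⁻¹ * c') := by
    rw [mem_closedBall_zero_iff, norm_smul, norm_smul, norm_eq_of_mem_sphere, mul_one,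
      Real.norm_of_nonneg (by positivity), Real.norm_of_nonneg (hρ0 ω).le]
    gcongr
    exacts [(hρ0 ω).le, hρc ω]
  have hκle : κ ≤ ρ ω ^ dim * (m⁻¹ * t ^ (dim / m - 1)) := by
    simp only [κ]
    rw [rpow_sub_one ht0.ne', div_eq_mul_inv (t ^ _)]
    gcongr
    exacts [pow_nonneg (hρ0 ω).le _, hcρ ω]
  rw [indicator_of_mem hmem, ← mul_assoc, ← ENNReal.ofReal_mul (by positivity)]
  refine le_mul_of_one_le_left (by positivity) (ENNReal.one_le_ofReal.2 ?_)
  rwa [inv_mul_eq_div, one_le_div hκ]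

end AdaptedPolarCoordinates

section FourierGradient

open SchwartzMap FourierTransform
open scoped ENNReal

variable {V : Type*} [NormedAddCommGroup V] [InnerProductSpace ℝ V] [FiniteDimensional ℝ V]

local notation "dim" => Module.finrank ℝ V
local notation "e" => stdOrthonormalBasis ℝ V

theorem sq_enorm_le_finrank_mul_sum (L : V →L[ℝ] ℂ) :
    ‖L‖ₑ ^ 2 ≤ dim * ∑ i, ‖L (e i)‖ₑ ^ 2 := by
  have hL : ‖L‖ ≤ ∑ i, ‖L (e i)‖ := by
    refine L.opNorm_le_bound (by positivity) fun θ => ?_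
    conv_lhs => rw [← (e).sum_repr' θ, map_sum]
    rw [Finset.sum_mul]
    refine (norm_sum_le _ _).trans (Finset.sum_le_sum fun i _ => ?_)
    rw [map_smul, norm_smul, mul_comm]
    gcongr
    simpa using norm_inner_le_norm (𝕜 := ℝ) (e i) θ
  have hsq : ‖L‖ ^ 2 ≤ dim * ∑ i, ‖L (e i)‖ ^ 2 := by
    refine (pow_le_pow_left₀ (norm_nonneg L) hL 2).trans ?_
    simpa using sq_sum_le_card_mul_sum_sq (s := Finset.univ) (f := fun i => ‖L (e i)‖)
  have := ENNReal.ofReal_le_ofReal hsq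
  rw [ENNReal.ofReal_mul (by positivity),
    ENNReal.ofReal_sum_of_nonneg (fun i _ => by positivity)] at this
  simpa [ENNReal.ofReal_pow, ofReal_norm] using this

variable [MeasurableSpace V] [BorelSpace V]

theorem exists_fourier_eq_fderiv_fourier (f : 𝓢(V, ℂ)) {v : V} (hv : ‖v‖ = 1) :
    ∃ g : 𝓢(V, ℂ), (∀ ξ, 𝓕 g ξ = fderiv ℝ (𝓕 f : 𝓢(V, ℂ)) ξ v) ∧
      ∀ x, ‖g x‖ₑ ≤ ENNReal.ofReal (2 * π) * (ENNReal.ofReal ‖x‖ * ‖f x‖ₑ) := by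
  refine ⟨-(2 * π * Complex.I) • smulLeftCLM ℂ (inner ℝ · v) f,
    fun ξ => (congrArg (fun h : 𝓢(V, ℂ) => h ξ) (lineDerivOp_fourier_eq f v)).symm, fun x => ?_⟩
  have htemperate : (inner ℝ · v : V → ℝ).HasTemperateGrowth := by fun_prop
  rw [smul_apply, smulLeftCLM_apply_apply htemperate, enorm_smul, enorm_smul]
  gcongr
  · rw [← ofReal_norm]
    exact ENNReal.ofReal_le_ofReal (le_of_eq (by simp [abs_of_pos pi_pos]))
  · rw [← ofReal_norm]
    exact ENNReal.ofReal_le_ofReal (by simpa [hv] using norm_inner_le_norm (𝕜 := ℝ) x v)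

theorem exists_setLIntegral_enorm_sq_fderiv_fourier_le [Nontrivial V] {m : ℝ} (hm : 0 < m)
    (hmd : m < dim) (r : ℝ) :
    ∃ C : ℝ≥0∞, C ≠ ⊤ ∧ ∀ f : 𝓢(V, ℂ),
      ∫⁻ ξ in Metric.closedBall 0 r, ‖fderiv ℝ (𝓕 f : 𝓢(V, ℂ)) ξ‖ₑ ^ 2 ≤
        C * ∫⁻ x, ENNReal.ofReal (min 1 (‖x‖ ^ m)) * (ENNReal.ofReal (‖x‖ ^ 2) * ‖f x‖ₑ ^ 2) := by
  obtain ⟨C, hC, hlow⟩ := exists_setLIntegral_enorm_sq_fourier_le (V := V) hm hmd r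
  refine ⟨dim * (dim * (C * ENNReal.ofReal (2 * π) ^ 2)), by finiteness, fun f => ?_⟩
  set I := ∫⁻ x, ENNReal.ofReal (min 1 (‖x‖ ^ m)) * (ENNReal.ofReal (‖x‖ ^ 2) * ‖f x‖ₑ ^ 2) with hI
  have hpartial : ∀ i, ∫⁻ ξ in Metric.closedBall 0 r, ‖fderiv ℝ (𝓕 f : 𝓢(V, ℂ)) ξ (e i)‖ₑ ^ 2 ≤
      C * (ENNReal.ofReal (2 * π) ^ 2 * I) := fun i => by
    obtain ⟨g, hg, hgf⟩ := exists_fourier_eq_fderiv_fourier f (v := e i) (by simp)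
    simp only [← hg]
    refine (hlow g).trans (mul_le_mul_right ?_ _)
    rw [hI, ← lintegral_const_mul' _ _ (by finiteness)]
    refine lintegral_mono fun x => ?_
    rw [mul_left_comm]
    refine mul_le_mul_right ((pow_le_pow_left' (hgf x) 2).trans_eq ?_) _
    rw [mul_pow, mul_pow, ENNReal.ofReal_pow (norm_nonneg x)]
  have hmeas : ∀ v, Measurable fun ξ => ‖fderiv ℝ (𝓕 f : 𝓢(V, ℂ)) ξ v‖ₑ ^ 2 := fun v =>
    (measurable_fderiv_apply_const ℝ _ v).enorm.pow_const 2
  calc ∫⁻ ξ in Metric.closedBall 0 r, ‖fderiv ℝ (𝓕 f : 𝓢(V, ℂ)) ξ‖ₑ ^ 2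
      ≤ ∫⁻ ξ in Metric.closedBall 0 r, dim * ∑ i, ‖fderiv ℝ (𝓕 f : 𝓢(V, ℂ)) ξ (e i)‖ₑ ^ 2 :=
        lintegral_mono fun ξ => sq_enorm_le_finrank_mul_sum _
    _ = dim * ∑ i, ∫⁻ ξ in Metric.closedBall 0 r, ‖fderiv ℝ (𝓕 f : 𝓢(V, ℂ)) ξ (e i)‖ₑ ^ 2 := by
        rw [lintegral_const_mul' _ _ (by finiteness), lintegral_finsetSum _ fun i _ => hmeas (e i)]
    _ ≤ dim * ∑ _i : Fin dim, C * (ENNReal.ofReal (2 * π) ^ 2 * I) := by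
        gcongr
        exact hpartial _
    _ = _ := by simp [mul_assoc]

end FourierGradient

section Cutoff

open Set
open scoped ENNReal

/-- Smooth functions on the line supported in `[1/2, 3/2]`: localisations to a neighbourhood of
the level `1` that keep away from the origin. -/
structure IsCutoff (ψ : ℝ → ℝ) : Prop where
  contDiff : ContDiff ℝ (⊤ : ℕ∞) ψ
  support_subset : Function.support ψ ⊆ Icc (1 / 2) (3 / 2)

namespace IsCutoff

variable {ψ : ℝ → ℝ}

theorem eq_zero (hψ : IsCutoff ψ) {t : ℝ} (ht : t ∉ Icc (1 / 2 : ℝ) (3 / 2)) : ψ t = 0 :=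
  by_contra fun h => ht (hψ.support_subset h)

theorem eventually_eq_zero (hψ : IsCutoff ψ) {t : ℝ} (ht : t ∉ Icc (1 / 2 : ℝ) (3 / 2)) :
    ∀ᶠ s in nhds t, ψ s = 0 := by
  filter_upwards [isClosed_Icc.isOpen_compl.mem_nhds ht] with s hs using hψ.eq_zero hs

theorem hasCompactSupport (hψ : IsCutoff ψ) : HasCompactSupport ψ :=
  HasCompactSupport.intro isCompact_Icc fun _ => hψ.eq_zero

protected theorem deriv (hψ : IsCutoff ψ) : IsCutoff (deriv ψ) where
  contDiff := (contDiff_infty_iff_deriv.1 hψ.contDiff).2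
  support_subset := fun t ht => by_contra fun h => ht <| by
    rw [(Filter.EventuallyEq.deriv_eq (hψ.eventually_eq_zero h) : deriv ψ t = _), deriv_const]

theorem contDiff_smul (hψ : IsCutoff ψ) {E : Type*} [NormedAddCommGroup E]
    [NormedSpace ℝ E] {h : ℝ → E}
    (hh : ∀ t ∈ Icc (1 / 2 : ℝ) (3 / 2), ContDiffAt ℝ (⊤ : ℕ∞) h t) :
    ContDiff ℝ (⊤ : ℕ∞) fun t => ψ t • h t := by
  refine contDiff_iff_contDiffAt.2 fun t => ?_
  by_cases ht : t ∈ Icc (1 / 2 : ℝ) (3 / 2)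
  · exact hψ.contDiff.contDiffAt.smul (hh t ht)
  · refine (contDiffAt_const (c := (0 : E))).congr_of_eventuallyEq ?_
    filter_upwards [hψ.eventually_eq_zero ht] with s hs
    simp [hs]

theorem mul_rpow (hψ : IsCutoff ψ) (κ s : ℝ) : IsCutoff fun t => ψ t * (κ * t ^ s) where
  contDiff := hψ.contDiff_smul fun t ht => contDiffAt_const.mul <|
    contDiffAt_id.rpow_const_of_ne (lt_of_lt_of_le (by norm_num) ht.1 : (0 : ℝ) < t).ne'
  support_subset := (Function.support_mul_subset_left _ _).trans hψ.support_subset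

theorem exists_enorm_le (hψ : IsCutoff ψ) : ∃ K : ℝ≥0∞, K ≠ ⊤ ∧ ∀ t, ‖ψ t‖ₑ ≤ K := by
  obtain ⟨K, hK⟩ := hψ.hasCompactSupport.exists_bound_of_continuous hψ.contDiff.continuous
  refine ⟨ENNReal.ofReal K, ENNReal.ofReal_ne_top, fun t => ?_⟩
  rw [← ofReal_norm]
  exact ENNReal.ofReal_le_ofReal (hK t)

end IsCutoff

end Cutoff

section RadialRestriction

open SchwartzMap FourierTransform Set
open scoped ENNReal

namespace IsCutoff

variable {V : Type*} [NormedAddCommGroup V] [InnerProductSpace ℝ V] {ψ : ℝ → ℝ}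

theorem contDiff_radial (hψ : IsCutoff ψ) (m : ℝ) (F : 𝓢(V, ℂ)) (θ : V) :
    ContDiff ℝ (⊤ : ℕ∞) fun t : ℝ => ψ t • F (t ^ m⁻¹ • θ) :=
  hψ.contDiff_smul fun t ht => (F.smooth _).contDiffAt.comp t <|
    (contDiffAt_id.rpow_const_of_ne
      (lt_of_lt_of_le (by norm_num) ht.1 : (0 : ℝ) < t).ne').smul contDiffAt_const

/-- The Schwartz function `t ↦ ψ t • F (t ^ (1 / m) • θ)`, the cut-off restriction of `F` to the
ray through `θ`, parametrised so that `t` is the value of a symbol homogeneous of degree `m` and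
normalised to be `1` at `θ`. -/
def radial (hψ : IsCutoff ψ) (m : ℝ) (F : 𝓢(V, ℂ)) (θ : V) : 𝓢(ℝ, ℂ) :=
  (hψ.hasCompactSupport.smul_right (f' := fun t : ℝ => F (t ^ m⁻¹ • θ))).toSchwartzMap
    (hψ.contDiff_radial m F θ)

theorem radial_apply (hψ : IsCutoff ψ) (m : ℝ) (F : 𝓢(V, ℂ)) (θ : V) (t : ℝ) :
    hψ.radial m F θ t = ψ t • F (t ^ m⁻¹ • θ) := rfl

theorem radial_add (hψ : IsCutoff ψ) (m : ℝ) (F G : 𝓢(V, ℂ)) (θ : V) :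
    hψ.radial m (F + G) θ = hψ.radial m F θ + hψ.radial m G θ := by
  ext t
  simp only [add_apply, radial_apply, smul_add]

theorem deriv_radial (hψ : IsCutoff ψ) (m : ℝ) (F : 𝓢(V, ℂ)) (θ : V) (t : ℝ) :
    deriv (hψ.radial m F θ) t = deriv ψ t • F (t ^ m⁻¹ • θ) +
      (ψ t * (m⁻¹ * t ^ (m⁻¹ - 1))) • fderiv ℝ F (t ^ m⁻¹ • θ) θ := by
  by_cases ht : t ∈ Icc (1 / 2 : ℝ) (3 / 2)
  · have hcurve : HasDerivAt (fun t : ℝ => t ^ m⁻¹ • θ) ((m⁻¹ * t ^ (m⁻¹ - 1)) • θ) t :=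
      (Real.hasDerivAt_rpow_const
        (Or.inl (lt_of_lt_of_le (by norm_num) ht.1 : (0 : ℝ) < t).ne')).smul_const θ
    have hprod := (hψ.contDiff.differentiable (by simp) t).hasDerivAt.smul
      ((F.differentiable (t ^ m⁻¹ • θ)).hasFDerivAt.comp_hasDerivAt t hcurve)
    refine (show HasDerivAt (hψ.radial m F θ) _ t from hprod).deriv.trans ?_
    rw [map_smul, smul_smul, add_comm]
    rfl
  · have hzero : (hψ.radial m F θ : ℝ → ℂ) =ᶠ[nhds t] fun _ => 0 := by
      filter_upwards [hψ.eventually_eq_zero ht] with s hs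
      rw [radial_apply, hs, zero_smul]
    rw [hzero.deriv_eq, deriv_const, hψ.deriv.eq_zero ht, hψ.eq_zero ht]
    simp

theorem enorm_deriv_radial_sq_le (hψ : IsCutoff ψ) (m : ℝ) (F : 𝓢(V, ℂ)) (θ : V) (t : ℝ) :
    ‖deriv (hψ.radial m F θ) t‖ₑ ^ 2 ≤ 2 * (‖deriv ψ t‖ₑ ^ 2 * ‖F (t ^ m⁻¹ • θ)‖ₑ ^ 2) +
      2 * (‖ψ t * (m⁻¹ * t ^ (m⁻¹ - 1))‖ₑ ^ 2 * ‖fderiv ℝ F (t ^ m⁻¹ • θ)‖ₑ ^ 2) * ‖θ‖ₑ ^ 2 := by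
  rw [deriv_radial]
  refine (enorm_add_sq_le _ _).trans ?_
  rw [enorm_smul, enorm_smul, mul_pow, mul_pow, mul_assoc 2, mul_assoc (_ ^ 2),
    ← mul_pow ‖fderiv ℝ F (t ^ m⁻¹ • θ)‖ₑ]
  gcongr
  exact ContinuousLinearMap.le_opENorm _ _

variable [FiniteDimensional ℝ V] [MeasurableSpace V] [BorelSpace V]

theorem measurable_fourier_radial (hψ : IsCutoff ψ) (m : ℝ)
    {ρ : Metric.sphere (0 : V) 1 → ℝ} (hρ : Measurable ρ) (F : 𝓢(V, ℂ)) :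
    Measurable fun q : Metric.sphere (0 : V) 1 × ℝ =>
      𝓕 (hψ.radial m F (ρ q.1 • (q.1 : V))) q.2 := by
  have hψm : Measurable ψ := hψ.contDiff.continuous.measurable
  have hF : Measurable F := F.continuous.measurable
  simp only [fourier_coe, Real.fourier_real_eq_integral_exp_smul, radial_apply]
  refine (StronglyMeasurable.integral_prod_right (Measurable.stronglyMeasurable ?_)).measurable
  unfold Function.uncurry
  fun_prop

end IsCutoff

end RadialRestriction

section TraceEstimate

open SchwartzMap FourierTransform Set
open scoped ENNReal

theorem setLIntegral_le_rpow_neg_mul {α : Type*} [MeasurableSpace α] {μ : Measure α} {y : α → ℝ}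
    (hy : Measurable y) {t b : ℝ} (ht : 0 < t) (hb : 0 ≤ b) (H : α → ℝ≥0∞) :
    ∫⁻ x in {x | t ≤ y x}, H x ∂μ ≤
      ENNReal.ofReal (t ^ (-b)) * ∫⁻ x, ENNReal.ofReal (y x ^ b) * H x ∂μ := by
  rw [← lintegral_const_mul' _ _ ENNReal.ofReal_ne_top]
  refine le_trans (setLIntegral_mono' (measurableSet_le measurable_const hy)
    fun x (hx : t ≤ y x) => ?_) (setLIntegral_le_lintegral {x | t ≤ y x} _)
  rw [← mul_assoc, ← ENNReal.ofReal_mul (by positivity), rpow_neg ht.le, inv_mul_eq_div]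
  refine le_mul_of_one_le_left (by positivity) (ENNReal.one_le_ofReal.2 ?_)
  rw [one_le_div (by positivity)]
  exact rpow_le_rpow ht.le hx hb

theorem sqrt_one_add_sq_rpow_mul_min_le {p m r : ℝ} (hp : 0 ≤ p) (hpm : p ≤ m) (hr : 0 ≤ r) :
    √(1 + r ^ 2) ^ p * min 1 (r ^ m) ≤ 2 ^ p * r ^ m := by
  rcases le_total r 1 with h | h
  · gcongr
    · exact Real.sqrt_le_iff.2 ⟨zero_le_two, by nlinarith⟩
    · exact min_le_right _ _
  · calc √(1 + r ^ 2) ^ p * min 1 (r ^ m) ≤ (2 * r) ^ p * 1 := by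
          gcongr
          · exact Real.sqrt_le_iff.2 ⟨by positivity, by nlinarith⟩
          · exact min_le_left _ _
      _ = 2 ^ p * r ^ p := by rw [mul_one, mul_rpow zero_le_two hr]
      _ ≤ 2 ^ p * r ^ m := by gcongr

namespace IsCutoff

variable {V : Type*} [NormedAddCommGroup V] [InnerProductSpace ℝ V] {ψ : ℝ → ℝ}

theorem exists_lintegral_enorm_sq_radial_le (hψ : IsCutoff ψ) :
    ∃ K : ℝ≥0∞, K ≠ ⊤ ∧ ∀ (m : ℝ) (F : 𝓢(V, ℂ)) (θ : V), ∫⁻ t, ‖hψ.radial m F θ t‖ₑ ^ 2 ≤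
      K * ∫⁻ t in Icc (1 / 2 : ℝ) (3 / 2), ‖F (t ^ m⁻¹ • θ)‖ₑ ^ 2 := by
  obtain ⟨K, hK, hψK⟩ := hψ.exists_enorm_le
  refine ⟨K ^ 2, by finiteness, fun m F θ => ?_⟩
  rw [← lintegral_const_mul' _ _ (by finiteness), ← lintegral_indicator measurableSet_Icc]
  refine lintegral_mono fun t => ?_
  by_cases ht : t ∈ Icc (1 / 2 : ℝ) (3 / 2)
  · rw [indicator_of_mem ht, radial_apply, enorm_smul, mul_pow]
    gcongr
    exact hψK t
  · simp [radial_apply, hψ.eq_zero ht]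

theorem exists_lintegral_enorm_sq_deriv_radial_le (hψ : IsCutoff ψ) (m c : ℝ) :
    ∃ K : ℝ≥0∞, K ≠ ⊤ ∧ ∀ (F : 𝓢(V, ℂ)) (θ : V), ‖θ‖ ≤ c →
      ∫⁻ t, ‖deriv (hψ.radial m F θ) t‖ₑ ^ 2 ≤ K * ∫⁻ t in Icc (1 / 2 : ℝ) (3 / 2),
        (‖F (t ^ m⁻¹ • θ)‖ₑ ^ 2 + ‖fderiv ℝ F (t ^ m⁻¹ • θ)‖ₑ ^ 2) := by
  obtain ⟨K, hK, hψK⟩ := hψ.deriv.exists_enorm_le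
  obtain ⟨L, hL, hψL⟩ := (hψ.mul_rpow m⁻¹ (m⁻¹ - 1)).exists_enorm_le
  refine ⟨2 * K ^ 2 + 2 * L ^ 2 * ENNReal.ofReal c ^ 2, by finiteness, fun F θ hθ => ?_⟩
  rw [← lintegral_const_mul' _ _ (by finiteness), ← lintegral_indicator measurableSet_Icc]
  refine lintegral_mono fun t => ?_
  by_cases ht : t ∈ Icc (1 / 2 : ℝ) (3 / 2)
  · rw [indicator_of_mem ht]
    set ξ := t ^ m⁻¹ • θ
    calc ‖deriv (hψ.radial m F θ) t‖ₑ ^ 2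
        ≤ 2 * (K ^ 2 * ‖F ξ‖ₑ ^ 2) + 2 * (L ^ 2 * ‖fderiv ℝ F ξ‖ₑ ^ 2) * ENNReal.ofReal c ^ 2 := by
          refine (hψ.enorm_deriv_radial_sq_le m F θ t).trans ?_
          gcongr
          · exact hψK t
          · exact hψL t
          · rw [← ofReal_norm]
            exact ENNReal.ofReal_le_ofReal hθ
      _ = 2 * K ^ 2 * ‖F ξ‖ₑ ^ 2 + 2 * L ^ 2 * ENNReal.ofReal c ^ 2 * ‖fderiv ℝ F ξ‖ₑ ^ 2 := by
          ring
      _ ≤ _ := by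
          rw [add_mul, mul_add, mul_add]
          exact add_le_add le_self_add le_add_self
  · simp [deriv_radial, hψ.deriv.eq_zero ht, hψ.eq_zero ht]

variable [FiniteDimensional ℝ V] [MeasurableSpace V] [BorelSpace V] [Nontrivial V]

local notation "σ" => Measure.toSphere (volume : Measure V)
local notation "dim" => Module.finrank ℝ V

variable {m : ℝ} {ρ : Metric.sphere (0 : V) 1 → ℝ} {c c' : ℝ}

theorem exists_lintegral_enorm_sq_fourier_radial_le (hψ : IsCutoff ψ) (hm : 0 < m) (hmd : m < dim)
    (hc : 0 < c) (hcρ : ∀ ω, c ≤ ρ ω) (hρc : ∀ ω, ρ ω ≤ c') :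
    ∃ A : ℝ≥0∞, A ≠ ⊤ ∧ ∀ f : 𝓢(V, ℂ),
      ∫⁻ ω, (∫⁻ y, ‖𝓕 (hψ.radial m (𝓕 f) (ρ ω • (ω : V))) y‖ₑ ^ 2) ∂σ ≤
        A * ∫⁻ x, ENNReal.ofReal (min 1 (‖x‖ ^ m)) * ‖f x‖ₑ ^ 2 := by
  obtain ⟨K, hK, hradial⟩ := hψ.exists_lintegral_enorm_sq_radial_le (V := V)
  obtain ⟨S, hS, hshell⟩ := exists_lintegral_setLIntegral_Icc_le hm hc hcρ hρc
  obtain ⟨C, hC, hlow⟩ :=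
    exists_setLIntegral_enorm_sq_fourier_le (V := V) hm hmd ((3 / 2) ^ m⁻¹ * c')
  refine ⟨K * (S * C), by finiteness, fun f => ?_⟩
  have hF : Measurable (𝓕 f : 𝓢(V, ℂ)) := SchwartzMap.continuous _ |>.measurable
  calc ∫⁻ ω, (∫⁻ y, ‖𝓕 (hψ.radial m (𝓕 f) (ρ ω • (ω : V))) y‖ₑ ^ 2) ∂σ
      ≤ ∫⁻ ω, K * (∫⁻ t in Icc (1 / 2 : ℝ) (3 / 2), ‖𝓕 f (t ^ m⁻¹ • ρ ω • (ω : V))‖ₑ ^ 2) ∂σ := by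
        simp only [lintegral_enorm_sq_fourier]
        gcongr
        exact hradial _ _ _
    _ ≤ K * (S * ∫⁻ ξ in Metric.closedBall 0 ((3 / 2) ^ m⁻¹ * c'), ‖𝓕 f ξ‖ₑ ^ 2) := by
        rw [lintegral_const_mul' _ _ hK]
        gcongr
        exact hshell _ (by fun_prop)
    _ ≤ _ := by
        rw [mul_assoc, mul_assoc]
        gcongr
        exact hlow f

theorem exists_lintegral_sq_mul_enorm_sq_fourier_radial_le (hψ : IsCutoff ψ) (hm : 0 < m)
    (hmd : m < dim) (hc : 0 < c) (hcρ : ∀ ω, c ≤ ρ ω) (hρc : ∀ ω, ρ ω ≤ c') :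
    ∃ B : ℝ≥0∞, B ≠ ⊤ ∧ ∀ f : 𝓢(V, ℂ),
      ∫⁻ ω, (∫⁻ y, ENNReal.ofReal (y ^ 2) *
          ‖𝓕 (hψ.radial m (𝓕 f) (ρ ω • (ω : V))) y‖ₑ ^ 2) ∂σ ≤
        B * ∫⁻ x, ENNReal.ofReal (1 + ‖x‖ ^ 2) * ENNReal.ofReal (min 1 (‖x‖ ^ m)) *
          ‖f x‖ₑ ^ 2 := by
  obtain ⟨K, hK, hradial⟩ := hψ.exists_lintegral_enorm_sq_deriv_radial_le (V := V) m c'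
  obtain ⟨S, hS, hshell⟩ := exists_lintegral_setLIntegral_Icc_le hm hc hcρ hρc
  set r := (3 / 2) ^ m⁻¹ * c'
  obtain ⟨C, hC, hlow⟩ := exists_setLIntegral_enorm_sq_fourier_le (V := V) hm hmd r
  obtain ⟨D, hD, hgrad⟩ := exists_setLIntegral_enorm_sq_fderiv_fourier_le (V := V) hm hmd r
  refine ⟨K * (S * (C + D)), by finiteness, fun f => ?_⟩
  set F : 𝓢(V, ℂ) := 𝓕 f
  have hF : Measurable F := F.continuous.measurable
  have hθ : ∀ ω, ‖ρ ω • (ω : V)‖ ≤ c' := fun ω => by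
    rw [norm_smul, norm_eq_of_mem_sphere, mul_one, Real.norm_of_nonneg (hc.le.trans (hcρ ω))]
    exact hρc ω
  set I := ∫⁻ x, ENNReal.ofReal (1 + ‖x‖ ^ 2) * ENNReal.ofReal (min 1 (‖x‖ ^ m)) * ‖f x‖ₑ ^ 2
  have hball : ∫⁻ ξ in Metric.closedBall 0 r, (‖F ξ‖ₑ ^ 2 + ‖fderiv ℝ F ξ‖ₑ ^ 2) ≤
      (C + D) * I := by
    rw [lintegral_add_left (by fun_prop), add_mul]
    refine add_le_add ((hlow f).trans (mul_le_mul_right (lintegral_mono fun x => ?_) _))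
      ((hgrad f).trans (mul_le_mul_right (lintegral_mono fun x => ?_) _))
    · refine mul_le_mul_left (le_mul_of_one_le_left (by positivity) ?_) _
      exact ENNReal.one_le_ofReal.2 (by linarith [sq_nonneg ‖x‖])
    · rw [mul_comm (ENNReal.ofReal (1 + ‖x‖ ^ 2)), mul_assoc]
      gcongr
      linarith
  calc ∫⁻ ω, (∫⁻ y, ENNReal.ofReal (y ^ 2) * ‖𝓕 (hψ.radial m F (ρ ω • (ω : V))) y‖ₑ ^ 2) ∂σ
      ≤ ∫⁻ ω, K * (∫⁻ t in Icc (1 / 2 : ℝ) (3 / 2), (‖F (t ^ m⁻¹ • ρ ω • (ω : V))‖ₑ ^ 2 +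
          ‖fderiv ℝ F (t ^ m⁻¹ • ρ ω • (ω : V))‖ₑ ^ 2)) ∂σ := by
        gcongr with ω
        exact (lintegral_sq_mul_enorm_fourier_le _).trans (hradial F _ (hθ ω))
    _ ≤ K * (S * ∫⁻ ξ in Metric.closedBall 0 r, (‖F ξ‖ₑ ^ 2 + ‖fderiv ℝ F ξ‖ₑ ^ 2)) := by
        rw [lintegral_const_mul' _ _ hK]
        gcongr
        exact hshell (fun ξ => ‖F ξ‖ₑ ^ 2 + ‖fderiv ℝ F ξ‖ₑ ^ 2)
          ((hF.enorm.pow_const 2).add ((measurable_fderiv ℝ F).enorm.pow_const 2))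
    _ ≤ K * (S * ((C + D) * I)) := by gcongr
    _ = _ := by ring

theorem exists_lintegral_rpow_mul_enorm_sq_fourier_radial_le (hψ : IsCutoff ψ) {p : ℝ} (hp : 0 < p)
    (hp2 : p < 2) (hpm : p ≤ m) (hmd : m < dim) (hρ : Measurable ρ) (hc : 0 < c)
    (hcρ : ∀ ω, c ≤ ρ ω) (hρc : ∀ ω, ρ ω ≤ c') :
    ∃ D : ℝ≥0∞, D ≠ ⊤ ∧ ∀ f : 𝓢(V, ℂ),
      ∫⁻ ω, (∫⁻ y, ENNReal.ofReal (|y| ^ p) *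
          ‖𝓕 (hψ.radial m (𝓕 f) (ρ ω • (ω : V))) y‖ₑ ^ 2) ∂σ ≤
        D * ∫⁻ x, ENNReal.ofReal (‖x‖ ^ m) * ‖f x‖ₑ ^ 2 := by
  have hm : 0 < m := hp.trans_le hpm
  obtain ⟨A, hA, hUA⟩ := hψ.exists_lintegral_enorm_sq_fourier_radial_le hm hmd hc hcρ hρc
  obtain ⟨B, hB, hUB⟩ := hψ.exists_lintegral_sq_mul_enorm_sq_fourier_radial_le hm hmd hc hcρ hρc
  set U : 𝓢(V, ℂ) → Metric.sphere (0 : V) 1 × ℝ → ℂ := fun f q =>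
    𝓕 (hψ.radial m (𝓕 f) (ρ q.1 • (q.1 : V))) q.2 with hUdef
  have hU : ∀ f, Measurable (U f) := fun f => hψ.measurable_fourier_radial m hρ (𝓕 f)
  have hUadd : ∀ f g, U (f + g) = U f + U g := fun f g => funext fun q => by
    simp only [hUdef, FourierTransform.fourier_add, radial_add, Pi.add_apply, add_apply]
  set D := 2 * A + 2 * B * ENNReal.ofReal (p * (3 ^ (2 - p) / (2 - p)))
  refine ⟨D * ENNReal.ofReal (2 ^ p), by finiteness, fun f => ?_⟩
  have hz : ∀ x : V, √(1 + ‖x‖ ^ 2) ^ (2 : ℝ) = 1 + ‖x‖ ^ 2 := fun x => by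
    rw [rpow_two, sq_sqrt (by positivity)]
  have hinterp := lintegral_rpow_mul_enorm_sq_le_of_splitsSchwartz (μ := volume)
    (ν := Measure.prod σ volume) (y := fun q => |q.2|) (z := fun x : V => √(1 + ‖x‖ ^ 2))
    (w := fun x => ENNReal.ofReal (min 1 (‖x‖ ^ m))) (by fun_prop) (fun q => abs_nonneg _)
    (by fun_prop) (fun x => by positivity) three_pos
    splitsSchwartz_sqrt_one_add_norm_sq
    (by fun_prop) hU hUadd hp hp2 hA hB
    (fun f => by
      rw [lintegral_prod _ ((hU f).enorm.pow_const 2).aemeasurable]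
      exact hUA f)
    (fun f t ht _ => by
      refine (setLIntegral_le_rpow_neg_mul (by fun_prop) ht zero_le_two _).trans ?_
      rw [mul_left_comm]
      refine mul_le_mul_right ?_ _
      rw [lintegral_prod _ (by have := hU f; fun_prop)]
      simpa only [hz, rpow_two, sq_abs] using hUB f) f
  rw [lintegral_prod _ (by have := hU f; fun_prop)] at hinterp
  refine hinterp.trans ?_
  rw [mul_assoc D, ← lintegral_const_mul' _ _ ENNReal.ofReal_ne_top]
  refine mul_le_mul_right (lintegral_mono fun x => ?_) D
  simp only [← mul_assoc]
  rw [← ENNReal.ofReal_mul (by positivity), ← ENNReal.ofReal_mul (by positivity)]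
  exact mul_le_mul_left (ENNReal.ofReal_le_ofReal
    (sqrt_one_add_sq_rpow_mul_min_le hp.le hpm (norm_nonneg x))) _

theorem exists_lintegral_sq_lintegral_enorm_fourier_radial_le (hψ : IsCutoff ψ) (hm : 1 < m)
    (hmd : m < dim) (hρ : Measurable ρ) (hc : 0 < c) (hcρ : ∀ ω, c ≤ ρ ω) (hρc : ∀ ω, ρ ω ≤ c') :
    ∃ C : ℝ≥0∞, C ≠ ⊤ ∧ ∀ f : 𝓢(V, ℂ),
      ∫⁻ ω, (∫⁻ y, ‖𝓕 (hψ.radial m (𝓕 f) (ρ ω • (ω : V))) y‖ₑ) ^ 2 ∂σ ≤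
        C * ∫⁻ x, ENNReal.ofReal (‖x‖ ^ m) * ‖f x‖ₑ ^ 2 := by
  obtain ⟨p, hp1, hp⟩ := exists_between (lt_min hm one_lt_two)
  obtain ⟨hpm, hp2⟩ := lt_min_iff.1 hp
  obtain ⟨B, hB, hcauchy⟩ := exists_sq_lintegral_le_lintegral_one_add_rpow_mul hp1
  obtain ⟨A, hA, hUA⟩ :=
    hψ.exists_lintegral_enorm_sq_fourier_radial_le (zero_lt_one.trans hm) hmd hc hcρ hρc
  obtain ⟨D, hD, hUD⟩ := hψ.exists_lintegral_rpow_mul_enorm_sq_fourier_radial_le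
    (zero_lt_one.trans hp1) hp2 hpm.le hmd hρ hc hcρ hρc
  refine ⟨B * (A + D), by finiteness, fun f => ?_⟩
  set U := fun (ω : Metric.sphere (0 : V) 1) (y : ℝ) =>
    𝓕 (hψ.radial m (𝓕 f) (ρ ω • (ω : V))) y
  have hUm : Measurable (Function.uncurry U) := hψ.measurable_fourier_radial m hρ (𝓕 f)
  have hUω : ∀ ω, Measurable (U ω) := fun ω => hUm.of_uncurry_left
  calc ∫⁻ ω, (∫⁻ y, ‖U ω y‖ₑ) ^ 2 ∂σ
      ≤ ∫⁻ ω, B * (∫⁻ y, ENNReal.ofReal (1 + |y| ^ p) * ‖U ω y‖ₑ ^ 2) ∂σ :=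
        lintegral_mono fun ω => hcauchy _ (hUω ω).enorm
    _ = B * ((∫⁻ ω, (∫⁻ y, ‖U ω y‖ₑ ^ 2) ∂σ) +
          ∫⁻ ω, (∫⁻ y, ENNReal.ofReal (|y| ^ p) * ‖U ω y‖ₑ ^ 2) ∂σ) := by
        rw [lintegral_const_mul' _ _ hB, ← lintegral_add_left]
        · congr! 3 with ω
          rw [← lintegral_add_left ((hUω ω).enorm.pow_const 2)]
          refine lintegral_congr fun y => ?_
          rw [ENNReal.ofReal_add zero_le_one (by positivity), ENNReal.ofReal_one, add_mul, one_mul]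
        · exact Measurable.lintegral_prod_right (hUm.enorm.pow_const 2)
    _ ≤ B * (A * (∫⁻ x, ENNReal.ofReal (‖x‖ ^ m) * ‖f x‖ₑ ^ 2) +
          D * ∫⁻ x, ENNReal.ofReal (‖x‖ ^ m) * ‖f x‖ₑ ^ 2) := by
        gcongr B * (?_ + ?_)
        · refine (hUA f).trans (mul_le_mul_right (lintegral_mono fun x => ?_) A)
          gcongr
          exact min_le_right _ _
        · exact hUD f
    _ = _ := by ring

end IsCutoff

end TraceEstimate

section ResolventForm

open SchwartzMap FourierTransform
open scoped ENNReal ComplexConjugate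

variable {V : Type*} [NormedAddCommGroup V] [InnerProductSpace ℝ V] [FiniteDimensional ℝ V]
  [MeasurableSpace V] [BorelSpace V] {m : ℝ}

local notation "dim" => Module.finrank ℝ V

/-- The squared `L²` norm of `‖x‖ ^ (m / 2) * f x`. -/
def weightedEnergy (m : ℝ) (f : V → ℂ) : ℝ≥0∞ := ∫⁻ x, ENNReal.ofReal (‖x‖ ^ m) * ‖f x‖ₑ ^ 2

/-- The sesquilinear form of the Fourier multiplier with symbol `q`, written on the frequency
side. -/
def fourierForm (q : V → ℂ) (f g : 𝓢(V, ℂ)) : ℂ := ∫ ξ, q ξ * (𝓕 f ξ * conj (𝓕 g ξ))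

/-- Boundedness of the form of the multiplier `q` with respect to the weight `‖x‖ ^ (m / 2)`;
`C` bounds the square of its norm. -/
def FormBound (m : ℝ) (C : ℝ≥0∞) (q : V → ℂ) : Prop :=
  ∀ f g : 𝓢(V, ℂ), ‖fourierForm q f g‖ₑ ^ 2 ≤ C * (weightedEnergy m f * weightedEnergy m g)

theorem integrable_mul_fourier_mul_conj {q : V → ℂ} (hq : Measurable q) {B : ℝ}
    (hB : ∀ ξ, ‖q ξ‖ ≤ B) (f g : 𝓢(V, ℂ)) :
    Integrable fun ξ => q ξ * (𝓕 f ξ * conj (𝓕 g ξ)) := by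
  obtain ⟨D, -, hD⟩ := (𝓕 f).decay 0 0
  refine Integrable.bdd_mul ?_ hq.aestronglyMeasurable (ae_of_all _ hB)
  exact (integrable_conj (𝓕 g)).bdd_mul (𝓕 f).continuous.aestronglyMeasurable
    (ae_of_all _ fun ξ => by simpa using hD ξ)

theorem FormBound.add {C₁ C₂ : ℝ≥0∞} {q₁ q₂ : V → ℂ} {B₁ B₂ : ℝ} (h₁ : FormBound m C₁ q₁)
    (h₂ : FormBound m C₂ q₂) (hq₁ : Measurable q₁) (hq₂ : Measurable q₂)
    (hB₁ : ∀ ξ, ‖q₁ ξ‖ ≤ B₁) (hB₂ : ∀ ξ, ‖q₂ ξ‖ ≤ B₂) :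
    FormBound m (2 * C₁ + 2 * C₂) (fun ξ => q₁ ξ + q₂ ξ) := fun f g => by
  have hadd : fourierForm (fun ξ => q₁ ξ + q₂ ξ) f g = fourierForm q₁ f g + fourierForm q₂ f g := by
    simp only [fourierForm, add_mul]
    exact integral_add (integrable_mul_fourier_mul_conj hq₁ hB₁ f g)
      (integrable_mul_fourier_mul_conj hq₂ hB₂ f g)
  rw [hadd, add_mul, mul_assoc, mul_assoc]
  exact (enorm_add_sq_le _ _).trans (by gcongr; exacts [h₁ f g, h₂ f g])

theorem exists_formBound_of_norm_le_rpow_neg [Nontrivial V] (hm : 0 < m) (hmd : m < dim) (L : ℝ) :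
    ∃ C : ℝ≥0∞, C ≠ ⊤ ∧
      ∀ q : V → ℂ, (∀ ξ, ξ ≠ 0 → ‖q ξ‖ ≤ L * ‖ξ‖ ^ (-m)) → FormBound m C q := by
  obtain ⟨P, hP, hpitt⟩ := pitt_inequality (V := V) hm hmd
  refine ⟨ENNReal.ofReal L ^ 2 * P ^ 2, by finiteness, fun q hq f g => ?_⟩
  set w : V → ℝ≥0∞ := fun ξ => ENNReal.ofReal (‖ξ‖ ^ (-m / 2))
  have hw : Measurable w := by fun_prop
  have hw2 : ∀ ξ, w ξ ^ 2 = ENNReal.ofReal (‖ξ‖ ^ (-m)) := fun ξ => by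
    rw [← ENNReal.ofReal_pow (by positivity), ← rpow_mul_natCast (norm_nonneg ξ), Nat.cast_ofNat,
      div_mul_cancel₀ _ two_ne_zero]
  have hweighted : ∀ h : 𝓢(V, ℂ), ∫⁻ ξ, (w ξ * ‖𝓕 h ξ‖ₑ) ^ 2 ≤ P * weightedEnergy m h := fun h => by
    simp only [mul_pow, hw2]
    exact hpitt h
  have hform : ‖fourierForm q f g‖ₑ ≤
      ENNReal.ofReal L * ∫⁻ ξ, (w ξ * ‖𝓕 f ξ‖ₑ) * (w ξ * ‖𝓕 g ξ‖ₑ) := by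
    refine (enorm_integral_le_lintegral_enorm _).trans ?_
    rw [← lintegral_const_mul' _ _ ENNReal.ofReal_ne_top]
    refine lintegral_mono_ae ?_
    filter_upwards [show ∀ᵐ ξ : V, ξ ≠ 0 by simp [ae_iff]] with ξ hξ
    have hqξ : ‖q ξ‖ₑ ≤ ENNReal.ofReal L * w ξ ^ 2 := by
      rw [hw2, ← ENNReal.ofReal_mul' (by positivity), ← ofReal_norm]
      exact ENNReal.ofReal_le_ofReal (hq ξ hξ)
    calc ‖q ξ * (𝓕 f ξ * conj (𝓕 g ξ))‖ₑ = ‖q ξ‖ₑ * (‖𝓕 f ξ‖ₑ * ‖𝓕 g ξ‖ₑ) := by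
          rw [enorm_mul, enorm_mul, RCLike.enorm_conj]
      _ ≤ ENNReal.ofReal L * w ξ ^ 2 * (‖𝓕 f ξ‖ₑ * ‖𝓕 g ξ‖ₑ) := by gcongr
      _ = _ := by ring
  have hF : ∀ h : 𝓢(V, ℂ), Measurable fun ξ => 𝓕 h ξ := fun h => (𝓕 h).continuous.measurable
  calc ‖fourierForm q f g‖ₑ ^ 2
      ≤ ENNReal.ofReal L ^ 2 *
          ((∫⁻ ξ, (w ξ * ‖𝓕 f ξ‖ₑ) ^ 2) * ∫⁻ ξ, (w ξ * ‖𝓕 g ξ‖ₑ) ^ 2) := by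
        refine (pow_le_pow_left' hform 2).trans ?_
        rw [mul_pow]
        gcongr
        exact sq_lintegral_mul_le (hw.mul (hF f).enorm).aemeasurable
          (hw.mul (hF g).enorm).aemeasurable
    _ ≤ ENNReal.ofReal L ^ 2 * ((P * weightedEnergy m f) * (P * weightedEnergy m g)) := by
        gcongr
        exacts [hweighted f, hweighted g]
    _ = _ := by ring

end ResolventForm

section EllipticSymbol

/-- A positive symbol, homogeneous of degree one, between the multiples `c * ‖ξ‖` and `c' * ‖ξ‖` of
the norm. -/
structure IsEllipticSymbol {V : Type*} [NormedAddCommGroup V] [NormedSpace ℝ V]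
    [MeasurableSpace V] (a : V → ℝ) (c c' : ℝ) : Prop where
  measurable : Measurable a
  map_smul : ∀ t : ℝ, 0 < t → ∀ ξ, a (t • ξ) = t * a ξ
  lower_pos : 0 < c
  lower_le : ∀ ξ, c * ‖ξ‖ ≤ a ξ
  le_upper : ∀ ξ, a ξ ≤ c' * ‖ξ‖

variable {V : Type*} [NormedAddCommGroup V] [NormedSpace ℝ V] [MeasurableSpace V] {a : V → ℝ}
  {c c' : ℝ}

theorem exists_isEllipticSymbol [ProperSpace V] [BorelSpace V] (ha : Continuous a)
    (hhom : ∀ t : ℝ, 0 < t → ∀ ξ, a (t • ξ) = t * a ξ)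
    (hpos : ∀ ξ, ξ ≠ 0 → 0 < a ξ) : ∃ c c' : ℝ, IsEllipticSymbol a c c' := by
  have hzero : a 0 = 0 := by
    have := hhom 2 two_pos 0
    rw [smul_zero] at this
    linarith
  rcases subsingleton_or_nontrivial V with hV | hV
  · exact ⟨1, 1, ha.measurable, hhom, one_pos, fun ξ => by simp [Subsingleton.elim ξ 0, hzero],
      fun ξ => by simp [Subsingleton.elim ξ 0, hzero]⟩
  have hsphere : IsCompact (Metric.sphere (0 : V) 1) := isCompact_sphere _ _
  have hne : (Metric.sphere (0 : V) 1).Nonempty := NormedSpace.sphere_nonempty.2 zero_le_one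
  obtain ⟨x, hx, hmin⟩ := hsphere.exists_isMinOn hne ha.continuousOn
  obtain ⟨y, -, hmax⟩ := hsphere.exists_isMaxOn hne ha.continuousOn
  have hbounds : ∀ ξ, a x * ‖ξ‖ ≤ a ξ ∧ a ξ ≤ a y * ‖ξ‖ := fun ξ => by
    rcases eq_or_ne ξ 0 with rfl | hξ
    · simp [hzero]
    · have hnorm : 0 < ‖ξ‖ := norm_pos_iff.2 hξ
      have hmem : ‖ξ‖⁻¹ • ξ ∈ Metric.sphere (0 : V) 1 := by simp [norm_smul, hnorm.ne']
      have hlow : a x ≤ a (‖ξ‖⁻¹ • ξ) := hmin hmem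
      have hup : a (‖ξ‖⁻¹ • ξ) ≤ a y := hmax hmem
      rw [hhom _ (inv_pos.2 hnorm), inv_mul_eq_div] at hlow hup
      exact ⟨(le_div_iff₀ hnorm).1 hlow, (div_le_iff₀ hnorm).1 hup⟩
  exact ⟨a x, a y, ha.measurable, hhom, hpos x (ne_zero_of_mem_unit_sphere ⟨x, hx⟩),
    fun ξ => (hbounds ξ).1, fun ξ => (hbounds ξ).2⟩

namespace IsEllipticSymbol

theorem nonneg (ha : IsEllipticSymbol a c c') (ξ : V) : 0 ≤ a ξ :=
  (mul_nonneg ha.lower_pos.le (norm_nonneg ξ)).trans (ha.lower_le ξ)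

theorem pos (ha : IsEllipticSymbol a c c') {ξ : V} (hξ : ξ ≠ 0) : 0 < a ξ :=
  (mul_pos ha.lower_pos (norm_pos_iff.2 hξ)).trans_le (ha.lower_le ξ)

theorem comp_smul [BorelSpace V] (ha : IsEllipticSymbol a c c') {l : ℝ} (hl : 0 < l) :
    IsEllipticSymbol (fun ξ => a (l • ξ)) (c * l) (c' * l) where
  measurable := ha.measurable.comp (measurable_const_smul l)
  map_smul t ht ξ := by rw [smul_comm, ha.map_smul t ht]
  lower_pos := mul_pos ha.lower_pos hl
  lower_le ξ := by simpa [norm_smul, abs_of_pos hl, mul_assoc] using ha.lower_le (l • ξ)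
  le_upper ξ := by simpa [norm_smul, abs_of_pos hl, mul_assoc] using ha.le_upper (l • ξ)

theorem map_rpow_inv_smul_inv_smul (ha : IsEllipticSymbol a c c') {m t : ℝ} (hm : m ≠ 0)
    (ht : 0 < t) {ξ : V} (hξ : ξ ≠ 0) : a (t ^ m⁻¹ • (a ξ)⁻¹ • ξ) ^ m = t := by
  rw [ha.map_smul _ (by positivity), ha.map_smul _ (inv_pos.2 (ha.pos hξ)),
    inv_mul_cancel₀ (ha.pos hξ).ne', mul_one, rpow_inv_rpow ht.le hm]

theorem lower_le_sphere (ha : IsEllipticSymbol a c c') (ω : Metric.sphere (0 : V) 1) : c ≤ a ω := by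
  simpa using ha.lower_le ω

theorem sphere_le_upper (ha : IsEllipticSymbol a c c') (ω : Metric.sphere (0 : V) 1) :
    a ω ≤ c' := by
  simpa using ha.le_upper ω

theorem upper_pos [Nontrivial V] (ha : IsEllipticSymbol a c c') : 0 < c' := by
  obtain ⟨x, hx⟩ := NormedSpace.sphere_nonempty (x := (0 : V)).2 zero_le_one
  exact ha.lower_pos.trans_le ((ha.lower_le_sphere ⟨x, hx⟩).trans (ha.sphere_le_upper ⟨x, hx⟩))

end IsEllipticSymbol

end EllipticSymbol

section SpectralLocalization

open SchwartzMap FourierTransform Set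
open scoped ENNReal ComplexConjugate

theorem norm_ofReal_mul_inv_sub_le {ζ : ℂ} (hζ : ζ.im ≠ 0) {s K : ℝ} (hs : |s| ≤ K) (t : ℝ) :
    ‖(s : ℂ) * (ζ - t)⁻¹‖ ≤ K * |ζ.im|⁻¹ := by
  rw [norm_mul, norm_inv, Complex.norm_real]
  have him : |ζ.im| ≤ ‖ζ - t‖ := by simpa using Complex.abs_im_le_norm (ζ - t)
  exact mul_le_mul hs (inv_anti₀ (abs_pos.2 hζ) him) (by positivity) ((abs_nonneg s).trans hs)

/-- The cutoff, equal to `1` on `[3/4, 5/4]` and supported in `[1/2, 3/2]`, that isolates the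
spectral parameters near the unit circle. -/
def unitBump : ContDiffBump (1 : ℝ) := ⟨1 / 4, 1 / 2, by norm_num, by norm_num⟩

theorem isCutoff_unitBump : IsCutoff unitBump where
  contDiff := unitBump.contDiff
  support_subset := by
    rw [unitBump.support_eq, Real.ball_eq_Ioo]
    refine Ioo_subset_Icc_self.trans_eq ?_
    norm_num [unitBump]

theorem unitBump_sq_mem_Icc (t : ℝ) : unitBump t ^ 2 ∈ Icc (0 : ℝ) 1 :=
  ⟨sq_nonneg _, pow_le_one₀ unitBump.nonneg unitBump.le_one⟩

theorem norm_one_sub_unitBump_mul_inv_sub_le {ζ : ℂ} (hζ : ‖ζ‖ = 1) {t : ℝ} (ht : 0 < t) :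
    ‖((1 - unitBump t ^ 2 : ℝ) : ℂ) * (ζ - t)⁻¹‖ ≤ 5 * t⁻¹ := by
  by_cases hnear : |t - 1| ≤ 1 / 4
  · have hone : unitBump t = 1 :=
      unitBump.one_of_mem_closedBall (by rwa [Metric.mem_closedBall, Real.dist_eq])
    rw [hone, one_pow, sub_self, ofReal_zero, zero_mul, norm_zero]
    positivity
  · have hdist : |t - 1| ≤ ‖ζ - t‖ := by
      have := abs_norm_sub_norm_le (t : ℂ) ζ
      rwa [hζ, Complex.norm_real, Real.norm_of_nonneg ht.le, norm_sub_rev] at this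
    have hfar : t / 5 ≤ |t - 1| := by
      rcases le_total 1 t with h | h
      · rw [abs_of_nonneg (by linarith)] at hnear ⊢; linarith
      · rw [abs_of_nonpos (by linarith)] at hnear ⊢; linarith
    obtain ⟨hlow, hup⟩ := unitBump_sq_mem_Icc t
    calc ‖((1 - unitBump t ^ 2 : ℝ) : ℂ) * (ζ - t)⁻¹‖ ≤ 1 * (t / 5)⁻¹ := by
          rw [norm_mul, norm_inv, Complex.norm_real, Real.norm_eq_abs]
          gcongr
          · exact abs_le.2 ⟨by linarith, by linarith⟩
          · exact hfar.trans hdist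
      _ = 5 * t⁻¹ := by field_simp

variable {V : Type*} [NormedAddCommGroup V] [InnerProductSpace ℝ V] [FiniteDimensional ℝ V]
  [MeasurableSpace V] [BorelSpace V] [Nontrivial V] {a : V → ℝ} {c c' m : ℝ} {ψ : ℝ → ℝ}

local notation "σ" => Measure.toSphere (volume : Measure V)
local notation "dim" => Module.finrank ℝ V

theorem exists_formBound_one_sub_unitBump (ha : IsEllipticSymbol a c c') (hm : 0 < m)
    (hmd : m < dim) :
    ∃ C : ℝ≥0∞, C ≠ ⊤ ∧ ∀ ζ : ℂ, ‖ζ‖ = 1 → FormBound m C fun ξ =>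
      ((1 - unitBump (a ξ ^ m) ^ 2 : ℝ) : ℂ) * (ζ - (a ξ ^ m : ℝ))⁻¹ := by
  obtain ⟨C, hC, hbound⟩ :=
    exists_formBound_of_norm_le_rpow_neg (V := V) hm hmd (5 * (c ^ m)⁻¹)
  refine ⟨C, hC, fun ζ hζ => hbound _ fun ξ hξ => ?_⟩
  have hc := ha.lower_pos
  have hξ' : 0 < ‖ξ‖ := norm_pos_iff.2 hξ
  have haξ : 0 < a ξ := ha.pos hξ
  calc _ ≤ 5 * (a ξ ^ m)⁻¹ := norm_one_sub_unitBump_mul_inv_sub_le hζ (by positivity)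
    _ ≤ 5 * ((c * ‖ξ‖) ^ m)⁻¹ := by
        gcongr
        exact ha.lower_le ξ
    _ = 5 * (c ^ m)⁻¹ * ‖ξ‖ ^ (-m) := by
        rw [mul_rpow hc.le hξ'.le, mul_inv, rpow_neg hξ'.le, mul_assoc]

theorem fourierForm_eq_integral_radial (hψ : IsCutoff ψ) (ha : IsEllipticSymbol a c c')
    (hm : 0 < m) {ζ : ℂ} (hζ : ζ.im ≠ 0) (f g : 𝓢(V, ℂ)) :
    fourierForm (fun ξ => ((ψ (a ξ ^ m) ^ 2 : ℝ) : ℂ) * (ζ - (a ξ ^ m : ℝ))⁻¹) f g =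
      ∫ ω : Metric.sphere (0 : V) 1, (a ω)⁻¹ ^ dim •
        (∫ t : ℝ, hψ.radial m (𝓕 f) ((a ω)⁻¹ • (ω : V)) t *
          conj ((hψ.mul_rpow m⁻¹ (dim / m - 1)).radial m (𝓕 g) ((a ω)⁻¹ • (ω : V)) t) *
            (ζ - t)⁻¹) ∂σ := by
  have hψm : Measurable ψ := hψ.contDiff.continuous.measurable
  have ham := ha.measurable
  obtain ⟨K, hK⟩ := hψ.hasCompactSupport.exists_bound_of_continuous hψ.contDiff.continuous
  have hbound : ∀ ξ, ‖((ψ (a ξ ^ m) ^ 2 : ℝ) : ℂ) * (ζ - (a ξ ^ m : ℝ))⁻¹‖ ≤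
      K ^ 2 * |ζ.im|⁻¹ := fun ξ => norm_ofReal_mul_inv_sub_le hζ (by
    rw [abs_pow]
    exact pow_le_pow_left₀ (abs_nonneg _) (hK _) 2) _
  rw [fourierForm, integral_polar_rpow hm (ρ := fun ω => (a ω)⁻¹)
    (fun ω => inv_pos.2 (ha.pos (ne_zero_of_mem_unit_sphere ω)))
    (integrable_mul_fourier_mul_conj (by fun_prop) hbound f g)]
  refine integral_congr_ae (ae_of_all _ fun ω => ?_)
  have hω : (ω : V) ≠ 0 := ne_zero_of_mem_unit_sphere ω
  simp only
  rw [← integral_smul]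
  refine Eq.trans ?_ (setIntegral_eq_integral_of_forall_compl_eq_zero (s := Ioi (0 : ℝ)) ?_)
  · refine setIntegral_congr_fun measurableSet_Ioi fun t (ht : 0 < t) => ?_
    simp only [ha.map_rpow_inv_smul_inv_smul hm.ne' ht hω, IsCutoff.radial_apply, real_smul,
      map_mul, conj_ofReal, ofReal_mul, ofReal_pow]
    ring
  · intro t ht
    have : ψ t = 0 := hψ.eq_zero fun h => ht (lt_of_lt_of_le (by norm_num) h.1 : (0 : ℝ) < t)
    simp [IsCutoff.radial_apply, this]

theorem enorm_fourierForm_le_lintegral_radial (hψ : IsCutoff ψ) (ha : IsEllipticSymbol a c c')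
    (hm : 0 < m) {ζ : ℂ} (hζ : ζ.im ≠ 0) (f g : 𝓢(V, ℂ)) :
    ‖fourierForm (fun ξ => ((ψ (a ξ ^ m) ^ 2 : ℝ) : ℂ) * (ζ - (a ξ ^ m : ℝ))⁻¹) f g‖ₑ ≤
      ENNReal.ofReal (c⁻¹ ^ dim) * ENNReal.ofReal (2 * π) *
        ∫⁻ ω : Metric.sphere (0 : V) 1,
          (∫⁻ y, ‖𝓕 (hψ.radial m (𝓕 f) ((a ω)⁻¹ • (ω : V))) y‖ₑ) *
            (∫⁻ y, ‖𝓕 ((hψ.mul_rpow m⁻¹ (dim / m - 1)).radial m (𝓕 g)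
              ((a ω)⁻¹ • (ω : V))) y‖ₑ) ∂σ := by
  rw [fourierForm_eq_integral_radial hψ ha hm hζ, ← lintegral_const_mul' _ _ (by finiteness)]
  refine (enorm_integral_le_lintegral_enorm _).trans (lintegral_mono fun ω => ?_)
  have hω : 0 < a ω := ha.pos (ne_zero_of_mem_unit_sphere ω)
  simp only
  rw [enorm_smul, mul_assoc, Real.enorm_of_nonneg (by positivity)]
  gcongr
  · exact ha.lower_pos
  · exact ha.lower_le_sphere ω
  · exact enorm_integral_mul_conj_mul_inv_sub_le _ _ hζ

theorem exists_formBound_cutoff (hψ : IsCutoff ψ) (ha : IsEllipticSymbol a c c') (hm : 1 < m)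
    (hmd : m < dim) :
    ∃ C : ℝ≥0∞, C ≠ ⊤ ∧ ∀ ζ : ℂ, ζ.im ≠ 0 → FormBound m C fun ξ =>
      ((ψ (a ξ ^ m) ^ 2 : ℝ) : ℂ) * (ζ - (a ξ ^ m : ℝ))⁻¹ := by
  set φ : ℝ → ℝ := fun t => ψ t * (m⁻¹ * t ^ (dim / m - 1))
  have hφ : IsCutoff φ := hψ.mul_rpow m⁻¹ (dim / m - 1)
  set ρ : Metric.sphere (0 : V) 1 → ℝ := fun ω => (a ω)⁻¹
  have hρ : Measurable ρ := (ha.measurable.comp measurable_subtype_coe).inv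
  have hlow : ∀ ω, c'⁻¹ ≤ ρ ω := fun ω =>
    inv_anti₀ (ha.lower_pos.trans_le (ha.lower_le_sphere ω)) (ha.sphere_le_upper ω)
  have hup : ∀ ω, ρ ω ≤ c⁻¹ := fun ω => inv_anti₀ ha.lower_pos (ha.lower_le_sphere ω)
  have htrace : ∀ {ψ : ℝ → ℝ} (hψ : IsCutoff ψ), ∃ C : ℝ≥0∞, C ≠ ⊤ ∧ ∀ f : 𝓢(V, ℂ),
      ∫⁻ ω, (∫⁻ y, ‖𝓕 (hψ.radial m (𝓕 f) (ρ ω • (ω : V))) y‖ₑ) ^ 2 ∂σ ≤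
        C * weightedEnergy m f := fun hψ =>
    hψ.exists_lintegral_sq_lintegral_enorm_fourier_radial_le hm hmd hρ (inv_pos.2 ha.upper_pos)
      hlow hup
  have hmeas : ∀ {ψ : ℝ → ℝ} (hψ : IsCutoff ψ) (f : 𝓢(V, ℂ)), AEMeasurable (fun ω =>
      ∫⁻ y, ‖𝓕 (hψ.radial m (𝓕 f) (ρ ω • (ω : V))) y‖ₑ) σ := fun hψ f =>
    ((hψ.measurable_fourier_radial m hρ (𝓕 f)).enorm.lintegral_prod_right').aemeasurable
  obtain ⟨C₁, hC₁, htrace₁⟩ := htrace hψ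
  obtain ⟨C₂, hC₂, htrace₂⟩ := htrace hφ
  set K := ENNReal.ofReal (c⁻¹ ^ dim) * ENNReal.ofReal (2 * π)
  have hK : K ≠ ⊤ := by finiteness
  refine ⟨K ^ 2 * (C₁ * C₂), by finiteness, fun ζ hζ f g => ?_⟩
  refine (pow_le_pow_left' (enorm_fourierForm_le_lintegral_radial hψ ha (by linarith) hζ f g)
    2).trans ?_
  calc _ ≤ K ^ 2 * ((C₁ * weightedEnergy m f) * (C₂ * weightedEnergy m g)) := by
        rw [mul_pow]
        gcongr
        exact (sq_lintegral_mul_le (hmeas hψ f) (hmeas hφ g)).trans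
          (mul_le_mul' (htrace₁ f) (htrace₂ g))
    _ = _ := by ring

theorem exists_formBound_inv_sub_of_norm_eq_one (ha : IsEllipticSymbol a c c') (hm : 1 < m)
    (hmd : m < dim) :
    ∃ C : ℝ≥0∞, C ≠ ⊤ ∧ ∀ ζ : ℂ, ζ.im ≠ 0 → ‖ζ‖ = 1 →
      FormBound m C fun ξ => (ζ - (a ξ ^ m : ℝ))⁻¹ := by
  obtain ⟨C₁, hC₁, hfar⟩ := exists_formBound_one_sub_unitBump ha (zero_lt_one.trans hm) hmd
  obtain ⟨C₂, hC₂, hnear⟩ := exists_formBound_cutoff isCutoff_unitBump ha hm hmd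
  refine ⟨2 * C₁ + 2 * C₂, by finiteness, fun ζ hζ hζ1 => ?_⟩
  have hψm : Measurable unitBump := unitBump.continuous.measurable
  have ham := ha.measurable
  have hle : ∀ t, |unitBump t ^ 2| ≤ 1 ∧ |1 - unitBump t ^ 2| ≤ 1 := fun t => by
    obtain ⟨hlow, hup⟩ := unitBump_sq_mem_Icc t
    constructor <;> exact abs_le.2 ⟨by linarith, by linarith⟩
  have hpartition := (hfar ζ hζ1).add (hnear ζ hζ) (by fun_prop) (by fun_prop)
    (fun ξ => norm_ofReal_mul_inv_sub_le hζ (hle (a ξ ^ m)).2 _)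
    (fun ξ => norm_ofReal_mul_inv_sub_le hζ (hle (a ξ ^ m)).1 _)
  simpa only [← add_mul, ← ofReal_add, sub_add_cancel, ofReal_one, one_mul] using hpartition

end SpectralLocalization

section Dilation

open SchwartzMap FourierTransform
open scoped ENNReal ComplexConjugate

variable {V : Type*} [NormedAddCommGroup V] [InnerProductSpace ℝ V] {l m : ℝ}

local notation "dim" => Module.finrank ℝ V

/-- The dilation `x ↦ f (l⁻¹ • x)` of a Schwartz function. -/
def schwartzDilation (hl : l ≠ 0) (f : 𝓢(V, ℂ)) : 𝓢(V, ℂ) :=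
  compCLMOfContinuousLinearEquiv ℝ
    (ContinuousLinearEquiv.smulLeft (Units.mk0 l⁻¹ (inv_ne_zero hl))) f

theorem schwartzDilation_apply (hl : l ≠ 0) (f : 𝓢(V, ℂ)) (x : V) :
    schwartzDilation hl f x = f (l⁻¹ • x) := by
  simp [schwartzDilation, Units.smul_def]

variable [FiniteDimensional ℝ V] [MeasurableSpace V] [BorelSpace V]

theorem fourier_schwartzDilation (hl : 0 < l) (f : 𝓢(V, ℂ)) (ξ : V) :
    𝓕 (schwartzDilation hl.ne' f) ξ = (l ^ dim : ℝ) • 𝓕 f (l • ξ) := by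
  rw [fourier_coe, fourier_coe, Real.fourier_eq', Real.fourier_eq']
  have hsubst := Measure.integral_comp_smul_of_nonneg (volume : Measure V)
    (fun v => Complex.exp (↑(-2 * π * ⟪v, l • ξ⟫) * Complex.I) • f v) l⁻¹ (hR := by positivity)
  rw [inv_pow, inv_inv] at hsubst
  rw [← hsubst]
  refine integral_congr_ae (ae_of_all _ fun v => ?_)
  simp only [schwartzDilation_apply]
  rw [inner_smul_left, inner_smul_right]
  simp [hl.ne']

theorem lintegral_comp_inv_smul (hl : 0 < l) {H : V → ℝ≥0∞} (hH : Measurable H) :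
    ∫⁻ x, H (l⁻¹ • x) = ENNReal.ofReal (l ^ dim) * ∫⁻ x, H x := by
  rw [← lintegral_map (μ := volume) hH (measurable_const_smul l⁻¹),
    Measure.map_addHaar_smul _ (inv_ne_zero hl.ne'), lintegral_smul_measure, smul_eq_mul,
    inv_pow, inv_inv, abs_of_pos (by positivity)]

theorem weightedEnergy_schwartzDilation (hl : 0 < l) (f : 𝓢(V, ℂ)) :
    weightedEnergy m (schwartzDilation hl.ne' f) =
      ENNReal.ofReal (l ^ dim * l ^ m) * weightedEnergy m f := by
  have hf := f.continuous.measurable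
  rw [weightedEnergy, weightedEnergy, ENNReal.ofReal_mul (by positivity), mul_assoc,
    ← lintegral_const_mul _ (by fun_prop), ← lintegral_comp_inv_smul hl (by fun_prop)]
  refine lintegral_congr fun x => ?_
  rw [schwartzDilation_apply, ← mul_assoc, ← ENNReal.ofReal_mul (by positivity), norm_smul,
    ← mul_rpow hl.le (by positivity), Real.norm_of_nonneg (by positivity),
    mul_inv_cancel_left₀ hl.ne']

theorem fourierForm_comp_smul_schwartzDilation (hl : 0 < l) (q : V → ℂ) (f g : 𝓢(V, ℂ)) :
    fourierForm (fun ξ => q (l • ξ)) (schwartzDilation hl.ne' f) (schwartzDilation hl.ne' g) =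
      (l ^ dim : ℝ) • fourierForm q f g := by
  have hsubst := Measure.integral_comp_smul_of_nonneg (volume : Measure V)
    (fun ξ => q ξ * (𝓕 f ξ * conj (𝓕 g ξ))) l (hR := hl.le)
  rw [eq_inv_smul_iff₀ (by positivity)] at hsubst
  rw [fourierForm, fourierForm, ← hsubst, ← integral_smul, ← integral_smul]
  refine integral_congr_ae (ae_of_all _ fun ξ => ?_)
  simp only [fourier_schwartzDilation hl, real_smul, map_mul, conj_ofReal]
  ring

-- Replacing `f`, `g` by their dilations multiplies the form by `l ^ dim` and each energy by
-- `l ^ (dim + m)`; the factor `l ^ m` in front of the symbol restores the balance.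
theorem FormBound.of_comp_smul {C : ℝ≥0∞} {q : V → ℂ} (hl : 0 < l)
    (h : FormBound m C fun ξ => ((l ^ m : ℝ) : ℂ) * q (l • ξ)) : FormBound m C q := fun f g => by
  set K : ℝ := l ^ dim * l ^ m with hK
  have hKpos : 0 < K := by positivity
  have hform : fourierForm (fun ξ => ((l ^ m : ℝ) : ℂ) * q (l • ξ)) (schwartzDilation hl.ne' f)
      (schwartzDilation hl.ne' g) = K • fourierForm q f g := by
    rw [hK, mul_comm, mul_smul, ← fourierForm_comp_smul_schwartzDilation hl, fourierForm,
      fourierForm, real_smul, ← integral_const_mul]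
    simp only [mul_assoc]
  have hdil := h (schwartzDilation hl.ne' f) (schwartzDilation hl.ne' g)
  rw [hform, enorm_smul, Real.enorm_of_nonneg hKpos.le, weightedEnergy_schwartzDilation hl,
    weightedEnergy_schwartzDilation hl] at hdil
  refine (ENNReal.mul_le_mul_iff_right (a := ENNReal.ofReal K ^ 2) ?_ (by finiteness)).1 ?_
  · simpa using hKpos
  · calc ENNReal.ofReal K ^ 2 * ‖fourierForm q f g‖ₑ ^ 2
        = (ENNReal.ofReal K * ‖fourierForm q f g‖ₑ) ^ 2 := by ring
      _ ≤ C * (ENNReal.ofReal K * weightedEnergy m f * (ENNReal.ofReal K * weightedEnergy m g)) :=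
          hdil
      _ = _ := by ring

theorem exists_formBound_inv_sub [Nontrivial V] {a : V → ℝ} {c c' : ℝ}
    (ha : IsEllipticSymbol a c c') (hm : 1 < m) (hmd : m < dim) :
    ∃ C : ℝ≥0∞, C ≠ ⊤ ∧ ∀ ζ : ℂ, ζ.im ≠ 0 → FormBound m C fun ξ => (ζ - (a ξ ^ m : ℝ))⁻¹ := by
  obtain ⟨C, hC, hunit⟩ := exists_formBound_inv_sub_of_norm_eq_one ha hm hmd
  refine ⟨C, hC, fun ζ hζ => ?_⟩
  have hζ0 : 0 < ‖ζ‖ := norm_pos_iff.2 fun h => hζ (by simp [h])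
  have hlm : (‖ζ‖ ^ m⁻¹) ^ m = ‖ζ‖ := rpow_inv_rpow hζ0.le (by linarith)
  refine .of_comp_smul (l := ‖ζ‖ ^ m⁻¹) (by positivity) ?_
  have him : (ζ / ‖ζ‖).im ≠ 0 := by
    rw [Complex.div_ofReal_im]
    exact div_ne_zero hζ hζ0.ne'
  have hnorm : ‖ζ / ‖ζ‖‖ = 1 := by
    rw [norm_div, Complex.norm_real, norm_norm, div_self hζ0.ne']
  convert hunit (ζ / ‖ζ‖) him hnorm using 2 with ξ
  have hne : (‖ζ‖ : ℂ) ≠ 0 := ofReal_ne_zero.2 hζ0.ne'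
  rw [ha.map_smul _ (by positivity), mul_rpow (by positivity) (ha.nonneg ξ), hlm, ofReal_mul,
    div_sub' hne, inv_div, div_eq_mul_inv]

end Dilation

section EuclideanFourierTransform

open SchwartzMap FourierTransform
open scoped ENNReal ComplexConjugate

variable {n : ℕ}

local notation "E" => EuclideanSpace ℝ (Fin n)

theorem FT_eq_fourier (f : 𝓢(E, ℂ)) (ξ : E) :
    FT n f ξ = ((2 * π) ^ (-(n : ℝ) / 2) : ℝ) • 𝓕 f ((2 * π)⁻¹ • ξ) := by
  rw [FT, fourier_coe, Real.fourier_eq']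
  congr 1
  refine integral_congr_ae (ae_of_all _ fun x => ?_)
  have hphase : -2 * π * ((2 * π)⁻¹ * ⟪x, ξ⟫) = -⟪x, ξ⟫ := by field_simp
  simp only [inner_smul_right, smul_eq_mul, hphase]
  congr 2
  push_cast
  ring

theorem conj_FT (g : E → ℂ) (ξ : E) :
    conj (FT n g ξ) = ((2 * π) ^ (-(n : ℝ) / 2) : ℝ) •
      ∫ x, Complex.exp (Complex.I * ((⟪x, ξ⟫ : ℝ) : ℂ)) * conj (g x) := by
  rw [FT, real_smul, map_mul, conj_ofReal, ← integral_conj, real_smul]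
  congr 2 with x
  rw [map_mul, ← Complex.exp_conj]
  simp

theorem integrable_FT (f : 𝓢(E, ℂ)) : Integrable (FT n f) := by
  rw [funext (FT_eq_fourier f)]
  exact Integrable.fun_smul _ ((𝓕 f).integrable.comp_smul (R := (2 * π)⁻¹) (by positivity))

theorem integral_mult_mul_conj {q : E → ℂ} (hq : Measurable q) {B : ℝ} (hB : ∀ ξ, ‖q ξ‖ ≤ B)
    (f g : 𝓢(E, ℂ)) :
    ∫ x, mult n q f x * conj (g x) = ∫ ξ, q ξ * (FT n f ξ * conj (FT n g ξ)) := by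
  set c : ℝ := (2 * π) ^ (-(n : ℝ) / 2)
  have hF : Integrable fun ξ => q ξ * FT n f ξ :=
    (integrable_FT f).bdd_mul hq.aestronglyMeasurable (ae_of_all _ hB)
  have hInt : Integrable (Function.uncurry fun x ξ : E =>
      Complex.exp (Complex.I * ((⟪x, ξ⟫ : ℝ) : ℂ)) * (conj (g x) * (q ξ * FT n f ξ)))
      (volume.prod volume) := by
    refine ((integrable_conj g).mul_prod hF).bdd_mul (c := 1)
      (Continuous.aestronglyMeasurable (by fun_prop)) (ae_of_all _ fun p => ?_)
    rw [mul_comm, Complex.norm_exp_ofReal_mul_I]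
  calc ∫ x, mult n q f x * conj (g x)
      = ∫ x, ∫ ξ, c • (Complex.exp (Complex.I * ((⟪x, ξ⟫ : ℝ) : ℂ)) *
          (conj (g x) * (q ξ * FT n f ξ))) := by
        refine integral_congr_ae (ae_of_all _ fun x => ?_)
        simp only [mult, IFT]
        rw [integral_smul, smul_mul_assoc, ← integral_mul_const]
        congr 2 with ξ
        ring
    _ = ∫ ξ, ∫ x, c • (Complex.exp (Complex.I * ((⟪x, ξ⟫ : ℝ) : ℂ)) *
          (conj (g x) * (q ξ * FT n f ξ))) := integral_integral_swap (hInt.smul c)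
    _ = _ := by
        refine integral_congr_ae (ae_of_all _ fun ξ => ?_)
        simp only [conj_FT]
        rw [integral_smul, ← mul_assoc, mul_smul_comm, ← integral_const_mul]
        congr 2 with x
        ring

theorem integral_mul_FT_mul_conj_FT (q : E → ℂ) (f g : 𝓢(E, ℂ)) :
    ∫ ξ, q ξ * (FT n f ξ * conj (FT n g ξ)) = fourierForm (fun ξ => q ((2 * π) • ξ)) f g := by
  have hpi : (0 : ℝ) < 2 * π := two_pi_pos
  have hsubst := Measure.integral_comp_smul_of_nonneg (volume : Measure E)
    (fun ξ => q ((2 * π) • ξ) * (𝓕 f ξ * conj (𝓕 g ξ))) (2 * π)⁻¹ (hR := by positivity)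
  rw [inv_pow, inv_inv, finrank_euclideanSpace_fin, ← inv_smul_eq_iff₀ (by positivity)] at hsubst
  have hconst : ((2 * π) ^ (-(n : ℝ) / 2) : ℝ) * ((2 * π) ^ (-(n : ℝ) / 2) : ℝ) =
      ((2 * π) ^ n)⁻¹ := by
    rw [← rpow_add hpi, neg_div, ← neg_add, add_halves, rpow_neg hpi.le, rpow_natCast]
  rw [fourierForm, ← hsubst, ← integral_smul]
  refine integral_congr_ae (ae_of_all _ fun ξ => ?_)
  simp only [FT_eq_fourier, smul_inv_smul₀ hpi.ne', ← hconst, real_smul, map_mul, conj_ofReal,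
    ofReal_mul]
  ring

end EuclideanFourierTransform

section WeightedNorms

open SchwartzMap
open scoped ENNReal

variable {V : Type*} [NormedAddCommGroup V] [InnerProductSpace ℝ V] [FiniteDimensional ℝ V]
  [MeasurableSpace V] [BorelSpace V]

theorem weightedEnergy_eq_eLpNorm_sq (m : ℝ) (f : V → ℂ) :
    weightedEnergy m f = eLpNorm (fun x => ((‖x‖ ^ (m / 2) : ℝ) : ℂ) * f x) 2 volume ^ 2 := by
  have hsq := eLpNorm_nnreal_pow_eq_lintegral (μ := volume) (p := 2)
    (f := fun x : V => ((‖x‖ ^ (m / 2) : ℝ) : ℂ) * f x) two_ne_zero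
  simp only [ENNReal.coe_ofNat, NNReal.coe_ofNat, ENNReal.rpow_ofNat, enorm_mul] at hsq
  rw [hsq, weightedEnergy]
  refine lintegral_congr fun x => ?_
  rw [mul_pow, ← ofReal_norm ((‖x‖ ^ (m / 2) : ℝ) : ℂ), Complex.norm_real,
    Real.norm_of_nonneg (by positivity), ← ENNReal.ofReal_pow (by positivity),
    ← rpow_mul_natCast (norm_nonneg x), Nat.cast_ofNat, div_mul_cancel₀ _ two_ne_zero]

theorem eLpNorm_sqrt_one_add_norm_sq_rpow_mul_ne_top (s : ℝ) (f : 𝓢(V, ℂ)) :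
    eLpNorm (fun x => ((√(1 + ‖x‖ ^ 2) ^ s : ℝ) : ℂ) * f x) 2 volume ≠ ⊤ := by
  have hw := Function.hasTemperateGrowth_one_add_norm_sq_rpow V (s / 2)
  convert ((smulLeftCLM ℂ (fun x : V => (1 + ‖x‖ ^ 2) ^ (s / 2)) f).memLp 2 volume).eLpNorm_ne_top
    using 2
  ext x
  rw [smulLeftCLM_apply_apply hw, real_smul, sqrt_eq_rpow, ← rpow_mul (by positivity),
    one_div_mul_eq_div]

theorem eLpNorm_norm_rpow_mul_le {s : ℝ} (hs : 0 ≤ s) (f : V → ℂ) :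
    eLpNorm (fun x => ((‖x‖ ^ s : ℝ) : ℂ) * f x) 2 volume ≤
      eLpNorm (fun x => ((√(1 + ‖x‖ ^ 2) ^ s : ℝ) : ℂ) * f x) 2 volume := by
  refine eLpNorm_mono fun x => ?_
  rw [norm_mul, norm_mul, Complex.norm_real, Complex.norm_real,
    Real.norm_of_nonneg (by positivity), Real.norm_of_nonneg (by positivity)]
  gcongr
  exact Real.le_sqrt_of_sq_le (by linarith)

theorem toReal_eLpNorm_norm_rpow_mul_le {s : ℝ} (hs : 0 ≤ s) (f : 𝓢(V, ℂ)) :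
    (eLpNorm (fun x => ((‖x‖ ^ s : ℝ) : ℂ) * f x) 2 volume).toReal ≤
      (eLpNorm (fun x => ((√(1 + ‖x‖ ^ 2) ^ s : ℝ) : ℂ) * f x) 2 volume).toReal :=
  ENNReal.toReal_mono (eLpNorm_sqrt_one_add_norm_sq_rpow_mul_ne_top s f)
    (eLpNorm_norm_rpow_mul_le hs f)

theorem FormBound.norm_fourierForm_le {m : ℝ} (hm : 0 ≤ m) {C : ℝ≥0∞} (hC : C ≠ ⊤) {q : V → ℂ}
    (hq : FormBound m C q) (f g : 𝓢(V, ℂ)) :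
    ‖fourierForm q f g‖ ≤ √C.toReal *
      (eLpNorm (fun x => ((‖x‖ ^ (m / 2) : ℝ) : ℂ) * f x) 2 volume).toReal *
      (eLpNorm (fun x => ((‖x‖ ^ (m / 2) : ℝ) : ℂ) * g x) 2 volume).toReal := by
  have hfin : ∀ h : 𝓢(V, ℂ), eLpNorm (fun x => ((‖x‖ ^ (m / 2) : ℝ) : ℂ) * h x) 2 volume ≠ ⊤ :=
    fun h => ne_top_of_le_ne_top (eLpNorm_sqrt_one_add_norm_sq_rpow_mul_ne_top (m / 2) h)
      (eLpNorm_norm_rpow_mul_le (by positivity) h)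
  have hsq := hq f g
  rw [weightedEnergy_eq_eLpNorm_sq, weightedEnergy_eq_eLpNorm_sq] at hsq
  have hf := hfin f
  have hg := hfin g
  have hreal := ENNReal.toReal_mono (by finiteness) hsq
  simp only [ENNReal.toReal_mul, ENNReal.toReal_pow, toReal_enorm] at hreal
  refine (sq_le_sq₀ (norm_nonneg _) (by positivity)).1 (hreal.trans_eq ?_)
  rw [mul_pow, mul_pow, Real.sq_sqrt ENNReal.toReal_nonneg, mul_assoc]

end WeightedNorms

theorem resolvent_low_frequency_general {n : ℕ} {m : ℝ} (hm : 1 < m) (hmn : m < n)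
    {a : EuclideanSpace ℝ (Fin n) → ℝ} {c c' : ℝ} (ha : IsEllipticSymbol a c c') :
    ∃ C > 0, ∀ ζ : ℂ, ζ.im ≠ 0 → ∀ f g : SchwartzMap (EuclideanSpace ℝ (Fin n)) ℂ,
      ‖∫ x, mult n (fun ξ => (ζ - ((a ξ ^ m : ℝ) : ℂ))⁻¹) (fun y => f y) x *
          (starRingEnd ℂ) (g x)‖ ≤
        C * (eLpNorm (fun x => ((‖x‖ ^ (m / 2) : ℝ) : ℂ) * f x) 2 volume).toReal *
          (eLpNorm (fun x => ((‖x‖ ^ (m / 2) : ℝ) : ℂ) * g x) 2 volume).toReal := by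
  rw [← finrank_euclideanSpace_fin (𝕜 := ℝ) (n := n)] at hmn
  have : Nontrivial (EuclideanSpace ℝ (Fin n)) := Module.nontrivial_of_finrank_pos (R := ℝ)
    (by exact_mod_cast (zero_lt_one.trans hm).trans hmn)
  obtain ⟨C, hC, hbound⟩ := exists_formBound_inv_sub (ha.comp_smul two_pi_pos) hm hmn
  refine ⟨√C.toReal + 1, by positivity, fun ζ hζ f g => ?_⟩
  have ham := ha.measurable
  have hresolvent : ∀ ξ, ‖(ζ - ((a ξ ^ m : ℝ) : ℂ))⁻¹‖ ≤ 1 * |ζ.im|⁻¹ := fun ξ => by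
    simpa using norm_ofReal_mul_inv_sub_le hζ (abs_one (α := ℝ)).le (a ξ ^ m)
  rw [integral_mult_mul_conj (by fun_prop) hresolvent, integral_mul_FT_mul_conj_FT]
  refine ((hbound ζ hζ).norm_fourierForm_le (by linarith) hC f g).trans ?_
  gcongr
  linarith

theorem resolvent_low_frequency (n : ℕ) (hn : 2 ≤ n) (m : ℝ) (hm1 : 1 < m)
    (hmn : m < n)
    (a : EuclideanSpace ℝ (Fin n) → ℝ)
    (ha_cont : Continuous a)
    (ha_smooth : ContDiffOn ℝ (⊤ : ℕ∞) a {(0 : EuclideanSpace ℝ (Fin n))}ᶜ)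
    (ha_hom : ∀ t : ℝ, 0 < t → ∀ ξ, a (t • ξ) = t * a ξ)
    (ha_pos : ∀ ξ : EuclideanSpace ℝ (Fin n), ξ ≠ 0 → 0 < a ξ) :
    ∃ C > 0, ∀ ζ : ℂ, ζ.im ≠ 0 → ∀ f g : SchwartzMap (EuclideanSpace ℝ (Fin n)) ℂ,
      ‖∫ x : EuclideanSpace ℝ (Fin n),
          mult n (fun ξ => (ζ - ((a ξ ^ m : ℝ) : ℂ))⁻¹) (fun y => f y) x *
            (starRingEnd ℂ) (g x)‖
        ≤ C * (eLpNorm (fun x => ((Real.sqrt (1 + ‖x‖ ^ 2) ^ (m / 2) : ℝ) : ℂ) * f x) 2 volume).toReal *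
            (eLpNorm (fun x => ((Real.sqrt (1 + ‖x‖ ^ 2) ^ (m / 2) : ℝ) : ℂ) * g x) 2 volume).toReal := by
  obtain ⟨c, c', ha⟩ := exists_isEllipticSymbol ha_cont ha_hom ha_pos
  obtain ⟨C, hC, hbound⟩ := resolvent_low_frequency_general hm1 hmn ha
  refine ⟨C, hC, fun ζ hζ f g => (hbound ζ hζ f g).trans ?_⟩
  gcongr C * ?_ * ?_ <;> exact toReal_eLpNorm_norm_rpow_mul_le (by linarith) _
end
end

section
/- Let n ≥ 2, 1 < m < n, and let θ satisfy 0 < θ < min{1/2, (m−1)/2}. There exists a constant C > 0 such that for every Schwartz function f on ℝⁿ, ‖ ⟨x⟩^{1/2+θ} |D_x|^{−(m−1)/2+θ} f ‖_{L²(ℝⁿ)} ≤ C ‖ ⟨x⟩^{m/2} f ‖_{L²(ℝⁿ)}. -/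
open MeasureTheory Real Complex RealInnerProductSpace

noncomputable section

/-!
Writing `|ξ| ^ (-s)` as a superposition of the heat symbols `exp (-t |ξ|²)` over `t > 0` exhibits
`|D| ^ (-s) f` as a superposition of Gaussian averages of `f`. These have positive kernels, so
`|D| ^ (-s) f` is dominated pointwise by the Riesz potential of `|f|`, and the weighted estimate
becomes an instance of the Stein–Weiss inequality. The latter follows from Schur's test with power
weights, because the Riesz potential of `⟨y⟩ ^ (-a)` is at most a multiple of `⟨x⟩ ^ (s - a)` for
`s < a < n`.
-/

open Module Metric
open scoped ENNReal NNReal Pointwise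

section Schur

variable {X Y : Type*} [MeasurableSpace X] [MeasurableSpace Y] {μ : Measure X} {ν : Measure Y}

theorem sq_lintegral_le_lintegral_mul_lintegral {f g h : Y → ℝ≥0∞} (hg : AEMeasurable g ν)
    (hh : AEMeasurable h ν) (hfgh : ∀ᵐ y ∂ν, f y ^ 2 ≤ g y * h y) :
    (∫⁻ y, f y ∂ν) ^ 2 ≤ (∫⁻ y, g y ∂ν) * ∫⁻ y, h y ∂ν := by
  have sqrt_sq (z : ℝ≥0∞) : (z ^ (1 / 2 : ℝ)) ^ 2 = z := by
    rw [← ENNReal.rpow_mul_natCast]; norm_num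
  have sqrt_rpow_two (z : ℝ≥0∞) : (z ^ (1 / 2 : ℝ)) ^ (2 : ℝ) = z := by
    rw [← ENNReal.rpow_mul]; norm_num
  have hf : ∀ᵐ y ∂ν, f y ≤ g y ^ (1 / 2 : ℝ) * h y ^ (1 / 2 : ℝ) := by
    filter_upwards [hfgh] with y hy
    rwa [← ENNReal.pow_le_pow_left_iff two_ne_zero, mul_pow, sqrt_sq, sqrt_sq]
  have hölder := ENNReal.lintegral_mul_le_Lp_mul_Lq ν HolderConjugate.two_two
    (hg.pow_const (1 / 2 : ℝ)) (hh.pow_const (1 / 2 : ℝ))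
  simp only [Pi.mul_apply, sqrt_rpow_two] at hölder
  calc (∫⁻ y, f y ∂ν) ^ 2
      ≤ ((∫⁻ y, g y ∂ν) ^ (1 / 2 : ℝ) * (∫⁻ y, h y ∂ν) ^ (1 / 2 : ℝ)) ^ 2 := by
        gcongr
        exact (lintegral_mono_ae hf).trans hölder
    _ = (∫⁻ y, g y ∂ν) * ∫⁻ y, h y ∂ν := by rw [mul_pow, sqrt_sq, sqrt_sq]

theorem lintegral_mul_sq_lintegral_le_of_schur [SFinite μ] [SFinite ν] {k : X → Y → ℝ≥0∞}
    {w a : X → ℝ≥0∞} {p b F : Y → ℝ≥0∞} (hk : Measurable (Function.uncurry k))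
    (hw : Measurable w) (ha : Measurable a) (hp : Measurable p) (hF : AEMeasurable F ν)
    (hp_zero : ∀ y, p y ≠ 0) (hp_top : ∀ y, p y ≠ ∞)
    (hrow : ∀ᵐ x ∂μ, ∫⁻ y, k x y * p y ∂ν ≤ a x)
    (hcol : ∀ᵐ y ∂ν, ∫⁻ x, k x y * (w x * a x) ∂μ ≤ b y) :
    ∫⁻ x, w x * (∫⁻ y, k x y * F y ∂ν) ^ 2 ∂μ ≤ ∫⁻ y, b y * ((p y)⁻¹ * F y ^ 2) ∂ν := by
  have hG : AEMeasurable (fun y => (p y)⁻¹ * F y ^ 2) ν := by fun_prop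
  have hkG (x : X) : AEMeasurable (fun y => k x y * ((p y)⁻¹ * F y ^ 2)) ν := by fun_prop
  have hkF (x : X) : (∫⁻ y, k x y * F y ∂ν) ^ 2
      ≤ (∫⁻ y, k x y * p y ∂ν) * ∫⁻ y, k x y * ((p y)⁻¹ * F y ^ 2) ∂ν := by
    refine sq_lintegral_le_lintegral_mul_lintegral (by fun_prop) (hkG x) (.of_forall fun y => ?_)
    calc (k x y * F y) ^ 2 = p y * (p y)⁻¹ * (k x y * F y) ^ 2 := by
          rw [ENNReal.mul_inv_cancel (hp_zero y) (hp_top y), one_mul]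
      _ ≤ k x y * p y * (k x y * ((p y)⁻¹ * F y ^ 2)) := le_of_eq (by ring)
  calc ∫⁻ x, w x * (∫⁻ y, k x y * F y ∂ν) ^ 2 ∂μ
      ≤ ∫⁻ x, w x * (a x * ∫⁻ y, k x y * ((p y)⁻¹ * F y ^ 2) ∂ν) ∂μ := by
        refine lintegral_mono_ae ?_
        filter_upwards [hrow] with x hx
        gcongr
        exact (hkF x).trans (by gcongr)
    _ = ∫⁻ x, ∫⁻ y, w x * a x * (k x y * ((p y)⁻¹ * F y ^ 2)) ∂ν ∂μ := by
        refine lintegral_congr fun x => ?_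
        rw [lintegral_const_mul'' _ (hkG x), mul_assoc]
    _ = ∫⁻ y, ∫⁻ x, w x * a x * (k x y * ((p y)⁻¹ * F y ^ 2)) ∂μ ∂ν := by
        refine lintegral_lintegral_swap ?_
        have := hG.comp_snd (μ := μ)
        fun_prop
    _ = ∫⁻ y, (∫⁻ x, k x y * (w x * a x) ∂μ) * ((p y)⁻¹ * F y ^ 2) ∂ν := by
        refine lintegral_congr fun y => ?_
        rw [← lintegral_mul_const _ (by fun_prop)]
        exact lintegral_congr fun x => by ring
    _ ≤ ∫⁻ y, b y * ((p y)⁻¹ * F y ^ 2) ∂ν := by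
        refine lintegral_mono_ae ?_
        filter_upwards [hcol] with y hy
        gcongr

end Schur

section JapaneseBracket

variable {E : Type*} [SeminormedAddCommGroup E]

/-- The Japanese bracket `⟨x⟩ = √(1 + |x|²)`. -/
def japaneseBracket (x : E) : ℝ :=
  √(1 + ‖x‖ ^ 2)

theorem one_le_japaneseBracket (x : E) : 1 ≤ japaneseBracket x :=
  Real.one_le_sqrt.2 (by nlinarith [sq_nonneg ‖x‖])

theorem japaneseBracket_pos (x : E) : 0 < japaneseBracket x :=
  zero_lt_one.trans_le (one_le_japaneseBracket x)

theorem norm_le_japaneseBracket (x : E) : ‖x‖ ≤ japaneseBracket x :=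
  Real.le_sqrt_of_sq_le (by linarith)

theorem japaneseBracket_le_add_norm_sub (x y : E) :
    japaneseBracket x ≤ japaneseBracket y + ‖x - y‖ := by
  have hy := norm_le_japaneseBracket y
  have hxy : ‖x‖ ≤ ‖y‖ + ‖x - y‖ := by simpa using norm_add_le y (x - y)
  have hsq : japaneseBracket y ^ 2 = 1 + ‖y‖ ^ 2 := Real.sq_sqrt (by positivity)
  have := (japaneseBracket_pos y).le
  refine Real.sqrt_le_iff.2 ⟨by positivity, ?_⟩
  nlinarith [norm_nonneg x, norm_nonneg y, norm_nonneg (x - y)]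

/-- The power weight `⟨x⟩ ^ p`, valued in `ℝ≥0∞` for use in Lebesgue integrals. -/
def bracketWeight (p : ℝ) (x : E) : ℝ≥0∞ :=
  ENNReal.ofReal (japaneseBracket x ^ p)

theorem bracketWeight_add (p q : ℝ) (x : E) :
    bracketWeight (p + q) x = bracketWeight p x * bracketWeight q x := by
  have hx := japaneseBracket_pos x
  rw [bracketWeight, rpow_add hx, ENNReal.ofReal_mul (by positivity), bracketWeight, bracketWeight]

theorem bracketWeight_ne_zero (p : ℝ) (x : E) : bracketWeight p x ≠ 0 :=
  (ENNReal.ofReal_pos.2 (rpow_pos_of_pos (japaneseBracket_pos x) p)).ne'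

theorem bracketWeight_ne_top (p : ℝ) (x : E) : bracketWeight p x ≠ ∞ :=
  ENNReal.ofReal_ne_top

theorem inv_bracketWeight (p : ℝ) (x : E) : (bracketWeight p x)⁻¹ = bracketWeight (-p) x := by
  have hx := japaneseBracket_pos x
  rw [bracketWeight, ← ENNReal.ofReal_inv_of_pos (by positivity), ← rpow_neg hx.le, bracketWeight]

@[fun_prop]
theorem measurable_bracketWeight [MeasurableSpace E] [OpensMeasurableSpace E] (p : ℝ) :
    Measurable (bracketWeight p : E → ℝ≥0∞) := by
  unfold bracketWeight japaneseBracket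
  fun_prop

theorem sq_eLpNorm_two_japaneseBracket_rpow_mul [MeasurableSpace E] (μ : Measure E) (p : ℝ)
    (g : E → ℂ) :
    eLpNorm (fun x => ((japaneseBracket x ^ p : ℝ) : ℂ) * g x) 2 μ ^ 2
      = ∫⁻ x, bracketWeight (2 * p) x * ‖g x‖ₑ ^ 2 ∂μ := by
  have h := eLpNorm_nnreal_pow_eq_lintegral (μ := μ) (p := 2)
    (f := fun x => ((japaneseBracket x ^ p : ℝ) : ℂ) * g x) two_ne_zero
  simp only [NNReal.coe_ofNat, ENNReal.coe_ofNat, ENNReal.rpow_ofNat] at h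
  rw [h]
  refine lintegral_congr fun x => ?_
  have hx := japaneseBracket_pos x
  rw [two_mul, bracketWeight_add, ← sq, enorm_mul, mul_pow, ← ofReal_norm, Complex.norm_real,
    Real.norm_of_nonneg (by positivity), bracketWeight]

end JapaneseBracket

section RieszPotential

variable {E : Type*} [NormedAddCommGroup E] [NormedSpace ℝ E] [FiniteDimensional ℝ E]
  [MeasurableSpace E] [BorelSpace E] (μ : Measure E) [μ.IsAddHaarMeasure]

theorem setLIntegral_smul_of_homogeneous {g : E → ℝ≥0∞} {p R : ℝ} (hR : 0 < R)
    (hg : ∀ z, g (R • z) = ENNReal.ofReal (R ^ p) * g z) (S : Set E) :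
    ∫⁻ z in R • S, g z ∂μ = (∫⁻ z in S, g z ∂μ) * ENNReal.ofReal (R ^ (finrank ℝ E + p)) := by
  have hemb : MeasurableEmbedding (R • · : E → E) := measurableEmbedding_const_smul₀ hR.ne'
  have hmap : μ = ENNReal.ofReal (R ^ finrank ℝ E) • μ.map (R • ·) := by
    rw [Measure.map_addHaar_smul μ hR.ne', smul_smul, ← ENNReal.ofReal_mul (by positivity),
      abs_of_pos (by positivity), mul_inv_cancel₀ (by positivity), ENNReal.ofReal_one, one_smul]
  have hpre : (R • ·) ⁻¹' (R • S) = S := by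
    rw [Set.preimage_smul₀ hR.ne', inv_smul_smul₀ hR.ne']
  calc ∫⁻ z in R • S, g z ∂μ
      = ENNReal.ofReal (R ^ finrank ℝ E) * ∫⁻ z in S, g (R • z) ∂μ := by
        conv_lhs => rw [hmap]
        rw [Measure.restrict_smul, lintegral_smul_measure, hemb.restrict_map, hemb.lintegral_map,
          hpre, smul_eq_mul]
    _ = (∫⁻ z in S, g z ∂μ) * ENNReal.ofReal (R ^ (finrank ℝ E + p)) := by
        simp_rw [hg]
        rw [lintegral_const_mul' _ _ ENNReal.ofReal_ne_top, ← mul_assoc, mul_comm,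
          ← ENNReal.ofReal_mul (by positivity), rpow_add hR, rpow_natCast]

theorem setLIntegral_smul_norm_rpow (p : ℝ) {R : ℝ} (hR : 0 < R) (S : Set E) :
    ∫⁻ z in R • S, ENNReal.ofReal (‖z‖ ^ p) ∂μ
      = (∫⁻ z in S, ENNReal.ofReal (‖z‖ ^ p) ∂μ) * ENNReal.ofReal (R ^ (finrank ℝ E + p)) := by
  refine setLIntegral_smul_of_homogeneous μ hR (fun z => ?_) S
  rw [norm_smul, Real.norm_of_nonneg hR.le, mul_rpow hR.le (norm_nonneg _),
    ENNReal.ofReal_mul (by positivity)]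

theorem exists_setLIntegral_ball_norm_rpow_eq [Nontrivial E] {p : ℝ}
    (hp : -(finrank ℝ E : ℝ) < p) :
    ∃ C : ℝ≥0, ∀ R > 0, ∫⁻ z in ball (0 : E) R, ENNReal.ofReal (‖z‖ ^ p) ∂μ
      = C * ENNReal.ofReal (R ^ (finrank ℝ E + p)) := by
  have hint : IntegrableOn (fun z : E => ‖z‖ ^ p) (ball 0 1) μ :=
    integrableOn_ball_of_norm_le_rpow (C := 1) (α := -p) finrank_pos (by linarith)
      (.of_forall fun z => by simp [abs_of_nonneg (rpow_nonneg (norm_nonneg z) p)])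
      (Measurable.aestronglyMeasurable (by fun_prop))
  refine ⟨(∫⁻ z in ball (0 : E) 1, ENNReal.ofReal (‖z‖ ^ p) ∂μ).toNNReal, fun R hR => ?_⟩
  rw [ENNReal.coe_toNNReal hint.lintegral_lt_top.ne, ← setLIntegral_smul_norm_rpow μ p hR,
    smul_unitBall_of_pos hR]

theorem integrableOn_compl_ball_norm_rpow {p : ℝ} (hp : p < -(finrank ℝ E : ℝ)) :
    IntegrableOn (fun z : E => ‖z‖ ^ p) (ball 0 1)ᶜ μ := by
  have : 0 ≤ (finrank ℝ E : ℝ) := by positivity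
  have hint : Integrable (fun z : E => 2 ^ (-p) * (1 + ‖z‖) ^ (-(-p))) μ :=
    (integrable_one_add_norm (by linarith)).const_mul _
  refine hint.integrableOn.mono' (Measurable.aestronglyMeasurable (by fun_prop)) ?_
  filter_upwards [ae_restrict_mem measurableSet_ball.compl] with z hz
  have hz : 1 ≤ ‖z‖ := by simpa using hz
  rw [Real.norm_of_nonneg (by positivity), neg_neg, rpow_neg zero_le_two, inv_mul_eq_div,
    ← div_rpow (by positivity) zero_le_two]
  exact rpow_le_rpow_of_nonpos (by positivity) (by linarith) (by linarith)

theorem exists_setLIntegral_compl_ball_norm_rpow_eq {p : ℝ} (hp : p < -(finrank ℝ E : ℝ)) :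
    ∃ C : ℝ≥0, ∀ R > 0, ∫⁻ z in (ball (0 : E) R)ᶜ, ENNReal.ofReal (‖z‖ ^ p) ∂μ
      = C * ENNReal.ofReal (R ^ (finrank ℝ E + p)) := by
  have hint := integrableOn_compl_ball_norm_rpow μ hp
  refine ⟨(∫⁻ z in (ball (0 : E) 1)ᶜ, ENNReal.ofReal (‖z‖ ^ p) ∂μ).toNNReal, fun R hR => ?_⟩
  have hball : R • (ball (0 : E) 1)ᶜ = (ball 0 R)ᶜ :=
    (Set.image_compl_eq (MulAction.bijective₀ hR.ne')).trans
      (congrArg compl (smul_unitBall_of_pos hR))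
  rw [ENNReal.coe_toNNReal hint.lintegral_lt_top.ne, ← setLIntegral_smul_norm_rpow μ p hR, hball]

/-- The Riesz potential `∫ |x - y| ^ (s - d) F(y) dy` of order `s` of a nonnegative function on a
`d`-dimensional space, without the usual normalising constant. For `s < d` the kernel takes the
junk value `0` on the diagonal, which is a null set when `d > 0`. -/
def rieszPotential (s : ℝ) (F : E → ℝ≥0∞) (x : E) : ℝ≥0∞ :=
  ∫⁻ y, ENNReal.ofReal (‖x - y‖ ^ (s - finrank ℝ E)) * F y ∂μ

/-! The Riesz potential of `⟨y⟩ ^ (-a)` at `x` is split according to whether `y` is near `x`, in the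
rest of the ball `|y| < ⟨x⟩`, or in the rest of its complement; by scaling, each region contributes
a multiple of `⟨x⟩ ^ (s - a)`. -/

theorem exists_setLIntegral_ball_riesz_mul_bracketWeight_le [Nontrivial E] {s a : ℝ} (hs : 0 < s)
    (ha : 0 ≤ a) :
    ∃ C : ℝ≥0, ∀ x : E, ∫⁻ y in ball x (japaneseBracket x / 2),
        ENNReal.ofReal (‖x - y‖ ^ (s - finrank ℝ E)) * bracketWeight (-a) y ∂μ
      ≤ C * bracketWeight (s - a) x := by
  obtain ⟨C, hC⟩ := exists_setLIntegral_ball_norm_rpow_eq μ (p := s - finrank ℝ E) (by linarith)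
  refine ⟨C * Real.toNNReal ((1 / 2) ^ (s - a)), fun x => ?_⟩
  set R := japaneseBracket x
  have hR_pos : 0 < R := japaneseBracket_pos x
  have hmp : MeasurePreserving (fun y => x - y) μ μ := by
    have := FiniteDimensional.proper_real E
    exact Measure.measurePreserving_sub_left μ x
  have hpre : (fun y => x - y) ⁻¹' ball 0 (R / 2) = ball x (R / 2) := by
    ext y
    simp [dist_eq_norm, norm_sub_rev]
  have hweight : ∀ y ∈ ball x (R / 2), bracketWeight (-a) y ≤ ENNReal.ofReal ((R / 2) ^ (-a)) := by
    intro y hy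
    have hxy : ‖x - y‖ < R / 2 := by simpa [dist_eq_norm, norm_sub_rev] using hy
    have := japaneseBracket_le_add_norm_sub x y
    exact ENNReal.ofReal_le_ofReal
      (rpow_le_rpow_of_nonpos (by positivity) (by linarith) (by linarith))
  have hscale : (R / 2) ^ (finrank ℝ E + (s - finrank ℝ E)) * (R / 2) ^ (-a)
      = (1 / 2) ^ (s - a) * R ^ (s - a) := by
    rw [← rpow_add (by positivity), ← mul_rpow (by positivity) hR_pos.le]
    ring_nf
  calc ∫⁻ y in ball x (R / 2),
        ENNReal.ofReal (‖x - y‖ ^ (s - finrank ℝ E)) * bracketWeight (-a) y ∂μ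
      ≤ ∫⁻ y in ball x (R / 2),
          ENNReal.ofReal (‖x - y‖ ^ (s - finrank ℝ E)) * ENNReal.ofReal ((R / 2) ^ (-a)) ∂μ :=
        setLIntegral_mono' measurableSet_ball fun y hy => by gcongr; exact hweight y hy
    _ = (∫⁻ z in ball (0 : E) (R / 2), ENNReal.ofReal (‖z‖ ^ (s - finrank ℝ E)) ∂μ)
          * ENNReal.ofReal ((R / 2) ^ (-a)) := by
        rw [lintegral_mul_const _ (by fun_prop), ← hpre,
          hmp.setLIntegral_comp_preimage measurableSet_ball
            (f := fun z => ENNReal.ofReal (‖z‖ ^ (s - finrank ℝ E))) (by fun_prop)]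
    _ = ↑(C * Real.toNNReal ((1 / 2) ^ (s - a))) * bracketWeight (s - a) x := by
        rw [hC _ (by positivity), mul_assoc, ← ENNReal.ofReal_mul (by positivity), hscale,
          ENNReal.ofReal_mul (by positivity), ENNReal.coe_mul, mul_assoc]
        rfl

theorem exists_setLIntegral_ball_diff_ball_riesz_mul_bracketWeight_le [Nontrivial E] {s a : ℝ}
    (hs : s ≤ finrank ℝ E) (ha : 0 ≤ a) (had : a < finrank ℝ E) :
    ∃ C : ℝ≥0, ∀ x : E, ∫⁻ y in ball 0 (japaneseBracket x) \ ball x (japaneseBracket x / 2),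
        ENNReal.ofReal (‖x - y‖ ^ (s - finrank ℝ E)) * bracketWeight (-a) y ∂μ
      ≤ C * bracketWeight (s - a) x := by
  obtain ⟨C, hC⟩ := exists_setLIntegral_ball_norm_rpow_eq μ (p := -a) (by linarith)
  refine ⟨Real.toNNReal ((1 / 2) ^ (s - finrank ℝ E)) * C, fun x => ?_⟩
  set R := japaneseBracket x
  have hR_pos : 0 < R := japaneseBracket_pos x
  have hbound : ∀ y ≠ 0, y ∉ ball x (R / 2) →
      ENNReal.ofReal (‖x - y‖ ^ (s - finrank ℝ E)) * bracketWeight (-a) y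
        ≤ ENNReal.ofReal ((R / 2) ^ (s - finrank ℝ E)) * ENNReal.ofReal (‖y‖ ^ (-a)) := by
    intro y hy hyx
    have hxy : R / 2 ≤ ‖x - y‖ := by simpa [dist_eq_norm, norm_sub_rev] using hyx
    refine mul_le_mul' (ENNReal.ofReal_le_ofReal ?_) (ENNReal.ofReal_le_ofReal ?_)
    · exact rpow_le_rpow_of_nonpos (by positivity) hxy (by linarith)
    · exact rpow_le_rpow_of_nonpos (norm_pos_iff.2 hy) (norm_le_japaneseBracket y) (by linarith)
  have hscale : (R / 2) ^ (s - finrank ℝ E) * R ^ (finrank ℝ E + -a)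
      = (1 / 2) ^ (s - finrank ℝ E) * R ^ (s - a) := by
    rw [show s - a = (s - finrank ℝ E) + (finrank ℝ E + -a) by ring,
      rpow_add hR_pos (s - finrank ℝ E), ← mul_assoc, ← mul_rpow (by positivity) hR_pos.le,
      one_div_mul_eq_div]
  calc ∫⁻ y in ball 0 R \ ball x (R / 2),
        ENNReal.ofReal (‖x - y‖ ^ (s - finrank ℝ E)) * bracketWeight (-a) y ∂μ
      ≤ ∫⁻ y in ball 0 R \ ball x (R / 2),
          ENNReal.ofReal ((R / 2) ^ (s - finrank ℝ E)) * ENNReal.ofReal (‖y‖ ^ (-a)) ∂μ := by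
        refine setLIntegral_mono_ae' (measurableSet_ball.diff measurableSet_ball) ?_
        filter_upwards [Measure.ae_ne μ 0] with y hy hmem using hbound y hy hmem.2
    _ ≤ ∫⁻ y in ball 0 R,
          ENNReal.ofReal ((R / 2) ^ (s - finrank ℝ E)) * ENNReal.ofReal (‖y‖ ^ (-a)) ∂μ :=
        lintegral_mono_set Set.sdiff_subset
    _ = ↑(Real.toNNReal ((1 / 2) ^ (s - finrank ℝ E)) * C) * bracketWeight (s - a) x := by
        rw [lintegral_const_mul _ (by fun_prop), hC _ hR_pos, mul_left_comm,
          ← ENNReal.ofReal_mul (by positivity), hscale, ENNReal.ofReal_mul (by positivity),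
          ENNReal.coe_mul, mul_left_comm, mul_assoc]
        rfl

theorem exists_setLIntegral_compl_ball_diff_ball_riesz_mul_bracketWeight_le {s a : ℝ}
    (hs : s ≤ finrank ℝ E) (ha : 0 ≤ a) (hsa : s < a) :
    ∃ C : ℝ≥0, ∀ x : E, ∫⁻ y in (ball 0 (japaneseBracket x))ᶜ \ ball x (japaneseBracket x / 2),
        ENNReal.ofReal (‖x - y‖ ^ (s - finrank ℝ E)) * bracketWeight (-a) y ∂μ
      ≤ C * bracketWeight (s - a) x := by
  obtain ⟨C, hC⟩ :=
    exists_setLIntegral_compl_ball_norm_rpow_eq μ (p := s - finrank ℝ E - a) (by linarith)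
  refine ⟨Real.toNNReal ((1 / 3) ^ (s - finrank ℝ E)) * C, fun x => ?_⟩
  set R := japaneseBracket x
  have hR_pos : 0 < R := japaneseBracket_pos x
  have hbound : ∀ y ∈ (ball 0 R)ᶜ \ ball x (R / 2),
      ENNReal.ofReal (‖x - y‖ ^ (s - finrank ℝ E)) * bracketWeight (-a) y
        ≤ ENNReal.ofReal ((1 / 3) ^ (s - finrank ℝ E))
          * ENNReal.ofReal (‖y‖ ^ (s - finrank ℝ E - a)) := by
    rintro y ⟨hy, hyx⟩
    have hRy : R ≤ ‖y‖ := by simpa using hy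
    have hxy : R / 2 ≤ ‖x - y‖ := by simpa [dist_eq_norm, norm_sub_rev] using hyx
    have hyxy : ‖y‖ ≤ ‖x‖ + ‖x - y‖ := norm_sub_rev x y ▸ norm_le_norm_add_norm_sub' y x
    have hxR : ‖x‖ ≤ R := norm_le_japaneseBracket x
    have hy_pos : 0 < ‖y‖ := hR_pos.trans_le hRy
    have hbracket_pos := japaneseBracket_pos y
    have hkernel : ‖x - y‖ ^ (s - finrank ℝ E) ≤ (1 / 3 * ‖y‖) ^ (s - finrank ℝ E) :=
      rpow_le_rpow_of_nonpos (by positivity) (by linarith) (by linarith)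
    have hweight : japaneseBracket y ^ (-a) ≤ ‖y‖ ^ (-a) :=
      rpow_le_rpow_of_nonpos hy_pos (norm_le_japaneseBracket y) (by linarith)
    rw [bracketWeight, ← ENNReal.ofReal_mul (by positivity), ← ENNReal.ofReal_mul (by positivity),
      sub_eq_add_neg _ a, rpow_add hy_pos, ← mul_assoc, ← mul_rpow (by positivity) hy_pos.le]
    gcongr
  calc ∫⁻ y in (ball 0 R)ᶜ \ ball x (R / 2),
        ENNReal.ofReal (‖x - y‖ ^ (s - finrank ℝ E)) * bracketWeight (-a) y ∂μ
      ≤ ∫⁻ y in (ball 0 R)ᶜ, ENNReal.ofReal ((1 / 3) ^ (s - finrank ℝ E))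
          * ENNReal.ofReal (‖y‖ ^ (s - finrank ℝ E - a)) ∂μ :=
        (setLIntegral_mono' (measurableSet_ball.compl.diff measurableSet_ball) hbound).trans
          (lintegral_mono_set Set.sdiff_subset)
    _ = ↑(Real.toNNReal ((1 / 3) ^ (s - finrank ℝ E)) * C) * bracketWeight (s - a) x := by
        rw [lintegral_const_mul _ (by fun_prop), hC _ hR_pos,
          show finrank ℝ E + (s - finrank ℝ E - a) = s - a by ring, ENNReal.coe_mul, mul_assoc]
        rfl

theorem exists_rieszPotential_bracketWeight_le {s a : ℝ} (hs : 0 < s) (hsa : s < a)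
    (had : a < finrank ℝ E) :
    ∃ C : ℝ≥0, ∀ x : E,
      rieszPotential μ s (bracketWeight (-a)) x ≤ C * bracketWeight (s - a) x := by
  have : Nontrivial E :=
    Module.nontrivial_of_finrank_pos (R := ℝ) (by exact_mod_cast hs.trans (hsa.trans had))
  have hsd := (hsa.trans had).le
  have ha := (hs.trans hsa).le
  obtain ⟨C₁, hC₁⟩ := exists_setLIntegral_ball_riesz_mul_bracketWeight_le μ hs ha
  obtain ⟨C₂, hC₂⟩ := exists_setLIntegral_ball_diff_ball_riesz_mul_bracketWeight_le μ hsd ha had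
  obtain ⟨C₃, hC₃⟩ :=
    exists_setLIntegral_compl_ball_diff_ball_riesz_mul_bracketWeight_le μ hsd ha hsa
  refine ⟨C₁ + (C₂ + C₃), fun x => ?_⟩
  set R := japaneseBracket x
  set S := ball x (R / 2)
  set T := ball (0 : E) R
  have hcover : S ∪ (T \ S ∪ Tᶜ \ S) = Set.univ := by
    rw [← Set.union_sdiff_distrib, Set.union_compl_self, Set.union_sdiff_self, Set.union_univ]
  calc rieszPotential μ s (bracketWeight (-a)) x
      = ∫⁻ y in S ∪ (T \ S ∪ Tᶜ \ S),
          ENNReal.ofReal (‖x - y‖ ^ (s - finrank ℝ E)) * bracketWeight (-a) y ∂μ := by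
        rw [hcover, Measure.restrict_univ, rieszPotential]
    _ ≤ C₁ * bracketWeight (s - a) x
          + (C₂ * bracketWeight (s - a) x + C₃ * bracketWeight (s - a) x) := by
        refine (lintegral_union_le _ _ _).trans (add_le_add (hC₁ x) ?_)
        exact (lintegral_union_le _ _ _).trans (add_le_add (hC₂ x) (hC₃ x))
    _ = ↑(C₁ + (C₂ + C₃)) * bracketWeight (s - a) x := by
        push_cast
        ring

/-! The Stein–Weiss inequality follows from Schur's test with the weight `⟨y⟩ ^ (-a)`, where
`a = d/2 + s + α`: applying the kernel twice and using the weight `⟨x⟩ ^ (2α)` in between turns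
`⟨y⟩ ^ (-a)` into `⟨y⟩ ^ (s - b)`, where `b = d/2 - α`. -/

theorem exists_lintegral_bracketWeight_mul_sq_rieszPotential_le {s α : ℝ} (hs : 0 < s)
    (hα : -(finrank ℝ E / 2 : ℝ) < α) (hαs : α < finrank ℝ E / 2 - s) :
    ∃ C : ℝ≥0, ∀ F : E → ℝ≥0∞, AEMeasurable F μ →
      ∫⁻ x, bracketWeight (2 * α) x * rieszPotential μ s F x ^ 2 ∂μ
        ≤ C * ∫⁻ y, bracketWeight (2 * (α + s)) y * F y ^ 2 ∂μ := by
  set a : ℝ := finrank ℝ E / 2 + s + α with ha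
  set b : ℝ := finrank ℝ E / 2 - α with hb
  obtain ⟨A, hA⟩ := exists_rieszPotential_bracketWeight_le μ (a := a) hs (by linarith) (by linarith)
  obtain ⟨B, hB⟩ := exists_rieszPotential_bracketWeight_le μ (a := b) hs (by linarith) (by linarith)
  refine ⟨A * B, fun F hF => ?_⟩
  have hcol (y : E) : ∫⁻ x, ENNReal.ofReal (‖x - y‖ ^ (s - finrank ℝ E))
      * (bracketWeight (2 * α) x * (A * bracketWeight (s - a) x)) ∂μ
        ≤ A * (B * bracketWeight (s - b) y) := by
    calc ∫⁻ x, ENNReal.ofReal (‖x - y‖ ^ (s - finrank ℝ E))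
          * (bracketWeight (2 * α) x * (A * bracketWeight (s - a) x)) ∂μ
        = ∫⁻ x, A * (ENNReal.ofReal (‖y - x‖ ^ (s - finrank ℝ E)) * bracketWeight (-b) x) ∂μ := by
          refine lintegral_congr fun x => ?_
          rw [norm_sub_rev x y, show -b = 2 * α + (s - a) by rw [ha, hb]; ring, bracketWeight_add]
          ring
      _ = A * rieszPotential μ s (bracketWeight (-b)) y :=
          lintegral_const_mul _ (by fun_prop)
      _ ≤ A * (B * bracketWeight (s - b) y) := by gcongr; exact hB y
  have hschur := lintegral_mul_sq_lintegral_le_of_schur (μ := μ) (ν := μ)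
    (k := fun x y => ENNReal.ofReal (‖x - y‖ ^ (s - finrank ℝ E)))
    (by fun_prop) (measurable_bracketWeight (2 * α)) (by fun_prop)
    (measurable_bracketWeight (-a)) hF (bracketWeight_ne_zero _) (bracketWeight_ne_top _)
    (.of_forall hA) (.of_forall hcol)
  refine hschur.trans_eq ?_
  rw [← lintegral_const_mul'' _ (by fun_prop)]
  refine lintegral_congr fun y => ?_
  rw [inv_bracketWeight, neg_neg, show 2 * (α + s) = s - b + a by rw [ha, hb]; ring,
    bracketWeight_add (s - b) a, ENNReal.coe_mul]
  ring

end RieszPotential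

section Subordination

variable {E G : Type*} [NormedAddCommGroup E] [NormedAddCommGroup G] [NormedSpace ℝ G]

/-- The symbol `exp (-t |ξ|²)` of the heat semigroup `exp (t Δ)`. -/
def heatSymbol (t : ℝ) (ξ : E) : ℝ :=
  Real.exp (-(t * ‖ξ‖ ^ 2))

theorem heatSymbol_pos (t : ℝ) (ξ : E) : 0 < heatSymbol t ξ :=
  Real.exp_pos _

theorem integrableOn_rpow_mul_heatSymbol {s : ℝ} (hs : 0 < s) {ξ : E} (hξ : ξ ≠ 0) :
    IntegrableOn (fun t : ℝ => t ^ (s / 2 - 1) * heatSymbol t ξ) (Set.Ioi 0) := by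
  have : 0 < ‖ξ‖ := norm_pos_iff.2 hξ
  simpa [heatSymbol, mul_comm] using integrableOn_rpow_mul_exp_neg_mul_rpow (s := s / 2 - 1)
    (p := 1) (b := ‖ξ‖ ^ 2) (by linarith) one_pos (by positivity)

theorem integral_rpow_mul_heatSymbol {s : ℝ} (hs : 0 < s) {ξ : E} (hξ : ξ ≠ 0) :
    ∫ t in Set.Ioi (0 : ℝ), t ^ (s / 2 - 1) * heatSymbol t ξ
      = Real.Gamma (s / 2) * ‖ξ‖ ^ (-s) := by
  have hξ_pos : 0 < ‖ξ‖ := norm_pos_iff.2 hξ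
  simp_rw [heatSymbol, mul_comm _ (‖ξ‖ ^ 2)]
  rw [Real.integral_rpow_mul_exp_neg_mul_Ioi (half_pos hs) (by positivity), one_div,
    inv_rpow (by positivity), ← rpow_natCast, ← rpow_mul hξ_pos.le, rpow_neg hξ_pos.le, mul_comm,
    Nat.cast_ofNat, mul_div_cancel₀ s two_ne_zero]

variable [MeasurableSpace E] [OpensMeasurableSpace E] {μ : Measure E} [NullSingletonClass μ]

theorem integrable_rpow_mul_heatSymbol_smul {s : ℝ} (hs : 0 < s) {g : E → G}
    (hg : AEStronglyMeasurable g μ) (hsg : Integrable (fun ξ => ‖ξ‖ ^ (-s) * ‖g ξ‖) μ) :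
    Integrable (Function.uncurry fun (ξ : E) (t : ℝ) => (t ^ (s / 2 - 1) * heatSymbol t ξ) • g ξ)
      (μ.prod (volume.restrict (Set.Ioi 0))) := by
  have hkernel : Measurable fun p : E × ℝ => p.2 ^ (s / 2 - 1) * heatSymbol p.2 p.1 := by
    unfold heatSymbol
    fun_prop
  have hmeas : AEStronglyMeasurable
      (Function.uncurry fun (ξ : E) (t : ℝ) => (t ^ (s / 2 - 1) * heatSymbol t ξ) • g ξ)
      (μ.prod (volume.restrict (Set.Ioi 0))) :=
    hkernel.aestronglyMeasurable.smul hg.comp_fst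
  refine (integrable_prod_iff hmeas).2 ⟨?_, ?_⟩
  · filter_upwards [Measure.ae_ne μ 0] with ξ hξ
    exact (integrableOn_rpow_mul_heatSymbol hs hξ).smul_const (g ξ)
  · refine (hsg.const_mul (Real.Gamma (s / 2))).congr ?_
    filter_upwards [Measure.ae_ne μ 0] with ξ hξ
    have hnorm : ∀ t ∈ Set.Ioi (0 : ℝ), ‖(t ^ (s / 2 - 1) * heatSymbol t ξ) • g ξ‖
        = t ^ (s / 2 - 1) * heatSymbol t ξ * ‖g ξ‖ := by
      intro t (ht : 0 < t)
      have := heatSymbol_pos t ξ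
      rw [norm_smul, Real.norm_of_nonneg (by positivity)]
    simp only [Function.uncurry_apply_pair]
    rw [setIntegral_congr_fun measurableSet_Ioi hnorm, integral_mul_const,
      integral_rpow_mul_heatSymbol hs hξ, mul_assoc]

theorem integral_norm_rpow_neg_smul_eq [SFinite μ] [CompleteSpace G] {s : ℝ} (hs : 0 < s)
    {g : E → G} (hg : AEStronglyMeasurable g μ)
    (hsg : Integrable (fun ξ => ‖ξ‖ ^ (-s) * ‖g ξ‖) μ) :
    ∫ ξ, ‖ξ‖ ^ (-s) • g ξ ∂μ = (Real.Gamma (s / 2))⁻¹ •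
      ∫ t in Set.Ioi (0 : ℝ), t ^ (s / 2 - 1) • ∫ ξ, heatSymbol t ξ • g ξ ∂μ := by
  have hΓ := (Real.Gamma_pos_of_pos (half_pos hs)).ne'
  have hpow : ∀ᵐ ξ ∂μ, ‖ξ‖ ^ (-s) • g ξ = (Real.Gamma (s / 2))⁻¹ •
      ∫ t in Set.Ioi (0 : ℝ), (t ^ (s / 2 - 1) * heatSymbol t ξ) • g ξ := by
    filter_upwards [Measure.ae_ne μ 0] with ξ hξ
    rw [integral_smul_const, integral_rpow_mul_heatSymbol hs hξ, smul_smul, ← mul_assoc,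
      inv_mul_cancel₀ hΓ, one_mul]
  rw [integral_congr_ae hpow, integral_smul,
    integral_integral_swap (integrable_rpow_mul_heatSymbol_smul hs hg hsg)]
  simp_rw [mul_smul, integral_smul]

end Subordination

section NegativePower

variable {E G : Type*} [NormedAddCommGroup E] [NormedSpace ℝ E] [FiniteDimensional ℝ E]
  [MeasurableSpace E] [BorelSpace E] {μ : Measure E} [μ.IsAddHaarMeasure] [NormedAddCommGroup G]

theorem integrable_norm_rpow_neg_mul_norm {s M : ℝ} (hs : 0 ≤ s) (hsd : s < finrank ℝ E)
    {g : E → G} (hg : Integrable g μ) (hgM : ∀ ξ, ‖g ξ‖ ≤ M) :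
    Integrable (fun ξ => ‖ξ‖ ^ (-s) * ‖g ξ‖) μ := by
  have : Nontrivial E :=
    Module.nontrivial_of_finrank_pos (R := ℝ) (by exact_mod_cast hs.trans_lt hsd)
  have hmeas : AEStronglyMeasurable (fun ξ => ‖ξ‖ ^ (-s) * ‖g ξ‖) μ :=
    (Measurable.aestronglyMeasurable (by fun_prop)).mul hg.1.norm
  rw [← integrableOn_univ, ← Set.union_compl_self (ball (0 : E) 1)]
  refine IntegrableOn.union ?_ ?_
  · refine integrableOn_ball_of_norm_le_rpow (α := s) (C := M) finrank_pos hsd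
      (.of_forall fun ξ => ?_) hmeas
    rw [Real.norm_of_nonneg (by positivity), mul_comm]
    gcongr
    exact hgM ξ
  · refine hg.norm.integrableOn.mono' hmeas.restrict ?_
    filter_upwards [ae_restrict_mem measurableSet_ball.compl] with ξ hξ
    have hξ : 1 ≤ ‖ξ‖ := by simpa using hξ
    rw [Real.norm_of_nonneg (by positivity)]
    exact mul_le_of_le_one_left (norm_nonneg _) (rpow_le_one_of_one_le_of_nonpos hξ (by linarith))

end NegativePower

section Multiplier

open scoped FourierTransform

variable {n : ℕ}

local notation "𝕍" => EuclideanSpace ℝ (Fin n)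

theorem norm_FT_le (f : 𝕍 → ℂ) (ξ : 𝕍) :
    ‖FT n f ξ‖ ≤ (2 * π) ^ (-(n : ℝ) / 2) * ∫ x, ‖f x‖ := by
  rw [FT, norm_smul, Real.norm_of_nonneg (by positivity)]
  gcongr
  refine (norm_integral_le_integral_norm _).trans_eq (integral_congr_ae (.of_forall fun x => ?_))
  simp [Complex.norm_exp]

theorem FT_eq_smul_fourierIntegral (f : 𝕍 → ℂ) (ξ : 𝕍) :
    FT n f ξ = ((2 * π) ^ (-(n : ℝ) / 2) : ℝ) •
      VectorFourier.fourierIntegral probChar volume (innerₗ 𝕍) f ξ := by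
  rw [FT, VectorFourier.fourierIntegral_probChar]
  simp [mul_comm Complex.I]

theorem integral_FT_mul_eq {f g : 𝕍 → ℂ} (hf : Integrable f) (hg : Integrable g) :
    ∫ ξ, FT n f ξ * g ξ = ∫ x, f x * FT n g x := by
  have h := VectorFourier.integral_fourierIntegral_smul_eq_flip (L := innerₗ 𝕍)
    Real.continuous_probChar continuous_inner hf hg
  simp_rw [FT_eq_smul_fourierIntegral, smul_mul_assoc, mul_smul_comm, integral_smul]
  congr 1
  simpa using h

theorem FT_cexp_mul (q : 𝕍 → ℂ) (x y : 𝕍) :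
    FT n (fun ξ => cexp (Complex.I * ((⟪x, ξ⟫ : ℝ) : ℂ)) * q ξ) y = IFT n q (x - y) := by
  rw [FT, IFT]
  congr 2
  funext ξ
  rw [← mul_assoc, ← Complex.exp_add, inner_sub_left, real_inner_comm ξ y]
  congr 2
  push_cast
  ring

theorem mult_eq_integral_IFT_mul {q f : 𝕍 → ℂ} (hq : Integrable q) (hf : Integrable f) (x : 𝕍) :
    mult n q f x = ((2 * π) ^ (-(n : ℝ) / 2) : ℝ) • ∫ y, IFT n q (x - y) * f y := by
  have hphase : Integrable fun ξ => cexp (Complex.I * ((⟪x, ξ⟫ : ℝ) : ℂ)) * q ξ :=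
    hq.bdd_mul (c := 1) (by fun_prop) (.of_forall fun ξ => by simp [Complex.norm_exp])
  calc mult n q f x
      = ((2 * π) ^ (-(n : ℝ) / 2) : ℝ) •
          ∫ ξ, FT n f ξ * (cexp (Complex.I * ((⟪x, ξ⟫ : ℝ) : ℂ)) * q ξ) := by
        rw [mult, IFT]
        congr 2
        funext ξ
        ring
    _ = ((2 * π) ^ (-(n : ℝ) / 2) : ℝ) • ∫ y, IFT n q (x - y) * f y := by
        rw [integral_FT_mul_eq hf hphase]
        simp_rw [FT_cexp_mul, mul_comm (f _)]

theorem mult_ofReal (q : 𝕍 → ℝ) (f : 𝕍 → ℂ) (x : 𝕍) :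
    mult n (fun ξ => (q ξ : ℂ)) f x = ((2 * π) ^ (-(n : ℝ) / 2) : ℝ) •
      ∫ ξ, q ξ • (cexp (Complex.I * ((⟪x, ξ⟫ : ℝ) : ℂ)) * FT n f ξ) := by
  rw [mult, IFT]
  simp_rw [Complex.real_smul, mul_left_comm]

/-- The Gauss–Weierstrass kernel of the heat semigroup `exp (t Δ)` on `ℝⁿ`, for `t > 0`. -/
def heatKernel (t : ℝ) (x : 𝕍) : ℝ :=
  (4 * π * t) ^ (-(n : ℝ) / 2) * Real.exp (-(‖x‖ ^ 2 / 4 / t))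

theorem heatKernel_pos {t : ℝ} (ht : 0 < t) (x : 𝕍) : 0 < heatKernel t x := by
  unfold heatKernel
  positivity

theorem measurable_uncurry_heatKernel :
    Measurable (Function.uncurry (heatKernel : ℝ → 𝕍 → ℝ)) := by
  simp only [Function.uncurry_def, heatKernel]
  fun_prop

theorem integrable_heatSymbol {t : ℝ} (ht : 0 < t) :
    Integrable fun ξ : 𝕍 => (heatSymbol t ξ : ℂ) := by
  simpa [heatSymbol] using GaussianFourier.integrable_cexp_neg_mul_sq_norm_add (b := t) (V := 𝕍)
    (by simpa using ht) 0 0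

theorem IFT_heatSymbol {t : ℝ} (ht : 0 < t) (x : 𝕍) :
    IFT n (fun ξ => (heatSymbol t ξ : ℂ)) x
      = ((2 * π) ^ ((n : ℝ) / 2) * heatKernel t x : ℝ) := by
  have hgauss := GaussianFourier.integral_cexp_neg_mul_sq_norm_add (b := t)
    (by simpa using ht) Complex.I x
  have hconst : (2 * π) ^ (-(n : ℝ) / 2) * (π / t) ^ ((n : ℝ) / 2)
      = (2 * π) ^ ((n : ℝ) / 2) * (4 * π * t) ^ (-(n : ℝ) / 2) := by
    rw [neg_div, rpow_neg (by positivity), rpow_neg (by positivity), ← inv_rpow (by positivity),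
      ← inv_rpow (by positivity), ← mul_rpow (by positivity) (by positivity),
      ← mul_rpow (by positivity) (by positivity)]
    congr 1
    field_simp
    norm_num
  calc IFT n (fun ξ => (heatSymbol t ξ : ℂ)) x
      = ((2 * π) ^ (-(n : ℝ) / 2) : ℝ) •
          ∫ ξ : 𝕍, cexp (-t * ‖ξ‖ ^ 2 + Complex.I * ((⟪x, ξ⟫ : ℝ) : ℂ)) := by
        rw [IFT]
        congr 2
        funext ξ
        rw [heatSymbol, Complex.ofReal_exp, ← Complex.exp_add, add_comm]
        push_cast
        ring_nf
    _ = ((2 * π) ^ (-(n : ℝ) / 2) : ℝ) •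
          (((π / t) ^ ((n : ℝ) / 2) * Real.exp (-(‖x‖ ^ 2 / 4 / t)) : ℝ) : ℂ) := by
        rw [hgauss, finrank_euclideanSpace_fin, Complex.ofReal_mul,
          Complex.ofReal_cpow (by positivity), Complex.ofReal_exp, Complex.I_sq]
        push_cast
        ring_nf
    _ = ((2 * π) ^ ((n : ℝ) / 2) * heatKernel t x : ℝ) := by
        rw [Complex.real_smul, ← Complex.ofReal_mul, ← mul_assoc, hconst, mul_assoc, heatKernel]

theorem mult_heatSymbol {t : ℝ} (ht : 0 < t) {f : 𝕍 → ℂ} (hf : Integrable f) (x : 𝕍) :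
    mult n (fun ξ => (heatSymbol t ξ : ℂ)) f x = ∫ y, heatKernel t (x - y) • f y := by
  have hconst : (2 * π) ^ (-(n : ℝ) / 2) * (2 * π) ^ ((n : ℝ) / 2) = 1 := by
    rw [← rpow_add (by positivity), neg_div, neg_add_cancel, rpow_zero]
  rw [mult_eq_integral_IFT_mul (integrable_heatSymbol ht) hf]
  simp_rw [IFT_heatSymbol ht, ← Complex.real_smul, mul_smul, integral_smul]
  rw [smul_smul, hconst, one_smul]

theorem mult_norm_rpow_neg_eq {s : ℝ} (hs : 0 < s) (hsn : s < n) {f : 𝕍 → ℂ} (hf : Integrable f)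
    (hFf : Integrable (FT n f)) (x : 𝕍) :
    mult n (fun ξ => ((‖ξ‖ ^ (-s) : ℝ) : ℂ)) f x = (Real.Gamma (s / 2))⁻¹ •
      ∫ t in Set.Ioi (0 : ℝ), t ^ (s / 2 - 1) • ∫ y, heatKernel t (x - y) • f y := by
  have : Nonempty (Fin n) := Fin.pos_iff_nonempty.1 (by exact_mod_cast hs.trans hsn)
  have hphase : AEStronglyMeasurable
      (fun ξ => cexp (Complex.I * ((⟪x, ξ⟫ : ℝ) : ℂ)) * FT n f ξ) volume :=
    (Continuous.aestronglyMeasurable (by fun_prop)).mul hFf.1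
  have hint : Integrable fun ξ : 𝕍 =>
      ‖ξ‖ ^ (-s) * ‖cexp (Complex.I * ((⟪x, ξ⟫ : ℝ) : ℂ)) * FT n f ξ‖ := by
    simpa [Complex.norm_exp] using
      integrable_norm_rpow_neg_mul_norm hs.le (by simpa using hsn) hFf (norm_FT_le f)
  rw [mult_ofReal, integral_norm_rpow_neg_smul_eq hs hphase hint, smul_comm, ← integral_smul]
  congr 1
  refine setIntegral_congr_fun measurableSet_Ioi fun t (ht : 0 < t) => ?_
  simp only [smul_comm _ (t ^ (s / 2 - 1)), ← mult_ofReal, mult_heatSymbol ht hf]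

theorem lintegral_rpow_mul_exp_neg_div_Ioi {α b : ℝ} (hα : 0 < α) (hb : 0 < b) :
    ∫⁻ t in Set.Ioi (0 : ℝ), ENNReal.ofReal (t ^ (-α - 1) * Real.exp (-(b / t)))
      = ENNReal.ofReal ((1 / b) ^ α * Real.Gamma α) := by
  let g : ℝ → ℝ := fun u => u ^ (α - 1) * Real.exp (-(b * u))
  have hg : IntegrableOn g (Set.Ioi 0) := by
    simpa [g] using integrableOn_rpow_mul_exp_neg_mul_rpow (s := α - 1) (p := 1) (b := b)
      (by linarith) one_pos hb
  have hcongr : Set.EqOn (fun t : ℝ => (|(-1 : ℝ)| * t ^ ((-1 : ℝ) - 1)) • g (t ^ (-1 : ℝ)))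
      (fun t : ℝ => t ^ (-α - 1) * Real.exp (-(b / t))) (Set.Ioi 0) := by
    intro t (ht : 0 < t)
    simp only [g, abs_neg, abs_one, one_mul, smul_eq_mul]
    rw [← rpow_mul ht.le, ← mul_assoc, ← rpow_add ht, rpow_neg_one, div_eq_mul_inv]
    ring_nf
  have hint : IntegrableOn (fun t : ℝ => t ^ (-α - 1) * Real.exp (-(b / t))) (Set.Ioi 0) :=
    ((integrableOn_Ioi_comp_rpow_iff g (by norm_num)).2 hg).congr_fun hcongr measurableSet_Ioi
  have hpos : ∀ᵐ t ∂volume.restrict (Set.Ioi (0 : ℝ)),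
      0 ≤ t ^ (-α - 1) * Real.exp (-(b / t)) := by
    filter_upwards [ae_restrict_mem measurableSet_Ioi] with t (ht : 0 < t)
    positivity
  rw [← ofReal_integral_eq_lintegral_ofReal hint hpos, ← setIntegral_congr_fun measurableSet_Ioi
    hcongr, integral_comp_rpow_Ioi g (by norm_num), Real.integral_rpow_mul_exp_neg_mul_Ioi hα hb]

theorem exists_lintegral_rpow_mul_heatKernel_eq {s : ℝ} (hsn : s < n) :
    ∃ C : ℝ≥0, ∀ z : 𝕍, z ≠ 0 →
      ∫⁻ t in Set.Ioi (0 : ℝ), ENNReal.ofReal (t ^ (s / 2 - 1) * heatKernel t z)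
        = C * ENNReal.ofReal (‖z‖ ^ (s - n)) := by
  set α : ℝ := (n - s) / 2 with hα
  have hα_pos : 0 < α := by linarith
  refine ⟨Real.toNNReal ((4 * π) ^ (-(n : ℝ) / 2) * (4 ^ α * Real.Gamma α)), fun z hz => ?_⟩
  have hz_pos : 0 < ‖z‖ := norm_pos_iff.2 hz
  have hheat : ∀ t ∈ Set.Ioi (0 : ℝ), ENNReal.ofReal (t ^ (s / 2 - 1) * heatKernel t z)
      = ENNReal.ofReal ((4 * π) ^ (-(n : ℝ) / 2))
        * ENNReal.ofReal (t ^ (-α - 1) * Real.exp (-(‖z‖ ^ 2 / 4 / t))) := by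
    intro t (ht : 0 < t)
    rw [← ENNReal.ofReal_mul (by positivity), heatKernel, mul_rpow (by positivity) ht.le,
      show -α - 1 = (s / 2 - 1) + -(n : ℝ) / 2 by rw [hα]; ring, rpow_add ht (s / 2 - 1)]
    congr 1
    ring
  have hpow : (1 / (‖z‖ ^ 2 / 4)) ^ α = 4 ^ α * ‖z‖ ^ (s - n) := by
    rw [one_div_div, div_rpow (by positivity) (by positivity), ← rpow_natCast,
      ← rpow_mul hz_pos.le, show s - n = -((2 : ℕ) * α) by rw [hα]; push_cast; ring,
      rpow_neg hz_pos.le, div_eq_mul_inv]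
  rw [setLIntegral_congr_fun measurableSet_Ioi hheat, lintegral_const_mul _ (by fun_prop),
    lintegral_rpow_mul_exp_neg_div_Ioi hα_pos (by positivity), hpow,
    ← ENNReal.ofReal_mul (by positivity), mul_right_comm, ← mul_assoc,
    ENNReal.ofReal_mul (by positivity)]
  rfl

theorem exists_enorm_mult_norm_rpow_neg_le_rieszPotential {s : ℝ} (hs : 0 < s) (hsn : s < n) :
    ∃ C : ℝ≥0, ∀ f : 𝕍 → ℂ, Integrable f → Integrable (FT n f) → ∀ x,
      ‖mult n (fun ξ => ((‖ξ‖ ^ (-s) : ℝ) : ℂ)) f x‖ₑ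
        ≤ C * rieszPotential volume s (fun y => ‖f y‖ₑ) x := by
  have : Nonempty (Fin n) := Fin.pos_iff_nonempty.1 (by exact_mod_cast hs.trans hsn)
  obtain ⟨K, hK⟩ := exists_lintegral_rpow_mul_heatKernel_eq hsn
  refine ⟨‖(Real.Gamma (s / 2))⁻¹‖₊ * K, fun f hf hFf x => ?_⟩
  have hheat : Measurable fun p : ℝ × 𝕍 =>
      ENNReal.ofReal (p.1 ^ (s / 2 - 1) * heatKernel p.1 (x - p.2)) := by
    have := measurable_uncurry_heatKernel (n := n)
    fun_prop
  have hslice : ∀ t ∈ Set.Ioi (0 : ℝ), ‖t ^ (s / 2 - 1) • ∫ y, heatKernel t (x - y) • f y‖ₑ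
      ≤ ∫⁻ y, ENNReal.ofReal (t ^ (s / 2 - 1) * heatKernel t (x - y)) * ‖f y‖ₑ := by
    intro t (ht : 0 < t)
    rw [← integral_smul]
    refine (enorm_integral_le_lintegral_enorm _).trans_eq (lintegral_congr fun y => ?_)
    have := heatKernel_pos ht (x - y)
    rw [smul_smul, enorm_smul, Real.enorm_of_nonneg (by positivity)]
  rw [mult_norm_rpow_neg_eq hs hsn hf hFf, enorm_smul, ENNReal.coe_mul, mul_assoc]
  gcongr ?_ * ?_
  · rfl
  calc ‖∫ t in Set.Ioi (0 : ℝ), t ^ (s / 2 - 1) • ∫ y, heatKernel t (x - y) • f y‖ₑ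
      ≤ ∫⁻ t in Set.Ioi (0 : ℝ),
          ∫⁻ y, ENNReal.ofReal (t ^ (s / 2 - 1) * heatKernel t (x - y)) * ‖f y‖ₑ :=
        (enorm_integral_le_lintegral_enorm _).trans (setLIntegral_mono' measurableSet_Ioi hslice)
    _ = ∫⁻ y, ∫⁻ t in Set.Ioi (0 : ℝ),
          ENNReal.ofReal (t ^ (s / 2 - 1) * heatKernel t (x - y)) * ‖f y‖ₑ :=
        lintegral_lintegral_swap (hheat.aemeasurable.mul hf.1.enorm.comp_snd)
    _ = ∫⁻ y, K * (ENNReal.ofReal (‖x - y‖ ^ (s - n)) * ‖f y‖ₑ) := by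
        refine lintegral_congr_ae ?_
        filter_upwards [Measure.ae_ne volume x] with y hy
        rw [lintegral_mul_const' _ _ enorm_ne_top, hK _ (sub_ne_zero.2 hy.symm), mul_assoc]
    _ = K * rieszPotential volume s (fun y => ‖f y‖ₑ) x := by
        rw [lintegral_const_mul' _ _ ENNReal.coe_ne_top, rieszPotential, finrank_euclideanSpace_fin]

theorem integrable_FT_schwartz (f : SchwartzMap 𝕍 ℂ) : Integrable (FT n f) := by
  have hFT (ξ : 𝕍) :
      FT n f ξ = ((2 * π) ^ (-(n : ℝ) / 2) : ℝ) • (𝓕 f) ((2 * π)⁻¹ • ξ) := by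
    have : (π : ℂ) ≠ 0 := by exact_mod_cast pi_ne_zero
    rw [FT, SchwartzMap.fourier_coe, Real.fourier_eq']
    congr 2
    funext y
    rw [smul_eq_mul, real_inner_smul_right]
    congr 2
    push_cast
    field_simp
  rw [funext hFT]
  exact ((𝓕 f).integrable.comp_smul (inv_ne_zero two_pi_pos.ne')).fun_smul _

theorem weighted_negative_order_bound_general {s α : ℝ} (hs : 0 < s) (hα : -(n / 2 : ℝ) < α)
    (hαs : α < n / 2 - s) :
    ∃ C > 0, ∀ f : 𝕍 → ℂ, Integrable f → Integrable (FT n f) →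
      eLpNorm (fun x => ((japaneseBracket x ^ α : ℝ) : ℂ) *
          mult n (fun ξ => ((‖ξ‖ ^ (-s) : ℝ) : ℂ)) f x) 2 volume
        ≤ ENNReal.ofReal C *
          eLpNorm (fun x => ((japaneseBracket x ^ (α + s) : ℝ) : ℂ) * f x) 2 volume := by
  obtain ⟨A, hA⟩ := exists_enorm_mult_norm_rpow_neg_le_rieszPotential (n := n) hs (by linarith)
  obtain ⟨B, hB⟩ := exists_lintegral_bracketWeight_mul_sq_rieszPotential_le (s := s) (α := α)
    (volume : Measure 𝕍) hs (by simpa using hα) (by simpa using hαs)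
  refine ⟨A * √B + 1, by positivity, fun f hf hFf => ?_⟩
  have hconst : (A : ℝ≥0∞) ^ 2 * B ≤ ENNReal.ofReal (A * √B + 1) ^ 2 := by
    rw [← ENNReal.ofReal_coe_nnreal, ← ENNReal.ofReal_coe_nnreal (p := B),
      ← ENNReal.ofReal_pow A.coe_nonneg, ← ENNReal.ofReal_mul (by positivity),
      ← ENNReal.ofReal_pow (by positivity)]
    refine ENNReal.ofReal_le_ofReal ?_
    calc (A : ℝ) ^ 2 * B = (A * √B) ^ 2 := by rw [mul_pow, Real.sq_sqrt B.coe_nonneg]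
      _ ≤ (A * √B + 1) ^ 2 := by gcongr; linarith
  rw [← ENNReal.pow_le_pow_left_iff two_ne_zero, mul_pow,
    sq_eLpNorm_two_japaneseBracket_rpow_mul, sq_eLpNorm_two_japaneseBracket_rpow_mul]
  calc ∫⁻ x, bracketWeight (2 * α) x * ‖mult n (fun ξ => ((‖ξ‖ ^ (-s) : ℝ) : ℂ)) f x‖ₑ ^ 2
      ≤ ∫⁻ x, A ^ 2 * (bracketWeight (2 * α) x
          * rieszPotential volume s (fun y => ‖f y‖ₑ) x ^ 2) := by
        refine lintegral_mono fun x => ?_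
        rw [mul_left_comm, ← mul_pow]
        gcongr
        exact hA f hf hFf x
    _ = A ^ 2 * ∫⁻ x, bracketWeight (2 * α) x
          * rieszPotential volume s (fun y => ‖f y‖ₑ) x ^ 2 :=
        lintegral_const_mul' _ _ (by finiteness)
    _ ≤ A ^ 2 * (B * ∫⁻ y, bracketWeight (2 * (α + s)) y * ‖f y‖ₑ ^ 2) := by
        gcongr
        exact hB _ hf.1.enorm
    _ ≤ ENNReal.ofReal (A * √B + 1) ^ 2
          * ∫⁻ y, bracketWeight (2 * (α + s)) y * ‖f y‖ₑ ^ 2 := by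
        rw [← mul_assoc]
        gcongr

end Multiplier

theorem weighted_negative_order_bound (n : ℕ) (hn : 2 ≤ n) (m : ℝ) (hm1 : 1 < m)
    (hmn : m < n) (θ : ℝ) (hθ0 : 0 < θ) (hθ1 : θ < min (1 / 2) ((m - 1) / 2)) :
    ∃ C > 0, ∀ f : SchwartzMap (EuclideanSpace ℝ (Fin n)) ℂ,
      eLpNorm (fun x : EuclideanSpace ℝ (Fin n) =>
          ((Real.sqrt (1 + ‖x‖ ^ 2) ^ (1 / 2 + θ) : ℝ) : ℂ) *
            mult n (fun ξ => ((‖ξ‖ ^ (-(m - 1) / 2 + θ) : ℝ) : ℂ)) (fun y => f y) x) 2 volume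
        ≤ ENNReal.ofReal C *
            eLpNorm (fun x : EuclideanSpace ℝ (Fin n) => ((Real.sqrt (1 + ‖x‖ ^ 2) ^ (m / 2) : ℝ) : ℂ) * f x) 2 volume := by
  have hθ_half : θ < 1 / 2 := hθ1.trans_le (min_le_left _ _)
  have hθ_order : θ < (m - 1) / 2 := hθ1.trans_le (min_le_right _ _)
  obtain ⟨C, hC, hbound⟩ := weighted_negative_order_bound_general (n := n)
    (s := (m - 1) / 2 - θ) (α := 1 / 2 + θ) (by linarith) (by linarith) (by linarith)
  refine ⟨C, hC, fun f => ?_⟩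
  rw [show -(m - 1) / 2 + θ = -((m - 1) / 2 - θ) by ring,
    show m / 2 = 1 / 2 + θ + ((m - 1) / 2 - θ) by ring]
  exact hbound f f.integrable (integrable_FT_schwartz f)
end
end
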